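/- arXiv:0708.1620 — 3 statements merged into one kernel-verified Lean document; each statement's English description precedes it below -/
import Mathlib

section
/- Let K be a field of characteristic p > 0 and let Γ = {σ ∈ Aut_K(K[X, Y]) : J(σ) = 1}, where J denotes the Jacobian. Every σ ∈ Γ can be written as a product σ = t_ν ∘ φ_{f_1} ∘ s ∘ φ_{f_2} ∘ s ∘ ⋯ ∘ φ_{f_{n-1}} ∘ s ∘ φ_{f_n} for some n ≥ 1, ν ∈ K^*, and f_1, …, f_n ∈ K[X]. -/
/-!
STATEMENT 14: Let `K` be a field of characteristic `p > 0` and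
`Γ = {σ ∈ Aut_K(K[X, Y]) : J(σ) = 1}`.  Every `σ ∈ Γ` can be written as
`σ = t_ν ∘ φ_{f₁} ∘ s ∘ φ_{f₂} ∘ s ∘ ⋯ ∘ φ_{f_{n-1}} ∘ s ∘ φ_{f_n}`
for some `n ≥ 1`, `ν ∈ K^*`, `f₁, …, f_n ∈ K[X]`.

Here `K[X, Y] = MvPolynomial (Fin 2) K` with `X = X 0`, `Y = X 1`; the automorphisms
`t_ν : X ↦ νX, Y ↦ ν⁻¹Y`, `s : X ↦ Y, Y ↦ −X`, `φ_f : X ↦ X, Y ↦ Y + f(X)` are specified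
by their values on the generators; the word `φ_{f₁} s φ_{f₂} s ⋯ φ_{f_n}` is the product
of the list `w 0, …, w (2n−2)` with even entries the `φ_{f_k}` and odd entries `s`.
-/

noncomputable section

/-- The Jacobian `J(τ)` of an automorphism of `K[X, Y]`. -/
def jacP (K : Type*) [CommRing K]
    (τ : MvPolynomial (Fin 2) K ≃ₐ[K] MvPolynomial (Fin 2) K) : MvPolynomial (Fin 2) K :=
  MvPolynomial.pderiv 0 (τ (MvPolynomial.X 0)) * MvPolynomial.pderiv 1 (τ (MvPolynomial.X 1))
    - MvPolynomial.pderiv 1 (τ (MvPolynomial.X 0)) *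
        MvPolynomial.pderiv 0 (τ (MvPolynomial.X 1))


namespace JVK

open MvPolynomial

abbrev Pl (K : Type*) [CommRing K] := MvPolynomial (Fin 2) K

variable {K : Type*} [Field K]

lemma algEquiv_ext {σ τ : Pl K ≃ₐ[K] Pl K} (h0 : σ (X 0) = τ (X 0)) (h1 : σ (X 1) = τ (X 1)) :
    σ = τ := by
  have : (σ : Pl K →ₐ[K] Pl K) = τ := by
    apply MvPolynomial.algHom_ext
    intro i
    fin_cases i
    · exact h0
    · exact h1
  exact AlgEquiv.ext fun x => DFunLike.congr_fun this x

@[simp] lemma equiv_C (σ : Pl K ≃ₐ[K] Pl K) (c : K) : σ (C c) = C c := σ.commutes c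

/-- The shear automorphism. -/
def phi (f : Polynomial K) : Pl K ≃ₐ[K] Pl K :=
  AlgEquiv.ofAlgHom (aeval ![X 0, X 1 + Polynomial.aeval (X 0) f])
    (aeval ![X 0, X 1 - Polynomial.aeval (X 0) f])
    (by
      apply MvPolynomial.algHom_ext
      intro i
      fin_cases i
      · simp
      · simp [← Polynomial.aeval_algHom_apply])
    (by
      apply MvPolynomial.algHom_ext
      intro i
      fin_cases i
      · simp
      · simp [← Polynomial.aeval_algHom_apply])

@[simp] lemma phi_X0 (f : Polynomial K) : phi f (X 0) = X 0 := by simp [phi]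
@[simp] lemma phi_X1 (f : Polynomial K) :
    phi f (X 1) = X 1 + Polynomial.aeval (X 0) f := by simp [phi]

/-- The rotation. -/
def rot (K : Type*) [Field K] : Pl K ≃ₐ[K] Pl K :=
  AlgEquiv.ofAlgHom (aeval ![X 1, - X 0]) (aeval ![- X 1, X 0])
    (by
      apply MvPolynomial.algHom_ext
      intro i
      fin_cases i <;> simp)
    (by
      apply MvPolynomial.algHom_ext
      intro i
      fin_cases i <;> simp)

@[simp] lemma rot_X0 : rot K (X 0) = X 1 := by simp [rot]
@[simp] lemma rot_X1 : rot K (X 1) = - X 0 := by simp [rot]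

/-- The torus element. -/
def tor (u : Kˣ) : Pl K ≃ₐ[K] Pl K :=
  AlgEquiv.ofAlgHom (aeval ![C (u : K) * X 0, C ((u : K)⁻¹) * X 1])
    (aeval ![C ((u : K)⁻¹) * X 0, C (u : K) * X 1])
    (by
      apply MvPolynomial.algHom_ext
      intro i
      fin_cases i <;> simp [algebraMap_eq, ← mul_assoc, ← C_mul])
    (by
      apply MvPolynomial.algHom_ext
      intro i
      fin_cases i <;> simp [algebraMap_eq, ← mul_assoc, ← C_mul])

@[simp] lemma tor_X0 (u : Kˣ) : tor u (X 0) = C (u : K) * X 0 := by simp [tor]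
@[simp] lemma tor_X1 (u : Kˣ) : tor u (X 1) = C ((u : K)⁻¹) * X 1 := by simp [tor]

/-- Alternating words. -/
inductive Word : (Pl K ≃ₐ[K] Pl K) → Prop
  | base (f : Polynomial K) : Word (phi f)
  | step (f : Polynomial K) (w : Pl K ≃ₐ[K] Pl K) (h : Word w) : Word (phi f * (rot K * w))

lemma phi_mul_phi (f g : Polynomial K) : phi f * phi g = phi (f + g) := by
  apply algEquiv_ext
  · simp
  · simp [← Polynomial.aeval_algHom_apply]; ring

lemma phi_mul_tor (f : Polynomial K) (u : Kˣ) :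
    ∃ f', phi f * tor u = tor u * phi f' := by
  refine ⟨Polynomial.C ((u : K)⁻¹) * f.comp (Polynomial.C ((u : K)⁻¹) * Polynomial.X), ?_⟩
  apply algEquiv_ext
  · simp
  · have h : (C (u : K)⁻¹ * (C (u : K) * X 0) : Pl K) = X 0 := by
      rw [← mul_assoc, ← C_mul]; simp
    simp [← Polynomial.aeval_algHom_apply, Polynomial.aeval_comp, algebraMap_eq, h, mul_add]

lemma rot_mul_tor (u : Kˣ) : rot K * tor u = tor u⁻¹ * rot K := by
  apply algEquiv_ext
  · simp
  · simp

lemma tor_mul_tor (u v : Kˣ) : tor u * tor v = tor (u * v) := by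
  apply algEquiv_ext
  · simp; ring
  · simp; ring

lemma phi_zero : phi (0 : Polynomial K) = 1 := by
  apply algEquiv_ext <;> simp

lemma tor_one : tor (1 : Kˣ) = 1 := by
  apply algEquiv_ext <;> simp

/-- Elements of the form torus times word. -/
def Good (σ : Pl K ≃ₐ[K] Pl K) : Prop := ∃ u : Kˣ, ∃ w, Word w ∧ σ = tor u * w

lemma good_one : Good (1 : Pl K ≃ₐ[K] Pl K) :=
  ⟨1, phi 0, Word.base 0, by rw [tor_one, phi_zero, one_mul]⟩

lemma good_phi (f : Polynomial K) {σ : Pl K ≃ₐ[K] Pl K} (h : Good σ) : Good (phi f * σ) := by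
  obtain ⟨u, w, hw, rfl⟩ := h
  obtain ⟨f', hf'⟩ := phi_mul_tor f u
  refine ⟨u, phi f' * w, ?_, by rw [← mul_assoc, hf', mul_assoc]⟩
  cases hw with
  | base g => rw [phi_mul_phi]; exact Word.base _
  | step g w h => rw [← mul_assoc, phi_mul_phi]; exact Word.step _ _ h

lemma good_rot {σ : Pl K ≃ₐ[K] Pl K} (h : Good σ) : Good (rot K * σ) := by
  obtain ⟨u, w, hw, rfl⟩ := h
  refine ⟨u⁻¹, phi 0 * (rot K * w), Word.step _ _ hw, ?_⟩
  rw [← mul_assoc, rot_mul_tor, phi_zero, one_mul, mul_assoc]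

lemma good_tor (v : Kˣ) {σ : Pl K ≃ₐ[K] Pl K} (h : Good σ) : Good (tor v * σ) := by
  obtain ⟨u, w, hw, rfl⟩ := h
  exact ⟨v * u, w, hw, by rw [← mul_assoc, tor_mul_tor]⟩

lemma rot_four : rot K * (rot K * (rot K * rot K)) = 1 := by
  apply algEquiv_ext <;> simp

lemma good_of_rot {σ : Pl K ≃ₐ[K] Pl K} (h : Good (rot K * σ)) : Good σ := by
  have := good_rot (good_rot (good_rot h))
  have e : rot K * (rot K * (rot K * (rot K * σ))) = σ := by
    have := congrArg (· * σ) (rot_four (K := K))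
    simpa [mul_assoc] using this
  rwa [e] at this

lemma good_of_phi (f : Polynomial K) {σ : Pl K ≃ₐ[K] Pl K} (h : Good (phi f * σ)) : Good σ := by
  have := good_phi (-f) h
  rwa [← mul_assoc, phi_mul_phi, neg_add_cancel, phi_zero, one_mul] at this

/-- Turning an inductive word into a list product. -/
lemma word_list {w : Pl K ≃ₐ[K] Pl K} (h : Word w) :
    ∃ n : ℕ, 1 ≤ n ∧ ∃ fs : ℕ → Polynomial K, ∃ W : ℕ → Pl K ≃ₐ[K] Pl K,
      (∀ k, W (2 * k) = phi (fs k)) ∧ (∀ k, W (2 * k + 1) = rot K) ∧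
      w = ((List.range (2 * n - 1)).map W).prod := by
  induction h with
  | base f =>
    refine ⟨1, le_rfl, fun _ => f, fun k => if k % 2 = 0 then phi f else rot K, ?_, ?_, ?_⟩
    · intro k; simp
    · intro k
      have : (2 * k + 1) % 2 = 1 := by omega
      simp [this]
    · simp [List.range_succ]
  | step f w h ih =>
    obtain ⟨n, hn, fs, W, h0, h1, hw⟩ := ih
    refine ⟨n + 1, by omega, fun k => Nat.casesOn k f fs,
      fun k => Nat.casesOn k (phi f) (fun k => Nat.casesOn k (rot K) W), ?_, ?_, ?_⟩
    · intro k
      cases k with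
      | zero => rfl
      | succ k => exact h0 k
    · intro k
      cases k with
      | zero => rfl
      | succ k => exact h1 k
    · have : 2 * (n + 1) - 1 = (2 * n - 1) + 1 + 1 := by omega
      rw [this, List.range_succ_eq_map, List.range_succ_eq_map]
      simp only [List.map_cons, List.map_map, List.prod_cons, hw]
      rfl

/-- All monomials of `P` have weight in `S`. -/
def Wt (u v τ : ℤ) (S : Set ℤ) (P : Polynomial (Pl K)) : Prop :=
  ∀ (k : ℕ) (m : Fin 2 →₀ ℕ), coeff m (P.coeff k) ≠ 0 → u * m 0 + v * m 1 + τ * k ∈ S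

lemma Wt.mono {u v τ : ℤ} {S T : Set ℤ} {P : Polynomial (Pl K)} (h : Wt u v τ S P)
    (hST : S ⊆ T) : Wt u v τ T P := fun k m hm => hST (h k m hm)

lemma Wt.add {u v τ : ℤ} {S : Set ℤ} {P Q : Polynomial (Pl K)} (h : Wt u v τ S P)
    (h' : Wt u v τ S Q) : Wt u v τ S (P + Q) := by
  intro k m hm
  by_cases h1 : coeff m (P.coeff k) = 0
  · by_cases h2 : coeff m (Q.coeff k) = 0
    · exact absurd (by simp [h1, h2]) hm
    · exact h' k m h2
  · exact h k m h1

lemma Wt.neg {u v τ : ℤ} {S : Set ℤ} {P : Polynomial (Pl K)} (h : Wt u v τ S P) :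
    Wt u v τ S (-P) := by
  intro k m hm
  exact h k m (by simpa using hm)

lemma Wt.sub {u v τ : ℤ} {S : Set ℤ} {P Q : Polynomial (Pl K)} (h : Wt u v τ S P)
    (h' : Wt u v τ S Q) : Wt u v τ S (P - Q) := by
  rw [sub_eq_add_neg]; exact h.add h'.neg

lemma Wt.zero {u v τ : ℤ} {S : Set ℤ} : Wt u v τ S (0 : Polynomial (Pl K)) := by
  intro k m hm
  simp at hm

lemma Wt.sum {u v τ : ℤ} {S : Set ℤ} {ι : Type*} (s : Finset ι) (P : ι → Polynomial (Pl K))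
    (h : ∀ i ∈ s, Wt u v τ S (P i)) : Wt u v τ S (∑ i ∈ s, P i) := by
  classical
  induction s using Finset.induction_on with
  | empty => simpa using Wt.zero
  | insert a s ha ih =>
    rw [Finset.sum_insert ha]
    exact (h a (by simp)).add (ih fun i hi => h i (by simp [hi]))

lemma Wt.mul {u v τ : ℤ} {S T U : Set ℤ} {P Q : Polynomial (Pl K)} (h : Wt u v τ S P)
    (h' : Wt u v τ T Q) (hU : ∀ a ∈ S, ∀ b ∈ T, a + b ∈ U) : Wt u v τ U (P * Q) := by
  intro k m hm
  rw [Polynomial.coeff_mul, coeff_sum] at hm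
  obtain ⟨⟨i, j⟩, hij, hne⟩ := Finset.exists_ne_zero_of_sum_ne_zero hm
  rw [coeff_mul] at hne
  obtain ⟨⟨a, b⟩, hab, hne⟩ := Finset.exists_ne_zero_of_sum_ne_zero hne
  have h1 := h i a (left_ne_zero_of_mul hne)
  have h2 := h' j b (right_ne_zero_of_mul hne)
  have := hU _ h1 _ h2
  rw [Finset.HasAntidiagonal.mem_antidiagonal] at hij hab
  simp only at hij hab
  subst hij hab
  convert this using 1
  push_cast [Finsupp.add_apply]
  ring

/-- `Q` is the leading part of `P` of weight `n`. -/
def Lead (u v τ n : ℤ) (P Q : Polynomial (Pl K)) : Prop :=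
  Wt u v τ {n} Q ∧ Wt u v τ (Set.Iic (n - 1)) (P - Q)

lemma Lead.wt {u v τ n : ℤ} {P Q : Polynomial (Pl K)} (h : Lead u v τ n P Q) :
    Wt u v τ (Set.Iic n) P := by
  have := (h.1.mono (T := Set.Iic n) (by simp)).add
    (h.2.mono (T := Set.Iic n) (Set.Iic_subset_Iic.2 (by linarith)))
  simpa using this

lemma Lead.mul {u v τ n n' : ℤ} {P Q P' Q' : Polynomial (Pl K)} (h : Lead u v τ n P Q)
    (h' : Lead u v τ n' P' Q') : Lead u v τ (n + n') (P * P') (Q * Q') := by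
  refine ⟨h.1.mul h'.1 (by simp), ?_⟩
  have e : P * P' - Q * Q' = (P - Q) * P' + Q * (P' - Q') := by ring
  rw [e]
  refine (h.2.mul h'.wt ?_).add (h.1.mul h'.2 ?_)
  · intro a ha b hb
    simp only [Set.mem_Iic] at *
    linarith
  · intro a ha b hb
    simp only [Set.mem_Iic, Set.mem_singleton_iff] at *
    linarith

lemma Lead.const (u v τ : ℤ) (c : K) :
    Lead u v τ 0 (Polynomial.C (C c)) (Polynomial.C (C c) : Polynomial (Pl K)) := by
  refine ⟨?_, by simpa using Wt.zero⟩
  intro k m hm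
  rw [Polynomial.coeff_C] at hm
  split_ifs at hm with hk
  · rw [coeff_C] at hm
    split_ifs at hm with hm'
    · subst hk; subst hm'; simp
    · simp at hm
  · simp at hm

lemma Lead.pow {u v τ n : ℤ} {P Q : Polynomial (Pl K)} (h : Lead u v τ n P Q) (k : ℕ) :
    Lead u v τ (k * n) (P ^ k) (Q ^ k) := by
  induction k with
  | zero => simpa using Lead.const u v τ (1 : K)
  | succ k ih =>
    rw [pow_succ, pow_succ]
    have := ih.mul h
    convert this using 1
    push_cast; ring

lemma aeval_mono {S : Type*} [CommRing S] [Algebra K S] (g : Fin 2 → S) (m : Fin 2 →₀ ℕ) (c : K) :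
    aeval g (monomial m c : Pl K) = algebraMap K S c * (g 0 ^ m 0 * g 1 ^ m 1) := by
  rw [aeval_monomial, Finsupp.prod_fintype _ _ (by simp), Fin.prod_univ_two]

lemma aeval_supp {S : Type*} [CommRing S] [Algebra K S] (g : Fin 2 → S) (F : Pl K) :
    aeval g F = ∑ m ∈ F.support, algebraMap K S (coeff m F) * (g 0 ^ m 0 * g 1 ^ m 1) := by
  conv_lhs => rw [F.as_sum]
  rw [map_sum]
  exact Finset.sum_congr rfl fun m _ => aeval_mono g m _

lemma algMap_eq (c : K) :
    algebraMap K (Polynomial (Pl K)) c = Polynomial.C (C c) := rfl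

lemma Lead.monomial {u v τ n₀ n₁ : ℤ} {g h : Fin 2 → Polynomial (Pl K)}
    (h0 : Lead u v τ n₀ (g 0) (h 0)) (h1 : Lead u v τ n₁ (g 1) (h 1)) (m : Fin 2 →₀ ℕ) (c : K) :
    Lead u v τ (m 0 * n₀ + m 1 * n₁)
      (algebraMap K _ c * (g 0 ^ m 0 * g 1 ^ m 1))
      (algebraMap K _ c * (h 0 ^ m 0 * h 1 ^ m 1)) := by
  have := (Lead.const u v τ c).mul ((h0.pow (m 0)).mul (h1.pow (m 1)))
  rwa [zero_add] at this

lemma wt_aeval {u v τ n₀ n₁ N : ℤ} {g h : Fin 2 → Polynomial (Pl K)}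
    (h0 : Lead u v τ n₀ (g 0) (h 0)) (h1 : Lead u v τ n₁ (g 1) (h 1)) (F : Pl K)
    (hF : ∀ m, coeff m F ≠ 0 → m 0 * n₀ + m 1 * n₁ ≤ N) :
    Wt u v τ (Set.Iic N) (aeval g F) := by
  rw [aeval_supp]
  apply Wt.sum
  intro m hm
  exact (Lead.monomial h0 h1 m _).wt.mono (Set.Iic_subset_Iic.2 (hF m (by simpa using hm)))

lemma lead_aeval {u v τ n₀ n₁ N : ℤ} {g h : Fin 2 → Polynomial (Pl K)}
    (h0 : Lead u v τ n₀ (g 0) (h 0)) (h1 : Lead u v τ n₁ (g 1) (h 1)) (F : Pl K)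
    (hF : ∀ m, coeff m F ≠ 0 → m 0 * n₀ + m 1 * n₁ = N) :
    Lead u v τ N (aeval g F) (aeval h F) := by
  rw [aeval_supp, aeval_supp, Lead, ← Finset.sum_sub_distrib]
  constructor
  · apply Wt.sum
    intro m hm
    rw [← hF m (by simpa using hm)]
    exact (Lead.monomial h0 h1 m _).1
  · apply Wt.sum
    intro m hm
    rw [← hF m (by simpa using hm)]
    exact (Lead.monomial h0 h1 m _).2

lemma wt_eq_zero {u v τ n : ℤ} {P : Polynomial (Pl K)} (h : Wt u v τ {n} P)
    (h' : Wt u v τ (Set.Iic (n - 1)) P) : P = 0 := by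
  ext k m
  by_contra hne
  have h1 := h k m (by simpa using hne)
  have h2 := h' k m (by simpa using hne)
  simp only [Set.mem_Iic, Set.mem_singleton_iff] at h1 h2
  omega

/-- part of weight `n` -/
def part (u v τ n : ℤ) (P : Polynomial (Pl K)) : Polynomial (Pl K) :=
  ∑ k ∈ P.support, Polynomial.monomial k
    (∑ m ∈ (P.coeff k).support, if u * m 0 + v * m 1 + τ * k = n then
      monomial m (coeff m (P.coeff k)) else 0)

lemma coeff_part (u v τ n : ℤ) (P : Polynomial (Pl K)) (k : ℕ) (m : Fin 2 →₀ ℕ) :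
    coeff m ((part u v τ n P).coeff k) =
      if u * m 0 + v * m 1 + τ * k = n then coeff m (P.coeff k) else 0 := by
  rw [part, Polynomial.finsetSum_coeff]
  simp only [Polynomial.coeff_monomial]
  rw [Finset.sum_ite_eq']
  split_ifs with h1 h2 h2
  · rw [coeff_sum, Finset.sum_eq_single m]
    · rw [if_pos h2]; simp
    · intro b _ hb
      split_ifs <;> simp [coeff_monomial, hb]
    · intro hm
      rw [if_pos h2]
      simpa using hm
  · rw [coeff_sum]
    apply Finset.sum_eq_zero
    intro b _
    split_ifs with h3
    · rw [coeff_monomial, if_neg]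
      rintro rfl
      exact h2 h3
    · simp
  · simp only [Polynomial.mem_support_iff, not_not] at h1
    simp [h1]
  · simp

lemma lead_part {u v τ n : ℤ} {P : Polynomial (Pl K)} (h : Wt u v τ (Set.Iic n) P) :
    Lead u v τ n P (part u v τ n P) := by
  constructor
  · intro k m hm
    rw [coeff_part] at hm
    split_ifs at hm with h1
    · exact h1
    · simp at hm
  · intro k m hm
    rw [Polynomial.coeff_sub, coeff_sub, coeff_part] at hm
    split_ifs at hm with h1
    · simp at hm
    · have := h k m (by simpa using hm)
      simp only [Set.mem_Iic] at *
      omega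

/-- A nontrivial deformation of the coordinates. -/
structure Deform (P : Fin 2 → Polynomial (Pl K)) : Prop where
  coeff_zero : ∀ i, (P i).coeff 0 = X i
  nontriv : (P 0).natDegree ≠ 0 ∨ (P 1).natDegree ≠ 0

lemma exists_deform (σ : Pl K ≃ₐ[K] Pl K) :
    ∃ P : Fin 2 → Polynomial (Pl K), Deform P ∧
      aeval P (σ (X 0)) = Polynomial.C (σ (X 0)) := by
  let φ : Pl K →ₐ[K] Polynomial (Pl K) :=
    (aeval ![Polynomial.C (σ (X 0)), Polynomial.C (σ (X 1)) + Polynomial.X]).comp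
      (σ.symm : Pl K →ₐ[K] Pl K)
  have hφ : ∀ h, aeval (fun i => φ (X i)) h = φ h := by
    intro h
    have : aeval (fun i => φ (X i)) = φ := by
      apply MvPolynomial.algHom_ext
      intro i; simp
    rw [this]
  have hx : φ (σ (X 0)) = Polynomial.C (σ (X 0)) := by simp [φ]
  have hy : φ (σ (X 1)) = Polynomial.C (σ (X 1)) + Polynomial.X := by simp [φ]
  have h0 : ∀ h, (φ h).coeff 0 = h := by
    let ev : Polynomial (Pl K) →ₐ[K] Pl K := (Polynomial.aeval (0 : Pl K)).restrictScalars K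
    have : (ev.comp φ).comp (σ : Pl K →ₐ[K] Pl K) = (σ : Pl K →ₐ[K] Pl K) := by
      apply MvPolynomial.algHom_ext
      intro i
      fin_cases i
      · simp [hx, ev]
      · simp [hy, ev]
    intro h
    have h2 := DFunLike.congr_fun this (σ.symm h)
    have h3 : (σ : Pl K →ₐ[K] Pl K) (σ.symm h) = h := σ.apply_symm_apply h
    rw [AlgHom.comp_apply, AlgHom.comp_apply, h3] at h2
    rw [Polynomial.coeff_zero_eq_aeval_zero]
    exact h2
  refine ⟨fun i => φ (X i), ⟨fun i => h0 _, ?_⟩, by rw [hφ, hx]⟩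
  by_contra hcon
  push Not at hcon
  have key : φ = (Polynomial.CAlgHom (R := K) (A := Pl K)) := by
    apply MvPolynomial.algHom_ext
    intro i
    fin_cases i
    · have := Polynomial.eq_C_of_natDegree_eq_zero hcon.1
      rw [h0] at this
      exact this
    · have := Polynomial.eq_C_of_natDegree_eq_zero hcon.2
      rw [h0] at this
      exact this
  rw [key] at hy
  simp at hy

lemma exists_gr (σ : Pl K ≃ₐ[K] Pl K) (u v d : ℤ) (F : Pl K)
    (hF : ∀ m, coeff m F ≠ 0 → u * m 0 + v * m 1 = d)
    (hfF : ∀ m, coeff m (σ (X 0) - F) ≠ 0 → u * m 0 + v * m 1 < d) :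
    ∃ Q : Fin 2 → Polynomial (Pl K), Deform Q ∧ aeval Q F = Polynomial.C F := by
  classical
  obtain ⟨P, hP, hPf⟩ := exists_deform σ
  let w : Fin 2 → ℤ := ![u, v]
  -- index set of nontrivial monomials
  let I : Finset (Fin 2 × ℕ × (Fin 2 →₀ ℕ)) :=
    Finset.univ.biUnion fun i => ((P i).support.filter (· ≠ 0)).biUnion fun k =>
      ((P i).coeff k).support.image fun m => (i, k, m)
  have hI : ∀ i k m, (i, k, m) ∈ I ↔ k ≠ 0 ∧ coeff m ((P i).coeff k) ≠ 0 := by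
    intro i k m
    simp only [I, Finset.mem_biUnion, Finset.mem_univ, true_and, Finset.mem_filter,
      Finset.mem_image, mem_support_iff, Polynomial.mem_support_iff, Prod.mk.injEq]
    constructor
    · rintro ⟨i', k', ⟨h1, h2⟩, m', h3, rfl, rfl, rfl⟩
      exact ⟨h2, h3⟩
    · rintro ⟨h1, h2⟩
      refine ⟨i, k, ⟨?_, h1⟩, m, h2, rfl, rfl, rfl⟩
      intro h; rw [h] at h2; simp at h2
  have hne : I.Nonempty := by
    have : ∃ i, (P i).natDegree ≠ 0 := by
      rcases hP.nontriv with h | h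
      · exact ⟨0, h⟩
      · exact ⟨1, h⟩
    obtain ⟨i, hi⟩ := this
    have h1 : (P i).coeff (P i).natDegree ≠ 0 := by
      intro h
      rw [Polynomial.coeff_natDegree, Polynomial.leadingCoeff_eq_zero] at h
      rw [h] at hi; simp at hi
    obtain ⟨m, hm⟩ := MvPolynomial.ne_zero_iff.1 h1
    exact ⟨(i, _, m), (hI _ _ _).2 ⟨hi, hm⟩⟩
  obtain ⟨⟨i₀, k₀, m₀⟩, hmem, hmin⟩ := Finset.exists_min_image I
    (fun q => ((w q.1 - (u * q.2.2 0 + v * q.2.2 1) : ℤ) : ℚ) / (q.2.1 : ℚ)) hne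
  obtain ⟨hk₀, hc₀⟩ := (hI _ _ _).1 hmem
  have hk₀pos : (0 : ℤ) < k₀ := by omega
  let N : ℤ := k₀
  let τ : ℤ := w i₀ - (u * m₀ 0 + v * m₀ 1)
  have hwt : ∀ i, Wt (N * u) (N * v) τ (Set.Iic (N * w i)) (P i) := by
    intro i k m hm
    simp only [Set.mem_Iic]
    by_cases hk : k = 0
    · subst hk
      rw [hP.coeff_zero, coeff_X] at hm
      split_ifs at hm with h
      · subst h
        fin_cases i <;> simp [w]
      · simp at hm
    · have h1 := hmin (i, k, m) ((hI _ _ _).2 ⟨hk, hm⟩)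
      simp only at h1
      rw [div_le_div_iff₀ (by positivity) (by positivity)] at h1
      have h2 : τ * k ≤ (w i - (u * m 0 + v * m 1)) * N := by exact_mod_cast h1
      linarith
  let Q : Fin 2 → Polynomial (Pl K) := fun i => part (N * u) (N * v) τ (N * w i) (P i)
  have hlead : ∀ i, Lead (N * u) (N * v) τ (N * w i) (P i) (Q i) := fun i => lead_part (hwt i)
  refine ⟨Q, ⟨?_, ?_⟩, ?_⟩
  · intro i
    ext m
    rw [coeff_part, hP.coeff_zero, coeff_X]
    by_cases h : Finsupp.single i 1 = m
    · subst h
      fin_cases i <;> simp [w]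
    · simp [h]
  · have hcf : (Q i₀).coeff k₀ ≠ 0 := by
      intro h
      have h2 := congrArg (coeff m₀) h
      rw [coeff_part, if_pos] at h2
      · exact hc₀ (by simpa using h2)
      · simp only [N, τ]; ring
    have hd : (Q i₀).natDegree ≠ 0 := by
      have := Polynomial.le_natDegree_of_ne_zero hcf
      omega
    fin_cases i₀
    · exact Or.inl hd
    · exact Or.inr hd
  · have a1 : Lead (N * u) (N * v) τ (N * d) (aeval P F) (aeval Q F) := by
      apply lead_aeval (hlead 0) (hlead 1)
      intro m hm
      rw [← hF m hm]
      simp only [w, Matrix.cons_val_zero, Matrix.cons_val_one]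
      ring
    have a2 : Wt (N * u) (N * v) τ (Set.Iic (N * d - 1)) (aeval P (σ (X 0) - F)) := by
      apply wt_aeval (hlead 0) (hlead 1)
      intro m hm
      have := hfF m hm
      simp only [w, Matrix.cons_val_zero, Matrix.cons_val_one]
      nlinarith
    have a3 : Wt (N * u) (N * v) τ {N * d} (Polynomial.C F) := by
      intro k m hm
      rw [Polynomial.coeff_C] at hm
      split_ifs at hm with hk
      · subst hk
        simp only [Set.mem_singleton_iff]
        rw [← hF m hm]
        push_cast; ring
      · simp at hm
    have a4 : Wt (N * u) (N * v) τ (Set.Iic (N * d - 1)) (Polynomial.C (σ (X 0) - F)) := by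
      intro k m hm
      rw [Polynomial.coeff_C] at hm
      split_ifs at hm with hk
      · subst hk
        have := hfF m hm
        simp only [Set.mem_Iic]
        push_cast
        nlinarith
      · simp at hm
    have e : aeval Q F - Polynomial.C F =
        Polynomial.C (σ (X 0) - F) - aeval P (σ (X 0) - F) - (aeval P F - aeval Q F) := by
      rw [map_sub (aeval P : Pl K →ₐ[K] _), hPf, Polynomial.C_sub]; ring
    have : aeval Q F - Polynomial.C F = 0 := by
      apply wt_eq_zero (a1.1.sub a3)
      rw [e]
      exact (a4.sub a2).sub a1.2
    exact sub_eq_zero.1 this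

/-- Coefficientwise derivation. -/
def dc {L B : Type*} [CommRing L] [CommRing B] [Algebra L B] (D : Derivation L B B) :
    Derivation L (Polynomial B) (Polynomial B) :=
  (PolynomialModule.equivPolynomialSelf (R := B)).toLinearMap.compDer D.mapCoeffs

lemma dc_coeff {L B : Type*} [CommRing L] [CommRing B] [Algebra L B] (D : Derivation L B B)
    (P : Polynomial B) (k : ℕ) : (dc D P).coeff k = D (P.coeff k) := rfl

lemma dc_C {L B : Type*} [CommRing L] [CommRing B] [Algebra L B] (D : Derivation L B B)
    (b : B) : dc D (Polynomial.C b) = Polynomial.C (D b) := by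
  ext k
  rw [dc_coeff, Polynomial.coeff_C, Polynomial.coeff_C]
  split_ifs <;> simp

lemma dc_natDegree {L B : Type*} [CommRing L] [CommRing B] [Algebra L B] (D : Derivation L B B)
    (P : Polynomial B) : (dc D P).natDegree ≤ P.natDegree := by
  rw [Polynomial.natDegree_le_iff_coeff_eq_zero]
  intro N hN
  rw [dc_coeff, Polynomial.coeff_eq_zero_of_natDegree_lt hN, map_zero]

/-- The key degree estimate. -/
lemma key_est {L B : Type*} [Field L] [CommRing B] [IsDomain B] [Algebra L B]
    (D₀ D₁ : Derivation L B B) (x y : Polynomial B) (l c : B) (α β : ℕ)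
    (hl0 : D₀ l = 0) (hl1 : D₁ l = 0)
    (hJ : dc D₀ x * dc D₁ y - dc D₁ x * dc D₀ y ≠ 0) (hβ : (β : B) ≠ 0)
    (h : y ^ β - Polynomial.C l * x ^ α = Polynomial.C c) :
    (β - 1) * y.natDegree ≤ x.natDegree := by
  have e : ∀ D : Derivation L B B, D l = 0 →
      (β : Polynomial B) * y ^ (β - 1) * dc D y
        - Polynomial.C l * ((α : Polynomial B) * x ^ (α - 1) * dc D x) = Polynomial.C (D c) := by
    intro D hD
    have := congrArg (dc D) h
    rw [map_sub, Derivation.leibniz, Derivation.leibniz_pow, Derivation.leibniz_pow, dc_C, dc_C,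
      hD] at this
    simp only [smul_eq_mul, nsmul_eq_mul, map_zero, mul_zero, add_zero] at this
    rw [← this]; ring
  have e0 := e D₀ hl0
  have e1 := e D₁ hl1
  have key : (β : Polynomial B) * y ^ (β - 1) * (dc D₀ x * dc D₁ y - dc D₁ x * dc D₀ y)
      = dc D₀ x * Polynomial.C (D₁ c) - dc D₁ x * Polynomial.C (D₀ c) := by
    rw [← e0, ← e1]; ring
  by_cases hy : y = 0
  · simp [hy]
  have hb : (β : Polynomial B) ≠ 0 := by
    rw [← map_natCast (Polynomial.C : B →+* Polynomial B)]
    exact Polynomial.C_ne_zero.2 hβ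
  have hd := congrArg Polynomial.natDegree key
  rw [Polynomial.natDegree_mul (mul_ne_zero hb (pow_ne_zero _ hy)) hJ,
    Polynomial.natDegree_mul hb (pow_ne_zero _ hy), Polynomial.natDegree_pow] at hd
  have hle : (dc D₀ x * Polynomial.C (D₁ c) - dc D₁ x * Polynomial.C (D₀ c)).natDegree
      ≤ x.natDegree := by
    refine (Polynomial.natDegree_sub_le _ _).trans (max_le ?_ ?_)
    · exact (Polynomial.natDegree_mul_C_le _ _).trans (dc_natDegree _ _)
    · exact (Polynomial.natDegree_mul_C_le _ _).trans (dc_natDegree _ _)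
  omega

lemma exists_pure {F : Pl K} {Q : Fin 2 → Polynomial (Pl K)} (hQ : Deform Q)
    (hF : F ≠ 0) (h : aeval Q F = Polynomial.C F) :
    ∃ m, coeff m F ≠ 0 ∧ (m 0 = 0 ∨ m 1 = 0) := by
  by_contra hcon
  push Not at hcon
  have hd : ∀ i, Q i ∣ Polynomial.C F := by
    intro i
    rw [← h, aeval_supp]
    apply Finset.dvd_sum
    intro m hm
    have := hcon m (by simpa using hm)
    apply Dvd.dvd.mul_left
    fin_cases i
    · exact (dvd_pow_self _ this.1).mul_right _
    · exact (dvd_pow_self _ this.2).mul_left _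
  have hz : ∀ i, (Q i).natDegree = 0 := by
    intro i
    have := Polynomial.natDegree_le_of_dvd (hd i) (by simpa using hF)
    simpa using this
  rcases hQ.nontriv with h | h
  · exact h (hz 0)
  · exact h (hz 1)

/-- weighted part in two variables -/
def top (u v n : ℤ) (f : Pl K) : Pl K := (part u v 0 n (Polynomial.C f)).coeff 0

lemma coeff_top (u v n : ℤ) (f : Pl K) (m : Fin 2 →₀ ℕ) :
    coeff m (top u v n f) = if u * m 0 + v * m 1 = n then coeff m f else 0 := by
  rw [top, coeff_part]; simp

lemma fin2_ext {m m' : Fin 2 →₀ ℕ} (h0 : m 0 = m' 0) (h1 : m 1 = m' 1) : m = m' := by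
  ext i; fin_cases i
  · exact h0
  · exact h1

lemma exists_degreeOf {f : Pl K} (hf : f ≠ 0) (i : Fin 2) :
    ∃ m, coeff m f ≠ 0 ∧ m i = degreeOf i f := by
  obtain ⟨m, hm, h⟩ := Finset.exists_mem_eq_sup f.support
    (by simpa using hf) (fun m => m i)
  refine ⟨m, by simpa using hm, ?_⟩
  rw [degreeOf_eq_sup]; exact h.symm

lemma le_degreeOf {f : Pl K} {m : Fin 2 →₀ ℕ} (h : coeff m f ≠ 0) (i : Fin 2) :
    m i ≤ degreeOf i f := monomial_le_degreeOf i (by simpa using h)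

lemma newton (σ : Pl K ≃ₐ[K] Pl K) (a b : ℕ) (ha : degreeOf 0 (σ (X 0)) = a)
    (hb : degreeOf 1 (σ (X 0)) = b) (ha0 : 0 < a) (hb0 : 0 < b) :
    (∀ m, coeff m (σ (X 0)) ≠ 0 → b * m 0 + a * m 1 ≤ a * b) ∧
    (∃ m, coeff m (σ (X 0)) ≠ 0 ∧ m 0 = a ∧ m 1 = 0) ∧
    (∃ m, coeff m (σ (X 0)) ≠ 0 ∧ m 0 = 0 ∧ m 1 = b) ∧
    ∃ Q : Fin 2 → Polynomial (Pl K), Deform Q ∧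
      aeval Q (top b a (a * b) (σ (X 0))) = Polynomial.C (top b a (a * b) (σ (X 0))) := by
  set f := σ (X 0) with hfdef
  have hf : f ≠ 0 := by
    rw [hfdef]; simp
  obtain ⟨m₀, hm₀, hmax⟩ := Finset.exists_max_image f.support
    (fun m => b * m 0 + a * m 1) (by simpa using hf)
  obtain ⟨d, hd⟩ : ∃ d, d = b * m₀ 0 + a * m₀ 1 := ⟨_, rfl⟩
  have hgr := exists_gr σ b a d (top b a d f)
    (by
      intro m hm
      rw [coeff_top] at hm
      split_ifs at hm with h
      · exact h
      · simp at hm)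
    (by
      intro m hm
      rw [coeff_sub, coeff_top] at hm
      split_ifs at hm with h
      · simp [hfdef] at hm
      · have := hmax m (by simpa using hm)
        rw [← hd] at this
        have : (b * m 0 + a * m 1 : ℤ) ≤ d := by exact_mod_cast this
        exact lt_of_le_of_ne this h)
  obtain ⟨Q, hQ, hQF⟩ := hgr
  have hF0 : top b a d f ≠ 0 := by
    intro h
    have := congrArg (coeff m₀) h
    rw [coeff_top, if_pos (by rw [hd]; push_cast; ring)] at this
    simp only [mem_support_iff] at hm₀
    exact hm₀ (by simpa using this)
  obtain ⟨m, hm, hor⟩ := exists_pure hQ hF0 hQF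
  rw [coeff_top] at hm
  split_ifs at hm with hmd
  swap
  · simp at hm
  have hmd' : b * m 0 + a * m 1 = d := by exact_mod_cast hmd
  have h0 := le_degreeOf hm 0
  have h1 := le_degreeOf hm 1
  rw [ha] at h0
  rw [hb] at h1
  have hdle : d ≤ a * b := by
    rcases hor with h | h
    · rw [h] at hmd'; nlinarith
    · rw [h] at hmd'; nlinarith
  have hall : ∀ m, coeff m f ≠ 0 → b * m 0 + a * m 1 ≤ d := by
    intro m hm
    rw [hd]; exact hmax m (by simpa using hm)
  obtain ⟨p, hp, hp0⟩ := exists_degreeOf hf 0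
  obtain ⟨q, hq, hq1⟩ := exists_degreeOf hf 1
  rw [ha] at hp0
  rw [hb] at hq1
  have hp' := hall p hp
  have hq' := hall q hq
  rw [hp0] at hp'
  rw [hq1] at hq'
  have hdeq : d = a * b := by nlinarith
  have hp1 : p 1 = 0 := by
    by_contra h
    have : 0 < a * p 1 := by positivity
    nlinarith
  have hq0 : q 0 = 0 := by
    by_contra h
    have : 0 < b * q 0 := by positivity
    nlinarith
  refine ⟨fun m hm => hdeq ▸ hall m hm, ⟨p, hp, hp0, hp1⟩, ⟨q, hq, hq0, hq1⟩, Q, hQ, ?_⟩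
  have : ((d : ℕ) : ℤ) = a * b := by rw [hdeq]; push_cast; ring
  rwa [this] at hQF

set_option maxHeartbeats 2000000 in
lemma core (F : Pl K) (Q : Fin 2 → Polynomial (Pl K)) (hQ : Deform Q)
    (hQF : aeval Q F = Polynomial.C F) (k α β : ℕ) (hk : 0 < k) (hα : 0 < α) (hβ : 0 < β)
    (hco : Nat.Coprime α β)
    (hF : ∀ m, coeff m F ≠ 0 → β * m 0 + α * m 1 = k * α * β)
    (hFa : ∃ m, coeff m F ≠ 0 ∧ m 0 = k * α ∧ m 1 = 0)
    (hFb : ∃ m, coeff m F ≠ 0 ∧ m 0 = 0 ∧ m 1 = k * β) :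
    (α = 1 ∨ β = 1) ∧
    (β = 1 → ∃ l : K, ∑ m ∈ F.support, coeff m F * l ^ m 1 = 0) := by
  classical
  have hsplit : ∀ m, coeff m F ≠ 0 → ∃ l, l ≤ k ∧ m 0 = α * (k - l) ∧ m 1 = β * l ∧
      m 1 / β = l := by
    intro m hm
    have h := hF m hm
    have hdvd : β ∣ m 1 := by
      have h1 : β ∣ α * m 1 := by
        have : β ∣ β * m 0 + α * m 1 := by rw [h]; exact dvd_mul_left _ _
        exact (Nat.dvd_add_right (dvd_mul_right _ _)).1 this
      exact hco.symm.dvd_of_dvd_mul_left h1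
    obtain ⟨l, hl⟩ := hdvd
    have h2 : m 0 + α * l = k * α := by
      have : β * (m 0 + α * l) = β * (k * α) := by rw [hl] at h; linarith
      exact Nat.eq_of_mul_eq_mul_left hβ this
    have hlk : l ≤ k := by
      by_contra hcon
      push Not at hcon
      nlinarith
    refine ⟨l, hlk, ?_, hl, ?_⟩
    · obtain ⟨r, rfl⟩ := Nat.exists_eq_add_of_le hlk
      rw [Nat.add_sub_cancel_left]
      nlinarith
    · rw [hl]; exact Nat.mul_div_cancel_left _ hβ
  let g : Polynomial K := ∑ m ∈ F.support, Polynomial.C (coeff m F) * Polynomial.X ^ (m 1 / β)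
  have hgc : ∀ m, coeff m F ≠ 0 → g.coeff (m 1 / β) = coeff m F := by
    intro m hm
    simp only [g, Polynomial.finsetSum_coeff, Polynomial.coeff_C_mul_X_pow]
    rw [Finset.sum_eq_single m]
    · simp
    · intro m' hm' hne
      rw [if_neg]
      intro he
      obtain ⟨l, hl, a1, a2, a3⟩ := hsplit m hm
      obtain ⟨l', hl', b1, b2, b3⟩ := hsplit m' (by simpa using hm')
      have : l = l' := by rw [← a3, ← b3, he]
      subst this
      exact hne (fin2_ext (b1.trans a1.symm) (b2.trans a2.symm))
    · intro h
      simpa using h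
  have hg0 : g.coeff 0 ≠ 0 := by
    obtain ⟨m, hm, h0, h1⟩ := hFa
    have := hgc m hm
    rw [h1, Nat.zero_div] at this
    rwa [this]
  have hgk : g.coeff k ≠ 0 := by
    obtain ⟨m, hm, h0, h1⟩ := hFb
    have := hgc m hm
    rw [h1, Nat.mul_div_cancel _ hβ] at this
    rwa [this]
  have hdeg : g.degree ≠ 0 := by
    intro h
    have := Polynomial.le_degree_of_ne_zero hgk
    rw [h] at this
    have : k ≤ 0 := by exact_mod_cast this
    omega
  obtain ⟨L, iL, iA, iC⟩ : ∃ (L : Type _) (_ : Field L) (_ : Algebra K L), IsAlgClosed L :=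
    ⟨AlgebraicClosure K, inferInstance, inferInstance, inferInstance⟩
  obtain ⟨lam, hlam⟩ := IsAlgClosed.exists_aeval_eq_zero L g hdeg
  have hlam0 : lam ≠ 0 := by
    rintro rfl
    rw [← Polynomial.coeff_zero_eq_aeval_zero'] at hlam
    exact hg0 (by simpa using hlam)
  let j : Pl K →+* Pl L := MvPolynomial.map (algebraMap K L)
  have hj : Function.Injective j := MvPolynomial.map_injective _ (algebraMap K L).injective
  let ι : Polynomial (Pl K) →+* Polynomial (Pl L) := Polynomial.mapRingHom j
  let x := ι (Q 0)
  let y := ι (Q 1)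
  have hxd : x.natDegree = (Q 0).natDegree := Polynomial.natDegree_map_eq_of_injective hj _
  have hyd : y.natDegree = (Q 1).natDegree := Polynomial.natDegree_map_eq_of_injective hj _
  have hF0 : F ≠ 0 := by
    obtain ⟨m, hm, -⟩ := hFa
    rintro rfl
    simp at hm
  have hsum : ∑ m ∈ F.support, Polynomial.C (C (algebraMap K L (coeff m F))) *
      ((x ^ α) ^ (k - m 1 / β) * (y ^ β) ^ (m 1 / β)) = Polynomial.C (j F) := by
    have h1 := congrArg ι hQF
    rw [aeval_supp, map_sum] at h1
    have h2 : ι (Polynomial.C F) = Polynomial.C (j F) := by simp [ι]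
    rw [← h2, ← h1]
    apply Finset.sum_congr rfl
    intro m hm
    obtain ⟨l, hl, a1, a2, a3⟩ := hsplit m (by simpa using hm)
    rw [map_mul, map_mul, map_pow, map_pow, algMap_eq, a3, a1, a2, pow_mul, pow_mul]
    simp [ι, j, x, y]
  have hdvd : y ^ β - Polynomial.C (C lam) * x ^ α ∣ Polynomial.C (j F) := by
    have hz : ∑ m ∈ F.support, Polynomial.C (C (algebraMap K L (coeff m F))) *
        ((x ^ α) ^ (k - m 1 / β) * (Polynomial.C (C lam) * x ^ α) ^ (m 1 / β)) = 0 := by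
      have : ∀ m ∈ F.support, Polynomial.C (C (algebraMap K L (coeff m F))) *
        ((x ^ α) ^ (k - m 1 / β) * (Polynomial.C (C lam) * x ^ α) ^ (m 1 / β)) =
          (x ^ α) ^ k * Polynomial.C (C (algebraMap K L (coeff m F) * lam ^ (m 1 / β))) := by
        intro m hm
        obtain ⟨l, hl, a1, a2, a3⟩ := hsplit m (by simpa using hm)
        rw [a3]
        conv_rhs => rw [← Nat.sub_add_cancel hl, pow_add]
        simp only [map_mul, map_pow, mul_pow]
        ring
      rw [Finset.sum_congr rfl this, ← Finset.mul_sum, ← map_sum, ← map_sum]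
      have h3 : ∑ m ∈ F.support, algebraMap K L (coeff m F) * lam ^ (m 1 / β) = 0 := by
        rw [← hlam]; simp [g]
      rw [h3]; simp
    rw [← hsum, ← sub_zero (∑ m ∈ F.support, _ : Polynomial (Pl L)), ← hz,
      ← Finset.sum_sub_distrib]
    apply Finset.dvd_sum
    intro m _
    rw [← mul_sub, ← mul_sub]
    exact ((sub_dvd_pow_sub_pow _ _ _).mul_left _).mul_left _
  have hnd : (y ^ β - Polynomial.C (C lam) * x ^ α).natDegree = 0 := by
    have hne : Polynomial.C (j F) ≠ 0 := by
      rw [Ne, Polynomial.C_eq_zero, map_eq_zero_iff _ hj]; exact hF0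
    have := Polynomial.natDegree_le_of_dvd hdvd hne
    simpa using this
  obtain ⟨c, hc⟩ : ∃ c, y ^ β - Polynomial.C (C lam) * x ^ α = Polynomial.C c :=
    ⟨_, Polynomial.eq_C_of_natDegree_eq_zero hnd⟩
  have hCl : (C lam : Pl L) ≠ 0 := by simpa using hlam0
  have hdd : β * y.natDegree = α * x.natDegree := by
    have h1 : y ^ β = Polynomial.C (C lam) * x ^ α + Polynomial.C c := by rw [← hc]; ring
    have h2 := congrArg Polynomial.natDegree h1
    rwa [Polynomial.natDegree_add_C, Polynomial.natDegree_C_mul hCl, Polynomial.natDegree_pow,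
      Polynomial.natDegree_pow] at h2
  have hypos : 0 < y.natDegree ∧ 0 < x.natDegree := by
    rcases hQ.nontriv with h | h
    · have h1 : 0 < x.natDegree := by omega
      refine ⟨?_, h1⟩
      by_contra h2
      have h3 : y.natDegree = 0 := by omega
      rw [h3] at hdd
      have : 0 < α * x.natDegree := by positivity
      omega
    · have h1 : 0 < y.natDegree := by omega
      refine ⟨h1, ?_⟩
      by_contra h2
      have h3 : x.natDegree = 0 := by omega
      rw [h3] at hdd
      have : 0 < β * y.natDegree := by positivity
      omega
  obtain ⟨hypos, hxpos⟩ := hypos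
  have hx0 : x.coeff 0 = X 0 := by
    simp [x, ι, j, hQ.coeff_zero]
  have hy0 : y.coeff 0 = X 1 := by
    simp [y, ι, j, hQ.coeff_zero]
  constructor
  · by_contra hcon
    push Not at hcon
    have hα2 : 2 ≤ α := by omega
    have hβ2 : 2 ≤ β := by omega
    have hJ : dc (pderiv (0 : Fin 2) (R := L)) x * dc (pderiv (1 : Fin 2)) y
        - dc (pderiv (1 : Fin 2)) x * dc (pderiv (0 : Fin 2)) y ≠ 0 := by
      intro h
      have := congrArg (fun p => Polynomial.coeff p 0) h
      simp only [Polynomial.coeff_sub, Polynomial.mul_coeff_zero, dc_coeff, hx0, hy0,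
        pderiv_X_self] at this
      rw [pderiv_X_of_ne (by decide)] at this
      simp at this
    have hJ' : dc (pderiv (0 : Fin 2) (R := L)) y * dc (pderiv (1 : Fin 2)) x
        - dc (pderiv (1 : Fin 2)) y * dc (pderiv (0 : Fin 2)) x ≠ 0 := by
      intro h
      apply hJ
      rw [← neg_eq_zero, ← h]; ring
    have hcast : ∀ n : ℕ, (n : L) ≠ 0 → (n : Pl L) ≠ 0 := by
      intro n hn
      rw [← map_natCast (C : L →+* Pl L), Ne, C_eq_zero]
      exact hn
    by_cases hb : (β : L) = 0
    · have ha : (α : L) ≠ 0 := by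
        intro ha
        have h1 := (Nat.isCoprime_iff_coprime (m := α) (n := β)).2 hco
        obtain ⟨r, s, hrs⟩ := h1
        have := congrArg (Int.cast : ℤ → L) hrs
        push_cast at this
        rw [ha, hb] at this
        simp at this
      have hc' : x ^ α - Polynomial.C (C lam⁻¹) * y ^ β = Polynomial.C (- C lam⁻¹ * c) := by
        rw [Polynomial.C_mul, ← hc, Polynomial.C_neg]
        have : (Polynomial.C (C lam⁻¹) * Polynomial.C (C lam) : Polynomial (Pl L)) = 1 := by
          rw [← Polynomial.C_mul, ← C_mul, inv_mul_cancel₀ hlam0]; simp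
        linear_combination (- x ^ α) * this
      have := key_est (pderiv (0 : Fin 2) (R := L)) (pderiv 1) y x (C lam⁻¹) _ β α
        (by simp) (by simp) hJ' (hcast _ ha) hc'
      obtain ⟨α', rfl⟩ := Nat.exists_eq_add_of_le hα2
      obtain ⟨β', rfl⟩ := Nat.exists_eq_add_of_le hβ2
      have e : 2 + α' - 1 = 1 + α' := by omega
      rw [e] at this
      have h5 : (2 + β') * (1 + α') * x.natDegree ≤ (2 + α') * x.natDegree := by
        rw [← hdd, mul_assoc]
        exact Nat.mul_le_mul_left _ this
      have h6 := Nat.le_of_mul_le_mul_right h5 hxpos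
      have h7 : α' = 0 := by nlinarith
      have h8 : β' = 0 := by nlinarith
      subst h7; subst h8
      simp at hco
    · have := key_est (pderiv (0 : Fin 2) (R := L)) (pderiv 1) x y (C lam) _ α β
        (by simp) (by simp) hJ (hcast _ hb) hc
      obtain ⟨α', rfl⟩ := Nat.exists_eq_add_of_le hα2
      obtain ⟨β', rfl⟩ := Nat.exists_eq_add_of_le hβ2
      have e : 2 + β' - 1 = 1 + β' := by omega
      rw [e] at this
      have h5 : (2 + α') * (1 + β') * y.natDegree ≤ (2 + β') * y.natDegree := by
        rw [hdd, mul_assoc]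
        exact Nat.mul_le_mul_left _ this
      have h6 := Nat.le_of_mul_le_mul_right h5 hypos
      have h7 : β' = 0 := by nlinarith
      have h8 : α' = 0 := by nlinarith
      subst h7; subst h8
      simp at hco
  · intro hβ1
    subst hβ1
    have hyc : y.coeff y.natDegree = C lam * (x ^ α).coeff y.natDegree := by
      have := congrArg (fun p => Polynomial.coeff p y.natDegree) hc
      simp only [pow_one, Polynomial.coeff_sub, Polynomial.coeff_C_mul] at this
      rw [Polynomial.coeff_C_of_ne_zero (by omega)] at this
      exact sub_eq_zero.1 this
    have hne : (Q 1).coeff y.natDegree ≠ 0 := by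
      rw [hyd, Polynomial.coeff_natDegree, Ne, Polynomial.leadingCoeff_eq_zero]
      intro h
      rw [hyd, h] at hypos
      simp at hypos
    obtain ⟨m, hm⟩ := MvPolynomial.ne_zero_iff.1 hne
    have h1 : y.coeff y.natDegree = j ((Q 1).coeff y.natDegree) :=
      Polynomial.coeff_map j _
    have h2 : (x ^ α).coeff y.natDegree = j ((Q 0 ^ α).coeff y.natDegree) := by
      simp only [x, ← map_pow]
      exact Polynomial.coeff_map j _
    rw [h1, h2] at hyc
    have h3 := congrArg (coeff m) hyc
    rw [coeff_C_mul] at h3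
    simp only [j, coeff_map] at h3
    set r := coeff m ((Q 1).coeff y.natDegree) with hr
    set s := coeff m ((Q 0 ^ α).coeff y.natDegree) with hs
    have hs0 : s ≠ 0 := by
      intro h
      rw [h, map_zero, mul_zero] at h3
      exact hm (by simpa using h3)
    have hlamK : lam = algebraMap K L (r / s) := by
      rw [map_div₀, h3, mul_div_assoc, div_self, mul_one]
      simpa using hs0
    refine ⟨r / s, ?_⟩
    rw [hlamK, Polynomial.aeval_algebraMap_apply] at hlam
    have h4 : Polynomial.aeval (r / s) g = 0 := by simpa using hlam
    rw [← h4]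
    simp [g]

lemma reduce1 (σ : Pl K ≃ₐ[K] Pl K) (a b : ℕ) (ha : degreeOf 0 (σ (X 0)) = a)
    (hb : degreeOf 1 (σ (X 0)) = b) (ha0 : 0 < a) (hb0 : 0 < b) :
    (a ∣ b ∨ b ∣ a) ∧
    (b ∣ a → ∃ l : K, ∑ m ∈ (top b a (a * b) (σ (X 0))).support,
      coeff m (top b a (a * b) (σ (X 0))) * l ^ m 1 = 0) := by
  obtain ⟨hall, ⟨p, hp, hp0, hp1⟩, ⟨q, hq, hq0, hq1⟩, Q, hQ, hQF⟩ := newton σ a b ha hb ha0 hb0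
  obtain ⟨α, β, hco, hα, hβ⟩ := Nat.exists_coprime a b
  set k := Nat.gcd a b with hk
  have hk0 : 0 < k := Nat.gcd_pos_of_pos_left _ ha0
  have hα0 : 0 < α := by
    rcases Nat.eq_zero_or_pos α with h | h
    · rw [h] at hα; omega
    · exact h
  have hβ0 : 0 < β := by
    rcases Nat.eq_zero_or_pos β with h | h
    · rw [h] at hβ; omega
    · exact h
  have hc := core (top b a (a * b) (σ (X 0))) Q hQ hQF k α β hk0 hα0 hβ0 hco
    (by
      intro m hm
      rw [coeff_top] at hm
      split_ifs at hm with h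
      swap
      · simp at hm
      have h' : b * m 0 + a * m 1 = a * b := by exact_mod_cast h
      apply Nat.eq_of_mul_eq_mul_left hk0
      calc k * (β * m 0 + α * m 1) = (β * k) * m 0 + (α * k) * m 1 := by ring
        _ = (α * k) * (β * k) := by rw [← hα, ← hβ]; exact h'
        _ = _ := by ring)
    ⟨p, by
      rw [coeff_top, if_pos]
      · exact hp
      · rw [hp0, hp1]; push_cast; ring, by rw [hp0, mul_comm k]; exact hα, hp1⟩
    ⟨q, by
      rw [coeff_top, if_pos]
      · exact hq
      · rw [hq0, hq1]; push_cast; ring, hq0, by rw [hq1, mul_comm k]; exact hβ⟩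
  refine ⟨?_, ?_⟩
  · rcases hc.1 with h | h
    · left
      rw [hα, hβ, h, one_mul]; exact dvd_mul_left _ _
    · right
      rw [hα, hβ, h, one_mul]; exact dvd_mul_left _ _
  · intro hba
    apply hc.2
    have : k = b := Nat.gcd_eq_right hba
    rw [this] at hβ
    exact Nat.eq_of_mul_eq_mul_right hb0 (by rw [one_mul]; exact hβ.symm)

lemma coeff_ev (h : Pl K) (n : ℕ) :
    (aeval ![Polynomial.X, (0 : Polynomial K)] h).coeff n = coeff (Finsupp.single 0 n) h := by
  classical
  rw [aeval_supp, Polynomial.finsetSum_coeff]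
  simp only [Polynomial.algebraMap_eq, Polynomial.coeff_C_mul, Matrix.cons_val_zero,
    Matrix.cons_val_one]
  rw [Finset.sum_eq_single (Finsupp.single 0 n)]
  · simp
  · intro m _ hm
    by_cases h1 : m 1 = 0
    · have h0 : n ≠ m 0 := by
        intro h0
        apply hm
        apply fin2_ext <;> simp [h0, h1]
      simp [h1, Polynomial.coeff_X_pow, h0]
    · simp [h1]
  · intro h; simp only [mem_support_iff, not_not] at h; simp [h]

lemma reduce2 (σ : Pl K ≃ₐ[K] Pl K) (a b : ℕ) (ha : degreeOf 0 (σ (X 0)) = a)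
    (hb : degreeOf 1 (σ (X 0)) = b) (ha0 : 0 < a) (hb0 : 0 < b) (hba : b ∣ a) :
    ∃ q : Polynomial K, degreeOf 0 (phi q (σ (X 0))) < a ∧ degreeOf 1 (phi q (σ (X 0))) ≤ b := by
  classical
  obtain ⟨l, hl⟩ := (reduce1 σ a b ha hb ha0 hb0).2 hba
  obtain ⟨hall, -⟩ := newton σ a b ha hb ha0 hb0
  obtain ⟨α, hα⟩ := hba
  set f := σ (X 0) with hf
  have hall' : ∀ m, coeff m f ≠ 0 → m 0 + α * m 1 ≤ a := by
    intro m hm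
    have := hall m hm
    apply Nat.le_of_mul_le_mul_left _ hb0
    calc b * (m 0 + α * m 1) = b * m 0 + (b * α) * m 1 := by ring
      _ = b * m 0 + a * m 1 := by rw [← hα]
      _ ≤ a * b := this
      _ = b * a := mul_comm _ _
  let q : Polynomial K := Polynomial.C l * Polynomial.X ^ α
  have hα0 : 0 < α := by
    rcases Nat.eq_zero_or_pos α with h | h
    · rw [h] at hα; omega
    · exact h
  let g : Fin 2 → Polynomial (Pl K) := fun i => Polynomial.C (phi q (X i))
  have hg : aeval g f = Polynomial.C (phi q f) := by
    have : aeval g = (Polynomial.CAlgHom (R := K) (A := Pl K)).comp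
        (phi q : Pl K →ₐ[K] Pl K) := by
      apply MvPolynomial.algHom_ext
      intro i; simp [g]
    rw [this]; rfl
  have hX : ∀ i : Fin 2, Lead 1 α 0 (![1, (α : ℤ)] i)
      (Polynomial.C (X i : Pl K)) (Polynomial.C (X i)) := by
    intro i
    refine ⟨?_, by simpa using Wt.zero⟩
    intro k m hm
    rw [Polynomial.coeff_C] at hm
    split_ifs at hm with h
    · rw [coeff_X] at hm
      split_ifs at hm with h'
      · subst h'; fin_cases i <;> simp
      · simp at hm
    · simp at hm
  have h0 : Lead 1 α 0 1 (g 0) (g 0) := by simpa [g] using hX 0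
  have h1 : Lead 1 α 0 α (g 1) (g 1) := by
    refine ⟨?_, by simpa using Wt.zero⟩
    have e : g 1 = Polynomial.C (X 1) + Polynomial.C (C l) * Polynomial.C (X 0) ^ α := by
      simp [g, q, algebraMap_eq]
    rw [e]
    have a1 := (hX 1).1
    have a2 := ((Lead.const 1 (α : ℤ) 0 l).mul ((hX 0).pow α)).1
    refine Wt.add (by simpa using a1) (by simpa using a2)
  have hw : ∀ m, coeff m (phi q f) ≠ 0 → m 0 + α * m 1 ≤ a := by
    have := wt_aeval h0 h1 f (N := a) (by
      intro m hm
      have := hall' m hm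
      zify at this
      linarith)
    intro m hm
    have h2 := this 0 m (by rw [hg]; simpa using hm)
    simp only [Set.mem_Iic] at h2
    push_cast at h2
    zify
    linarith
  have hcz : coeff (Finsupp.single 0 a) (phi q f) = 0 := by
    rw [← coeff_ev]
    have e : aeval ![Polynomial.X, (0 : Polynomial K)] (phi q f) =
        aeval ![Polynomial.X, Polynomial.C l * Polynomial.X ^ α] f := by
      have : (aeval ![Polynomial.X, (0 : Polynomial K)]).comp (phi q : Pl K →ₐ[K] Pl K) =
        aeval ![Polynomial.X, Polynomial.C l * Polynomial.X ^ α] := by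
        apply MvPolynomial.algHom_ext
        intro i
        fin_cases i
        · simp
        · simp [q, ← Polynomial.aeval_algHom_apply]
      rw [← this]; rfl
    rw [e, aeval_supp, Polynomial.finsetSum_coeff, ← hl]
    have hsub : (top b a (a * b) f).support ⊆ f.support := by
      intro m hm
      rw [mem_support_iff, coeff_top] at hm
      split_ifs at hm with h
      · simpa using hm
      · simp at hm
    rw [Finset.sum_subset hsub (by
      intro m _ hm
      simp only [mem_support_iff, not_not] at hm
      rw [hm, zero_mul])]
    apply Finset.sum_congr rfl
    intro m hm
    rw [coeff_top]
    have e2 : (algebraMap K (Polynomial K) (coeff m f) *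
        ((![Polynomial.X, Polynomial.C l * Polynomial.X ^ α] : Fin 2 → Polynomial K) 0 ^ m 0 *
        (![Polynomial.X, Polynomial.C l * Polynomial.X ^ α] : Fin 2 → Polynomial K) 1 ^ m 1)) =
        Polynomial.C (coeff m f * l ^ m 1) * Polynomial.X ^ (m 0 + α * m 1) := by
      simp only [Polynomial.algebraMap_eq, Matrix.cons_val_zero, Matrix.cons_val_one, mul_pow,
        ← pow_mul, Polynomial.C_mul, Polynomial.C_pow, pow_add]
      ring
    rw [e2, Polynomial.coeff_C_mul_X_pow]
    have hiff : a = m 0 + α * m 1 ↔ (b : ℤ) * m 0 + a * m 1 = a * b := by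
      have h3 : (b : ℤ) * m 0 + a * m 1 = a * b ↔ b * (m 0 + α * m 1) = b * a := by
        rw [← Int.natCast_inj, hα]
        push_cast
        constructor
        · intro h; linear_combination h
        · intro h; linear_combination h
      rw [h3]
      constructor
      · intro h; rw [← h]
      · intro h; exact (Nat.eq_of_mul_eq_mul_left hb0 h).symm
    by_cases hc : a = m 0 + α * m 1
    · rw [if_pos hc, if_pos (hiff.1 hc)]
    · rw [if_neg hc, if_neg (fun h => hc (hiff.2 h)), zero_mul]
  refine ⟨q, ?_, ?_⟩
  · rw [degreeOf_lt_iff ha0]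
    intro m hm
    have hm' : coeff m (phi q f) ≠ 0 := by simpa using hm
    have h2 := hw m hm'
    by_contra hcon
    have h3 : m 0 = a := by
      have : m 0 ≤ a := le_trans (Nat.le_add_right _ _) h2
      omega
    have h4 : m 1 = 0 := by
      by_contra h
      have : 0 < α * m 1 := by positivity
      omega
    apply hm'
    rw [← hcz]
    congr 1
    apply fin2_ext <;> simp [h3, h4]
  · rw [degreeOf_le_iff]
    intro m hm
    have h2 := hw m (by simpa using hm)
    apply Nat.le_of_mul_le_mul_left _ hα0
    calc α * m 1 ≤ a := le_trans (Nat.le_add_left _ _) h2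
      _ = α * b := by rw [hα, mul_comm]

lemma chain (τ : Pl K ≃ₐ[K] Pl K) (D : Derivation K (Pl K) (Pl K)) (f : Pl K) :
    D (τ f) = τ (pderiv 0 f) * D (τ (X 0)) + τ (pderiv 1 f) * D (τ (X 1)) := by
  induction f using MvPolynomial.induction_on with
  | C a => simp
  | add p q hp hq => simp only [map_add, hp, hq]; ring
  | mul_X p i hp =>
    rw [map_mul, Derivation.leibniz, Derivation.leibniz, Derivation.leibniz, hp]
    simp only [smul_eq_mul, map_add, map_mul]
    fin_cases i
    · have : pderiv (R := K) (1 : Fin 2) (X 0) = 0 := pderiv_X_of_ne (by decide)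
      simp [this]; ring
    · have : pderiv (R := K) (0 : Fin 2) (X 1) = 0 := pderiv_X_of_ne (by decide)
      simp [this]; ring

lemma jac_mul (τ σ : Pl K ≃ₐ[K] Pl K) : jacP K (τ * σ) = τ (jacP K σ) * jacP K τ := by
  simp only [jacP, AlgEquiv.mul_apply, map_sub, map_mul]
  rw [chain τ (pderiv 0) (σ (X 0)), chain τ (pderiv 1) (σ (X 0)), chain τ (pderiv 0) (σ (X 1)),
    chain τ (pderiv 1) (σ (X 1))]
  ring

lemma pd01 : pderiv (R := K) (0 : Fin 2) (X 1) = 0 := pderiv_X_of_ne (by decide)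
lemma pd10 : pderiv (R := K) (1 : Fin 2) (X 0) = 0 := pderiv_X_of_ne (by decide)

lemma jac_rot : jacP K (rot K) = 1 := by
  simp [jacP, pd01, pd10]

lemma jac_tor (u : Kˣ) : jacP K (tor u) = 1 := by
  simp [jacP, pd01, pd10, ← C_mul]

lemma pd1_aeval (q : Polynomial K) :
    pderiv (R := K) (1 : Fin 2) (Polynomial.aeval (X 0) q) = 0 := by
  induction q using Polynomial.induction_on' with
  | add p q hp hq => simp [hp, hq]
  | monomial n a => simp [Polynomial.aeval_monomial, algebraMap_eq, Derivation.leibniz_pow, pd10]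

lemma jac_phi (q : Polynomial K) : jacP K (phi q) = 1 := by
  simp [jacP, pd01, pd10, pd1_aeval]

lemma jac_mul_one {τ σ : Pl K ≃ₐ[K] Pl K} (h1 : jacP K τ = 1) (h2 : jacP K σ = 1) :
    jacP K (τ * σ) = 1 := by
  rw [jac_mul, h1, h2]; simp

/-- Translation `X ↦ X - c`. -/
def trans (c : K) : Pl K ≃ₐ[K] Pl K :=
  rot K * (phi (Polynomial.C c) * (rot K * (rot K * rot K)))

lemma trans_X0 (c : K) : trans c (X 0) = X 0 - C c := by
  simp [trans, algebraMap_eq]; ring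

lemma trans_X1 (c : K) : trans c (X 1) = X 1 := by
  simp [trans]

lemma jac_trans (c : K) : jacP K (trans c) = 1 := by
  simp [jacP, trans_X0, trans_X1, pd01, pd10]

lemma good_of_trans (c : K) {σ : Pl K ≃ₐ[K] Pl K} (h : Good (trans c * σ)) : Good σ := by
  rw [trans] at h
  simp only [mul_assoc] at h
  exact good_of_rot (good_of_rot (good_of_rot (good_of_phi _ (good_of_rot h))))

lemma good_of_tor (u : Kˣ) {σ : Pl K ≃ₐ[K] Pl K} (h : Good (tor u * σ)) : Good σ := by
  have := good_tor u⁻¹ h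
  rwa [← mul_assoc, tor_mul_tor, inv_mul_cancel, tor_one, one_mul] at this

lemma eq_aeval_of_degreeOf {f : Pl K} (h : degreeOf 1 f = 0) :
    ∃ q : Polynomial K, f = Polynomial.aeval (X 0) q := by
  refine ⟨aeval ![Polynomial.X, 0] f, ?_⟩
  rw [aeval_supp, map_sum]
  conv_lhs => rw [f.as_sum]
  apply Finset.sum_congr rfl
  intro m hm
  have h1 := le_degreeOf (f := f) (m := m) (by simpa using hm) 1
  have h2 : m 1 = 0 := by omega
  have := aeval_mono (K := K) (S := Pl K) X m (coeff m f)
  rw [aeval_X_left_apply] at this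
  rw [this]
  simp [h2, algebraMap_eq]

lemma linear_of (σ : Pl K ≃ₐ[K] Pl K) (h : degreeOf 1 (σ (X 0)) = 0) :
    ∃ (u : Kˣ) (c : K), σ (X 0) = C (u : K) * X 0 + C c := by
  obtain ⟨q, hq⟩ := eq_aeval_of_degreeOf h
  have hp : Prime ((σ * trans (q.coeff 0)) (X 0)) :=
    (MulEquiv.prime_iff (σ * trans (q.coeff 0))).2 (X_prime (R := K) (i := (0 : Fin 2)))
  rw [AlgEquiv.mul_apply, trans_X0, map_sub, equiv_C] at hp
  obtain ⟨r, hr⟩ := Polynomial.X_dvd_sub_C (p := q)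
  have hr' : σ (X 0) - C (q.coeff 0) = X 0 * Polynomial.aeval (X 0) r := by
    have := congrArg (Polynomial.aeval (X 0 : Pl K)) hr
    simpa [algebraMap_eq, ← hq] using this
  have hu : IsUnit (Polynomial.aeval (X 0 : Pl K) r) := by
    rcases hp.irreducible.isUnit_or_isUnit hr' with h | h
    · exact absurd h (X_prime (R := K) (i := (0 : Fin 2))).not_unit
    · exact h
  rw [MvPolynomial.isUnit_iff_eq_C_of_isReduced] at hu
  obtain ⟨u, hu, he⟩ := hu
  refine ⟨hu.unit, q.coeff 0, ?_⟩
  rw [he] at hr'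
  rw [IsUnit.unit_spec, mul_comm, ← hr']; ring

lemma good_of_fix (σ : Pl K ≃ₐ[K] Pl K) (hJ : jacP K σ = 1) (h0 : σ (X 0) = X 0) : Good σ := by
  let ψ : Pl K →+* Polynomial (Polynomial K) :=
    (aeval ![Polynomial.C Polynomial.X, Polynomial.X] :
      Pl K →ₐ[K] Polynomial (Polynomial K)).toRingHom
  let θ : Polynomial (Polynomial K) →+* Pl K :=
    Polynomial.eval₂RingHom (Polynomial.aeval (X 0 : Pl K)).toRingHom (X 1)
  have hψ0 : ψ (X 0) = Polynomial.C Polynomial.X := by simp [ψ]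
  have hψ1 : ψ (X 1) = Polynomial.X := by simp [ψ]
  have hψC : ∀ c, ψ (C c) = Polynomial.C (Polynomial.C c) := by
    intro c; simp [ψ]
  have hθψ : ∀ h, θ (ψ h) = h := by
    have : θ.comp ψ = RingHom.id _ := by
      apply MvPolynomial.ringHom_ext
      · intro c; simp [hψC, θ, algebraMap_eq]
      · intro i; fin_cases i <;> simp [hψ0, hψ1, θ]
    intro h; exact DFunLike.congr_fun this h
  have hcomp : ∀ h, ψ (σ h) = (ψ h).comp (ψ (σ (X 1))) := by
    have : ψ.comp (σ : Pl K →+* Pl K) = (Polynomial.compRingHom (ψ (σ (X 1)))).comp ψ := by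
      apply MvPolynomial.ringHom_ext
      · intro c; simp [hψC]
      · intro i; fin_cases i <;> simp [hψ0, hψ1, h0]
    intro h; exact DFunLike.congr_fun this h
  have h1 := hcomp (σ.symm (X 1))
  rw [AlgEquiv.apply_symm_apply, hψ1] at h1
  set A := ψ (σ.symm (X 1))
  set B := ψ (σ (X 1)) with hB
  have hd := congrArg Polynomial.natDegree h1
  rw [Polynomial.natDegree_X, Polynomial.natDegree_comp] at hd
  have hdB : B.natDegree = 1 := Nat.eq_one_of_mul_eq_one_left hd.symm
  have hlc := congrArg Polynomial.leadingCoeff h1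
  rw [Polynomial.leadingCoeff_X, Polynomial.leadingCoeff_comp (by omega)] at hlc
  have hdA : A.natDegree = 1 := Nat.eq_one_of_mul_eq_one_right hd.symm
  rw [hdA, pow_one] at hlc
  have hu : IsUnit B.leadingCoeff := IsUnit.of_mul_eq_one_right _ hlc.symm
  obtain ⟨c, hc, hcB⟩ := Polynomial.isUnit_iff.1 hu
  have hBe := Polynomial.eq_X_add_C_of_natDegree_le_one hdB.le
  rw [Polynomial.leadingCoeff, hdB] at hcB
  rw [← hcB] at hBe
  have hg : σ (X 1) = C c * X 1 + Polynomial.aeval (X 0) (B.coeff 0) := by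
    rw [← hθψ (σ (X 1)), ← hB, hBe]
    simp [θ, algebraMap_eq]
  have hc1 : c = 1 := by
    rw [jacP, h0, hg] at hJ
    simp only [map_add, pderiv_X_self, pd10, pd1_aeval, pderiv_C_mul] at hJ
    have : (C c : Pl K) = C 1 := by simpa [smul_eq_C_mul] using hJ
    exact C_injective _ _ this
  have : σ = phi (B.coeff 0) := by
    apply algEquiv_ext
    · simp [h0]
    · rw [hg, hc1]; simp
  rw [this]
  simpa using good_phi (B.coeff 0) good_one

lemma good_base (σ : Pl K ≃ₐ[K] Pl K) (hJ : jacP K σ = 1) (h : degreeOf 1 (σ (X 0)) = 0) :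
    Good σ := by
  obtain ⟨u, c, hu⟩ := linear_of σ h
  apply good_of_trans (c / u)
  apply good_of_tor u⁻¹
  apply good_of_fix
  · exact jac_mul_one (jac_tor _) (jac_mul_one (jac_trans _) hJ)
  · rw [AlgEquiv.mul_apply, AlgEquiv.mul_apply, hu]
    simp only [map_add, map_mul, equiv_C, trans_X0, map_sub, tor_X0]
    rw [mul_sub, ← mul_assoc, ← C_mul, ← C_mul, mul_div_cancel₀ _ u.ne_zero]
    simp

lemma degreeOf_rot_le (f : Pl K) :
    degreeOf 0 (rot K f) ≤ degreeOf 1 f ∧ degreeOf 1 (rot K f) ≤ degreeOf 0 f := by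
  classical
  have e : rot K f = aeval ![X 1, - X 0] f := by
    have : (rot K : Pl K →ₐ[K] Pl K) = aeval ![X 1, - X 0] := by
      apply MvPolynomial.algHom_ext
      intro i; fin_cases i <;> simp
    exact DFunLike.congr_fun this f
  have d00 : degreeOf 0 (- X 0 : Pl K) ≤ 1 := by rw [degreeOf_neg, degreeOf_X]; simp
  have d01 : degreeOf 0 (X 1 : Pl K) = 0 := by rw [degreeOf_X]; simp
  have d10 : degreeOf 1 (- X 0 : Pl K) = 0 := by rw [degreeOf_neg, degreeOf_X]; simp
  have d11 : degreeOf 1 (X 1 : Pl K) ≤ 1 := by rw [degreeOf_X]; simp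
  rw [e, aeval_supp]
  constructor
  · refine (degreeOf_sum_le _ _ _).trans (Finset.sup_le fun m hm => ?_)
    have hm1 := le_degreeOf (f := f) (m := m) (by simpa using hm) 1
    refine (degreeOf_C_mul_le _ _ _).trans ((degreeOf_mul_le _ _ _).trans ?_)
    have a1 := degreeOf_pow_le (0 : Fin 2) (X 1 : Pl K) (m 0)
    have a2 := degreeOf_pow_le (0 : Fin 2) (- X 0 : Pl K) (m 1)
    rw [d01] at a1
    simp only [Matrix.cons_val_zero, Matrix.cons_val_one]
    nlinarith
  · refine (degreeOf_sum_le _ _ _).trans (Finset.sup_le fun m hm => ?_)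
    have hm1 := le_degreeOf (f := f) (m := m) (by simpa using hm) 0
    refine (degreeOf_C_mul_le _ _ _).trans ((degreeOf_mul_le _ _ _).trans ?_)
    have a1 := degreeOf_pow_le (1 : Fin 2) (X 1 : Pl K) (m 0)
    have a2 := degreeOf_pow_le (1 : Fin 2) (- X 0 : Pl K) (m 1)
    rw [d10] at a2
    simp only [Matrix.cons_val_zero, Matrix.cons_val_one]
    nlinarith

lemma degreeOf_rot (f : Pl K) :
    degreeOf 0 (rot K f) = degreeOf 1 f ∧ degreeOf 1 (rot K f) = degreeOf 0 f := by
  have h4 : rot K (rot K (rot K (rot K f))) = f := by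
    have : rot K * (rot K * (rot K * rot K)) = 1 := by
      apply algEquiv_ext <;> simp
    exact DFunLike.congr_fun this f
  have h1 := degreeOf_rot_le f
  have h2 := degreeOf_rot_le (rot K f)
  have h3 := degreeOf_rot_le (rot K (rot K f))
  have h5 := degreeOf_rot_le (rot K (rot K (rot K f)))
  rw [h4] at h5
  omega

lemma good_all (n : ℕ) : ∀ σ : Pl K ≃ₐ[K] Pl K, jacP K σ = 1 →
    degreeOf 0 (σ (X 0)) + degreeOf 1 (σ (X 0)) ≤ n → Good σ := by
  induction n with
  | zero =>
    intro σ hJ hn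
    exact good_base σ hJ (by omega)
  | succ n ih =>
    have main : ∀ σ : Pl K ≃ₐ[K] Pl K, jacP K σ = 1 → 0 < degreeOf 0 (σ (X 0)) →
        0 < degreeOf 1 (σ (X 0)) → degreeOf 1 (σ (X 0)) ∣ degreeOf 0 (σ (X 0)) →
        degreeOf 0 (σ (X 0)) + degreeOf 1 (σ (X 0)) ≤ n + 1 → Good σ := by
      intro σ hJ h0 h1 hd hn
      obtain ⟨q, hq0, hq1⟩ := reduce2 σ _ _ rfl rfl h0 h1 hd
      apply good_of_phi q
      apply ih _ (jac_mul_one (jac_phi q) hJ)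
      rw [AlgEquiv.mul_apply]
      omega
    intro σ hJ hn
    have hr := degreeOf_rot (σ (X 0))
    have hJr : jacP K (rot K * σ) = 1 := jac_mul_one jac_rot hJ
    by_cases h1 : degreeOf 1 (σ (X 0)) = 0
    · exact good_base σ hJ h1
    by_cases h0 : degreeOf 0 (σ (X 0)) = 0
    · apply good_of_rot
      apply good_base _ hJr
      rw [AlgEquiv.mul_apply, hr.2, h0]
    rcases (reduce1 σ _ _ rfl rfl (Nat.pos_of_ne_zero h0) (Nat.pos_of_ne_zero h1)).1 with h | h
    · apply good_of_rot
      apply main _ hJr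
      all_goals simp only [AlgEquiv.mul_apply, hr.1, hr.2]
      all_goals first | exact h | omega
    · exact main σ hJ (by omega) (by omega) h hn

end JVK

theorem statement14 (p : ℕ) (hp : p.Prime) (K : Type*) [Field K] [CharP K p]
    (σ : MvPolynomial (Fin 2) K ≃ₐ[K] MvPolynomial (Fin 2) K)
    (hσ : jacP K σ = 1) :
    ∃ n : ℕ, 1 ≤ n ∧ ∃ ν : K, ν ≠ 0 ∧
    ∃ t : MvPolynomial (Fin 2) K ≃ₐ[K] MvPolynomial (Fin 2) K,
    ∃ fs : ℕ → Polynomial K,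
    ∃ w : ℕ → MvPolynomial (Fin 2) K ≃ₐ[K] MvPolynomial (Fin 2) K,
      (t (MvPolynomial.X 0) = MvPolynomial.C ν * MvPolynomial.X 0 ∧
        t (MvPolynomial.X 1) = MvPolynomial.C ν⁻¹ * MvPolynomial.X 1) ∧
      (∀ k : ℕ, k < n →
        w (2 * k) (MvPolynomial.X 0) = MvPolynomial.X 0 ∧
        w (2 * k) (MvPolynomial.X 1)
          = MvPolynomial.X 1 + Polynomial.aeval (MvPolynomial.X 0) (fs k)) ∧
      (∀ k : ℕ, k < n - 1 →
        w (2 * k + 1) (MvPolynomial.X 0) = MvPolynomial.X 1 ∧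
        w (2 * k + 1) (MvPolynomial.X 1) = - MvPolynomial.X 0) ∧
      σ = t * ((List.range (2 * n - 1)).map w).prod := by
  obtain ⟨u, w, hw, hσ'⟩ := JVK.good_all _ σ hσ le_rfl
  obtain ⟨n, hn, fs, W, h0, h1, hw'⟩ := JVK.word_list hw
  refine ⟨n, hn, u, u.ne_zero, JVK.tor u, fs, W, ⟨JVK.tor_X0 u, JVK.tor_X1 u⟩,
    fun k _ => ?_, fun k _ => ?_, ?_⟩
  · rw [h0]; exact ⟨JVK.phi_X0 _, JVK.phi_X1 _⟩
  · rw [h1]; exact ⟨JVK.rot_X0, JVK.rot_X1⟩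
  · rw [hσ', hw']
end
end

section
/- Let K be a field. For all σ, τ ∈ Aut_K(K[X, Y]) one has J(στ) = J(σ) · σ(J(τ)); the Jacobian J(σ) of any automorphism σ is a nonzero element of K (a unit); the induced map J : Aut_K(K[X, Y]) → K^* is a group homomorphism with kernel Γ = {σ : J(σ) = 1}; and every automorphism σ ∈ Aut_K(K[X, Y]) factors uniquely as σ = γ_μ ∘ τ with μ ∈ K^* and τ ∈ Γ, so that Aut_K(K[X, Y]) is the semidirect product K^* ⋉ Γ. -/
/-!
STATEMENT 15: Let `K` be a field.  For all `σ, τ ∈ Aut_K(K[X, Y])`: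
`J(στ) = J(σ)·σ(J(τ))`; `J(σ)` is a nonzero constant (a unit of `K`); `J` is a group
homomorphism into `K^*` (so its kernel is `Γ = {σ : J(σ) = 1}`); and every `σ` factors
uniquely as `σ = γ_μ ∘ τ` with `μ ∈ K^*` and `τ ∈ Γ`, i.e.
`Aut_K(K[X, Y]) = K^* ⋉ Γ`.

Here `K[X, Y] = MvPolynomial (Fin 2) K`, multiplication of automorphisms is composition
(`(σ * τ)(f) = σ(τ(f))`), and `γ_μ : X ↦ μX, Y ↦ Y`.
-/

noncomputable section

theorem pderiv_aut {K : Type*} [Field K]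
    (σ : MvPolynomial (Fin 2) K ≃ₐ[K] MvPolynomial (Fin 2) K) (i : Fin 2)
    (f : MvPolynomial (Fin 2) K) :
    MvPolynomial.pderiv i (σ f) =
      σ (MvPolynomial.pderiv 0 f) * MvPolynomial.pderiv i (σ (MvPolynomial.X 0)) +
      σ (MvPolynomial.pderiv 1 f) * MvPolynomial.pderiv i (σ (MvPolynomial.X 1)) := by
  induction f using MvPolynomial.induction_on with
  | C a =>
    have h : σ (MvPolynomial.C a) = MvPolynomial.C a := σ.commutes a
    simp [h]
  | add p q hp hq =>
    simp only [map_add, hp, hq]; ring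
  | mul_X p n hp =>
    rw [map_mul, Derivation.leibniz, hp]
    simp only [Derivation.leibniz, smul_eq_mul, map_add, map_mul]
    fin_cases n
    · simp [MvPolynomial.pderiv_X]; ring
    · simp [MvPolynomial.pderiv_X]; ring

theorem jacP_mul {K : Type*} [Field K]
    (σ τ : MvPolynomial (Fin 2) K ≃ₐ[K] MvPolynomial (Fin 2) K) :
    jacP K (σ * τ) = jacP K σ * σ (jacP K τ) := by
  simp only [jacP, AlgEquiv.mul_apply, pderiv_aut σ _ (τ _), map_sub, map_mul]
  ring

theorem jacP_one {K : Type*} [Field K] :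
    jacP K (1 : MvPolynomial (Fin 2) K ≃ₐ[K] MvPolynomial (Fin 2) K) = 1 := by
  simp [jacP, MvPolynomial.pderiv_X]

theorem jacP_const {K : Type*} [Field K]
    (σ : MvPolynomial (Fin 2) K ≃ₐ[K] MvPolynomial (Fin 2) K) :
    ∃ c : K, c ≠ 0 ∧ jacP K σ = MvPolynomial.C c := by
  have h : IsUnit (jacP K σ) := by
    refine IsUnit.of_mul_eq_one (σ (jacP K σ⁻¹)) ?_
    rw [← jacP_mul, mul_inv_cancel, jacP_one]
  obtain ⟨r, hr, h⟩ := MvPolynomial.isUnit_iff_eq_C_of_isReduced.1 h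
  exact ⟨r, hr.ne_zero, h⟩

/-- The automorphism `X ↦ μX, Y ↦ Y`. -/
def gam {K : Type*} [Field K] (μ : K) (h : μ ≠ 0) :
    MvPolynomial (Fin 2) K ≃ₐ[K] MvPolynomial (Fin 2) K :=
  AlgEquiv.ofAlgHom
    (MvPolynomial.aeval ![MvPolynomial.C μ * MvPolynomial.X 0, MvPolynomial.X 1])
    (MvPolynomial.aeval ![MvPolynomial.C μ⁻¹ * MvPolynomial.X 0, MvPolynomial.X 1])
    (by
      ext1 i
      fin_cases i
      · simp [MvPolynomial.algHom_C, ← mul_assoc, ← MvPolynomial.C_mul, h]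
      · simp)
    (by
      ext1 i
      fin_cases i
      · simp [MvPolynomial.algHom_C, ← mul_assoc, ← MvPolynomial.C_mul, h]
      · simp)

theorem jacP_gam {K : Type*} [Field K]
    (g : MvPolynomial (Fin 2) K ≃ₐ[K] MvPolynomial (Fin 2) K) (μ : K)
    (h0 : g (MvPolynomial.X 0) = MvPolynomial.C μ * MvPolynomial.X 0)
    (h1 : g (MvPolynomial.X 1) = MvPolynomial.X 1) : jacP K g = MvPolynomial.C μ := by
  simp [jacP, h0, h1, MvPolynomial.pderiv_X]

theorem aut_C {K : Type*} [Field K]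
    (g : MvPolynomial (Fin 2) K ≃ₐ[K] MvPolynomial (Fin 2) K) (μ : K) :
    g (MvPolynomial.C μ) = MvPolynomial.C μ := g.commutes μ

theorem statement15 (K : Type*) [Field K] :
    (∀ σ τ : MvPolynomial (Fin 2) K ≃ₐ[K] MvPolynomial (Fin 2) K,
      jacP K (σ * τ) = jacP K σ * σ (jacP K τ)) ∧
    (∀ σ : MvPolynomial (Fin 2) K ≃ₐ[K] MvPolynomial (Fin 2) K,
      ∃ c : K, c ≠ 0 ∧ jacP K σ = MvPolynomial.C c) ∧
    (∀ (σ τ : MvPolynomial (Fin 2) K ≃ₐ[K] MvPolynomial (Fin 2) K) (c d : K),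
      jacP K σ = MvPolynomial.C c → jacP K τ = MvPolynomial.C d →
      jacP K (σ * τ) = MvPolynomial.C (c * d)) ∧
    (∀ σ : MvPolynomial (Fin 2) K ≃ₐ[K] MvPolynomial (Fin 2) K,
      ∃! gt : (MvPolynomial (Fin 2) K ≃ₐ[K] MvPolynomial (Fin 2) K) ×
          (MvPolynomial (Fin 2) K ≃ₐ[K] MvPolynomial (Fin 2) K),
        (∃ μ : K, μ ≠ 0 ∧ gt.1 (MvPolynomial.X 0) = MvPolynomial.C μ * MvPolynomial.X 0 ∧
          gt.1 (MvPolynomial.X 1) = MvPolynomial.X 1) ∧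
        jacP K gt.2 = 1 ∧ σ = gt.1 * gt.2) := by
  refine ⟨jacP_mul, jacP_const, ?_, ?_⟩
  · intro σ τ c d hc hd
    rw [jacP_mul, hc, hd, aut_C, MvPolynomial.C_mul]
  · intro σ
    obtain ⟨c, hc, hσ⟩ := jacP_const σ
    have g0 : gam c hc (MvPolynomial.X 0) = MvPolynomial.C c * MvPolynomial.X 0 := by
      simp [gam]
    have g1 : gam c hc (MvPolynomial.X 1) = MvPolynomial.X 1 := by
      simp [gam]
    refine ⟨(gam c hc, (gam c hc)⁻¹ * σ), ⟨⟨c, hc, g0, g1⟩, ?_, ?_⟩, ?_⟩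
    · have h : jacP K σ = jacP K (gam c hc) * gam c hc (jacP K ((gam c hc)⁻¹ * σ)) := by
        rw [← jacP_mul, mul_inv_cancel_left]
      rw [hσ, jacP_gam _ c g0 g1] at h
      have hC : (MvPolynomial.C c : MvPolynomial (Fin 2) K) ≠ 0 := by simpa using hc
      have h2 := (mul_eq_left₀ hC).1 h.symm
      exact (map_eq_one_iff _ (gam c hc).injective).1 h2
    · exact (mul_inv_cancel_left _ _).symm
    · rintro ⟨g, t⟩ ⟨⟨μ, hμ, h0, h1⟩, ht, hs⟩
      dsimp only at h0 h1 ht hs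
      have h : jacP K σ = MvPolynomial.C μ := by
        rw [hs, jacP_mul, ht, map_one, mul_one, jacP_gam g μ h0 h1]
      have hcm : c = μ := MvPolynomial.C_injective _ _ (hσ.symm.trans h)
      subst hcm
      have hg : g = gam c hc := by
        apply AlgEquiv.coe_algHom_injective
        apply MvPolynomial.algHom_ext
        intro i
        fin_cases i
        · exact h0.trans g0.symm
        · exact h1.trans g1.symm
      subst hg
      rw [hs, inv_mul_cancel_left]
end
end

section
/- Let K be a perfect field of characteristic p > 0. The group Aut_K(A_1) of K-algebra automorphisms of the first Weyl algebra A_1 is generated by the subgroup Aff(A_1) of affine automorphisms together with the automorphisms φ_{λx^i} : x ↦ x, ∂ ↦ ∂ + λx^i for λ ∈ K^* and i = 2, 3, …. -/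
/-!
STATEMENT 16: Let `K` be a perfect field of characteristic `p > 0`.  The group
`Aut_K(A₁)` is generated by the subgroup `Aff(A₁)` of affine automorphisms (those of
degree `1`) together with the automorphisms `φ_{λx^i} : x ↦ x, ∂ ↦ ∂ + λx^i` for
`λ ∈ K^*`, `i = 2, 3, …`.
-/

noncomputable section

/-- The defining relation of the first Weyl algebra: `∂·x = x·∂ + 1`. -/
inductive WeylRel (K : Type*) [CommRing K] :
    FreeAlgebra K (Fin 2) → FreeAlgebra K (Fin 2) → Prop
  | rel : WeylRel K (FreeAlgebra.ι K 1 * FreeAlgebra.ι K 0)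
      (FreeAlgebra.ι K 0 * FreeAlgebra.ι K 1 + 1)

/-- The first Weyl algebra `A₁(K) = K⟨x, ∂ | ∂x − x∂ = 1⟩`. -/
abbrev Weyl (K : Type*) [CommRing K] := RingQuot (WeylRel K)

/-- The generator `x` of the first Weyl algebra. -/
def wX (K : Type*) [CommRing K] : Weyl K :=
  RingQuot.mkAlgHom K (WeylRel K) (FreeAlgebra.ι K 0)

/-- The generator `∂` of the first Weyl algebra. -/
def wD (K : Type*) [CommRing K] : Weyl K :=
  RingQuot.mkAlgHom K (WeylRel K) (FreeAlgebra.ι K 1)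

/-- The degree of an element of `A₁` in the basis `{x^i ∂^j}`: the least `n` such that the
element lies in the `K`-span of `{x^i ∂^j : i + j ≤ n}`. -/
def wdeg (K : Type*) [CommRing K] (a : Weyl K) : ℕ :=
  sInf {n : ℕ | a ∈ Submodule.span K {w : Weyl K | ∃ i j : ℕ, i + j ≤ n ∧ w = wX K ^ i * wD K ^ j}}

/-! ### Basic facts -/

section basic
variable {K : Type*} [Field K]

lemma wD_mul_wX : wD K * wX K = wX K * wD K + 1 := by
  have := RingQuot.mkAlgHom_rel K (WeylRel.rel (K := K))
  simpa [wD, wX] using this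

/-- universal property -/
def wLift {B : Type*} [Semiring B] [Algebra K B] (a b : B) (h : b * a = a * b + 1) :
    Weyl K →ₐ[K] B :=
  RingQuot.liftAlgHom K ⟨FreeAlgebra.lift K ![a, b], by
    rintro _ _ ⟨⟩
    simpa using h⟩

@[simp] lemma wLift_X {B : Type*} [Semiring B] [Algebra K B] (a b : B) (h : b * a = a * b + 1) :
    wLift (K := K) a b h (wX K) = a := by
  simp [wLift, wX]

@[simp] lemma wLift_D {B : Type*} [Semiring B] [Algebra K B] (a b : B) (h : b * a = a * b + 1) :
    wLift (K := K) a b h (wD K) = b := by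
  simp [wLift, wD]

lemma w_hom_ext {B : Type*} [Semiring B] [Algebra K B] {f g : Weyl K →ₐ[K] B}
    (hx : f (wX K) = g (wX K)) (hy : f (wD K) = g (wD K)) : f = g := by
  apply RingQuot.ringQuot_ext'
  apply FreeAlgebra.hom_ext
  funext i
  fin_cases i
  · simpa [wX] using hx
  · simpa [wD] using hy

lemma w_induction {C : Weyl K → Prop} (hs : ∀ r : K, C (algebraMap K _ r))
    (hx : C (wX K)) (hy : C (wD K)) (hm : ∀ a b, C a → C b → C (a * b))
    (ha : ∀ a b, C a → C b → C (a + b)) (a : Weyl K) : C a := by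
  obtain ⟨a, rfl⟩ := RingQuot.mkAlgHom_surjective K (WeylRel K) a
  induction a using FreeAlgebra.induction with
  | grade0 r => simpa using hs r
  | grade1 i => fin_cases i
                · exact hx
                · exact hy
  | mul a b h1 h2 => rw [map_mul]; exact hm _ _ h1 h2
  | add a b h1 h2 => rw [map_add]; exact ha _ _ h1 h2

/-! ### The ring `B = A₁[T]` and its action on polynomials in `T, x, y` -/

/-- symbols: variable `0` is `T`, `1` is `x`, `2` is `y` -/
abbrev Sy (K : Type*) [Field K] := MvPolynomial (Fin 3) K

abbrev BW (K : Type*) [Field K] := Polynomial (Weyl K)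

def mulOp (f : Sy K) : Module.End K (Sy K) := LinearMap.mulLeft K f

@[simp] lemma mulOp_apply (f g : Sy K) : mulOp f g = f * g := rfl

def dOp : Module.End K (Sy K) :=
  mulOp (MvPolynomial.X 2) + (MvPolynomial.pderiv (R := K) (1 : Fin 3)).toLinearMap

@[simp] lemma dOp_apply (g : Sy K) :
    dOp g = MvPolynomial.X 2 * g + MvPolynomial.pderiv (1 : Fin 3) g := rfl

def rhoA : Weyl K →ₐ[K] Module.End K (Sy K) :=
  wLift (mulOp (MvPolynomial.X 1)) dOp (by
    apply LinearMap.ext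
    intro g
    simp
    ring)

lemma rhoA_comm (a : Weyl K) : Commute (rhoA a) (mulOp (MvPolynomial.X 0)) := by
  induction a using w_induction with
  | hs r => rw [AlgHom.commutes]; exact Algebra.commutes r _
  | hx => apply LinearMap.ext; intro g; simp [rhoA]; ring
  | hy => apply LinearMap.ext; intro g; simp [rhoA]; ring
  | hm a b h1 h2 => rw [map_mul]; exact h1.mul_left h2
  | ha a b h1 h2 => rw [map_add]; exact h1.add_left h2

def rho : BW K →ₐ[K] Module.End K (Sy K) :=
  Polynomial.eval₂AlgHom rhoA (mulOp (MvPolynomial.X 0)) rhoA_comm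

def bX (K : Type*) [Field K] : BW K := Polynomial.C (wX K)
def bD (K : Type*) [Field K] : BW K := Polynomial.C (wD K)
def bT (K : Type*) [Field K] : BW K := Polynomial.X

@[simp] lemma rho_X (f : Sy K) : rho (bX K) f = MvPolynomial.X 1 * f := by
  simp [rho, bX, rhoA]
@[simp] lemma rho_D (f : Sy K) :
    rho (bD K) f = MvPolynomial.X 2 * f + MvPolynomial.pderiv (1 : Fin 3) f := by
  simp [rho, bD, rhoA]
@[simp] lemma rho_T (f : Sy K) : rho (bT K) f = MvPolynomial.X 0 * f := by
  simp [rho, bT]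

lemma b_induction {C : BW K → Prop} (hs : ∀ r : K, C (algebraMap K _ r))
    (hx : C (bX K)) (hy : C (bD K)) (ht : C (bT K)) (hm : ∀ a b, C a → C b → C (a * b))
    (ha : ∀ a b, C a → C b → C (a + b)) (a : BW K) : C a := by
  have h1 : ∀ a : Weyl K, C (Polynomial.C a) := by
    intro a
    induction a using w_induction with
    | hs r => exact hs r
    | hx => exact hx
    | hy => exact hy
    | hm a b h1 h2 => rw [map_mul]; exact hm _ _ h1 h2
    | ha a b h1 h2 => rw [map_add]; exact ha _ _ h1 h2
  induction a using Polynomial.induction_on with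
  | C a => exact h1 a
  | add p q h1 h2 => exact ha _ _ h1 h2
  | monomial n a h =>
    rw [pow_succ, ← mul_assoc]
    exact hm _ _ h ht

def symb : BW K →ₗ[K] Sy K where
  toFun b := rho b 1
  map_add' := by simp
  map_smul' := by simp

lemma symb_def (b : BW K) : symb b = rho b 1 := rfl
lemma symb_mul (a b : BW K) : symb (a * b) = rho a (symb b) := by
  simp [symb_def]

def mono (n : Fin 3 →₀ ℕ) : BW K := bX K ^ n 1 * bD K ^ n 2 * bT K ^ n 0

def ev : Sy K →ₗ[K] BW K := (MvPolynomial.basisMonomials (Fin 3) K).constr K mono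

@[simp] lemma ev_monomial (n : Fin 3 →₀ ℕ) (a : K) : ev (MvPolynomial.monomial n a) = a • mono n := by
  have : MvPolynomial.monomial n a = a • MvPolynomial.basisMonomials (Fin 3) K n := by
    simp [MvPolynomial.smul_monomial]
  rw [this, map_smul, ev, Module.Basis.constr_basis]

lemma bD_mul_bX : bD K * bX K = bX K * bD K + 1 := by
  simp only [bD, bX, ← Polynomial.C_mul, wD_mul_wX]; simp

lemma bT_comm (b : BW K) : bT K * b = b * bT K := Polynomial.X_mul

lemma bD_mul_pow (i : ℕ) : bD K * bX K ^ i = bX K ^ i * bD K + (i : K) • bX K ^ (i - 1) := by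
  induction i with
  | zero => simp
  | succ i ih =>
    rw [pow_succ, ← mul_assoc, ih, add_mul, mul_assoc, bD_mul_bX]
    rcases i with _ | i
    · simp
    · simp only [Nat.add_sub_cancel, smul_mul_assoc, ← pow_succ]
      rw [mul_add, ← mul_assoc, mul_one, add_assoc]
      congr 1
      push_cast
      module

lemma ev_X0 (f : Sy K) : ev (MvPolynomial.X 0 * f) = bT K * ev f := by
  induction f using MvPolynomial.induction_on' with
  | monomial n a =>
    rw [MvPolynomial.X, MvPolynomial.monomial_mul]
    simp only [ev_monomial, mono, one_mul, mul_smul_comm]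
    rw [bT_comm]
    simp only [Finsupp.add_apply, Finsupp.single_apply]
    simp [pow_add, mul_assoc]
    rw [bT_comm (bT K ^ n 0)]
  | add p q h1 h2 => rw [mul_add, map_add, map_add, h1, h2, mul_add]

lemma ev_X1 (f : Sy K) : ev (MvPolynomial.X 1 * f) = bX K * ev f := by
  induction f using MvPolynomial.induction_on' with
  | monomial n a =>
    rw [MvPolynomial.X, MvPolynomial.monomial_mul]
    simp only [ev_monomial, mono, one_mul, mul_smul_comm]
    simp only [Finsupp.add_apply, Finsupp.single_apply]
    simp [pow_add, mul_assoc]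
  | add p q h1 h2 => rw [mul_add, map_add, map_add, h1, h2, mul_add]

lemma ev_X2 (f : Sy K) : ev (MvPolynomial.X 2 * f + MvPolynomial.pderiv (1 : Fin 3) f)
    = bD K * ev f := by
  induction f using MvPolynomial.induction_on' with
  | monomial n a =>
    rw [MvPolynomial.X, MvPolynomial.monomial_mul, MvPolynomial.pderiv_monomial, map_add]
    simp only [ev_monomial, mono, one_mul, mul_smul_comm]
    rw [← mul_assoc (bD K), ← mul_assoc (bD K), bD_mul_pow, mul_smul, ← smul_add]
    simp only [Finsupp.add_apply, Finsupp.single_apply, Finsupp.tsub_apply]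
    simp [pow_add, mul_assoc, add_mul]
  | add p q h1 h2 =>
    rw [map_add ev p q, mul_add (bD K), ← h1, ← h2, ← map_add ev, map_add (MvPolynomial.pderiv 1)]
    congr 1
    ring

lemma ev_rho (b : BW K) : ∀ f, ev (rho b f) = b * ev f := by
  induction b using b_induction with
  | hs r => intro f; rw [AlgHom.commutes, Module.algebraMap_end_apply, map_smul, Algebra.smul_def]
  | hx => intro f; rw [rho_X, ev_X1]
  | hy => intro f; rw [rho_D, ev_X2]
  | ht => intro f; rw [rho_T, ev_X0]
  | hm a b h1 h2 => intro f; rw [map_mul, Module.End.mul_apply, h1, h2, mul_assoc]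
  | ha a b h1 h2 => intro f; rw [map_add, LinearMap.add_apply, map_add, h1, h2, add_mul]

lemma ev_symb (b : BW K) : ev (symb b) = b := by
  rw [symb_def, ev_rho]
  have : (1 : Sy K) = MvPolynomial.monomial 0 1 := rfl
  rw [this, ev_monomial]; simp [mono]

lemma symb_mono (n : Fin 3 →₀ ℕ) : symb (mono n : BW K) = MvPolynomial.monomial n 1 := by
  have hT : ∀ k (f : Sy K), rho (bT K ^ k) f = MvPolynomial.X 0 ^ k * f := by
    intro k f
    induction k with
    | zero => simp
    | succ k ih => rw [pow_succ', map_mul, Module.End.mul_apply, ih, rho_T]; ring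
  have hX : ∀ k (f : Sy K), rho (bX K ^ k) f = MvPolynomial.X 1 ^ k * f := by
    intro k f
    induction k with
    | zero => simp
    | succ k ih => rw [pow_succ', map_mul, Module.End.mul_apply, ih, rho_X]; ring
  have hD : ∀ k l, rho (bD K ^ k) (MvPolynomial.X 0 ^ l : Sy K) =
      MvPolynomial.X 2 ^ k * MvPolynomial.X 0 ^ l := by
    intro k l
    induction k with
    | zero => simp
    | succ k ih =>
      rw [pow_succ', map_mul, Module.End.mul_apply, ih, rho_D]
      simp
      ring
  rw [symb_def, mono, map_mul, map_mul, Module.End.mul_apply, Module.End.mul_apply, hT, mul_one,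
    hD, hX, MvPolynomial.monomial_eq, Finsupp.prod_fintype _ _ (by simp), Fin.prod_univ_three]
  simp
  ring

lemma symb_ev (f : Sy K) : symb (ev f) = f := by
  induction f using MvPolynomial.induction_on' with
  | monomial n a => simp [symb_mono, MvPolynomial.smul_monomial]
  | add p q h1 h2 => rw [map_add, map_add, h1, h2]

lemma symb_inj {a b : BW K} (h : symb a = symb b) : a = b := by
  rw [← ev_symb a, h, ev_symb]

end basic

/-! ### Filtrations and leading forms -/

section filt
variable {K : Type*} [Field K]
open MvPolynomial

def Fil (w : Fin 3 → ℤ) (m : ℤ) : Submodule K (Sy K) :=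
  restrictSupport K {n | Finsupp.weight w n ≤ m}

lemma mem_Fil {w : Fin 3 → ℤ} {m : ℤ} {f : Sy K} :
    f ∈ Fil w m ↔ ∀ n, coeff n f ≠ 0 → Finsupp.weight w n ≤ m := by
  rw [Fil, mem_restrictSupport_iff]
  constructor
  · intro h n hn
    exact h (by simpa using hn)
  · intro h n hn
    exact h n (by simpa using hn)

lemma Fil_mono {w : Fin 3 → ℤ} {m m' : ℤ} (h : m ≤ m') {f : Sy K} (hf : f ∈ Fil w m) :
    f ∈ Fil w m' := by
  rw [mem_Fil] at *
  intro n hn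
  exact (hf n hn).trans h

lemma Fil_mul {w : Fin 3 → ℤ} {m m' : ℤ} {f g : Sy K} (hf : f ∈ Fil w m) (hg : g ∈ Fil w m') :
    f * g ∈ Fil w (m + m') := by
  have := Submodule.mul_mem_mul hf hg
  rw [Fil, Fil, ← restrictSupport_add] at this
  refine restrictSupport_mono K ?_ this
  rintro _ ⟨a, ha, b, hb, rfl⟩
  simp only [Set.mem_ofPred_eq, map_add] at *
  omega

lemma Fil_hom {w : Fin 3 → ℤ} {m : ℤ} {f : Sy K} (hf : IsWeightedHomogeneous w f m) :
    f ∈ Fil w m := by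
  rw [mem_Fil]
  intro n hn
  exact (hf hn).le

lemma Fil_X {w : Fin 3 → ℤ} (i : Fin 3) : (X i : Sy K) ∈ Fil w (w i) :=
  Fil_hom (isWeightedHomogeneous_X K w i)

lemma Fil_pderiv {w : Fin 3 → ℤ} {m : ℤ} {f : Sy K} (hf : f ∈ Fil w m) (i : Fin 3) :
    pderiv i f ∈ Fil w (m - w i) := by
  rw [mem_Fil] at *
  intro n hn
  rw [coeff_pderiv] at hn
  have := hf _ (left_ne_zero_of_mul hn)
  rw [map_add, Finsupp.weight_single] at this
  simp at this
  omega

/-- twisted product versus product -/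
lemma rho_pow_D {w : Fin 3 → ℤ} (hw : 1 ≤ w 1 + w 2) {m : ℤ} {h : Sy K} (hh : h ∈ Fil w m)
    (j : ℕ) : rho (bD K ^ j) h - X 2 ^ j * h ∈ Fil w (m + j * w 2 - 1) := by
  induction j with
  | zero => simp
  | succ j ih =>
    have h2 : X 2 ^ j * h ∈ Fil w (j * w 2 + m) := by
      refine Fil_mul (Fil_hom ?_) hh
      simpa using (isWeightedHomogeneous_X K w 2).pow j
    set E := rho (bD K ^ j) h - X 2 ^ j * h with hE
    have h3 : rho (bD K ^ j) h = X 2 ^ j * h + E := by rw [hE]; ring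
    have h4 : rho (bD K ^ (j + 1)) h - X 2 ^ (j + 1) * h =
        X 2 * E + pderiv 1 (X 2 ^ j * h) + pderiv 1 E := by
      rw [pow_succ' (bD K), map_mul, Module.End.mul_apply, h3, rho_D, map_add]
      ring
    rw [h4]
    refine Submodule.add_mem _ (Submodule.add_mem _ ?_ ?_) ?_
    · refine Fil_mono ?_ (Fil_mul (Fil_X 2) ih)
      push_cast; linarith
    · refine Fil_mono ?_ (Fil_pderiv h2 1)
      push_cast; linarith
    · refine Fil_mono ?_ (Fil_pderiv ih 1)
      push_cast; linarith

lemma rho_pow_X (k : ℕ) (f : Sy K) : rho (bX K ^ k) f = X 1 ^ k * f := by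
  induction k with
  | zero => simp
  | succ k ih => rw [pow_succ', map_mul, Module.End.mul_apply, ih, rho_X]; ring

lemma rho_pow_T (k : ℕ) (f : Sy K) : rho (bT K ^ k) f = X 0 ^ k * f := by
  induction k with
  | zero => simp
  | succ k ih => rw [pow_succ', map_mul, Module.End.mul_apply, ih, rho_T]; ring

lemma weight3 (w : Fin 3 → ℤ) (n : Fin 3 →₀ ℕ) :
    Finsupp.weight w n = n 0 * w 0 + n 1 * w 1 + n 2 * w 2 := by
  rw [Finsupp.weight_apply, Finsupp.sum_fintype _ _ (by simp), Fin.sum_univ_three]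
  simp

lemma monomial3 (n : Fin 3 →₀ ℕ) (a : K) :
    (monomial n a : Sy K) = C a * (X 1 ^ n 1 * X 2 ^ n 2 * X 0 ^ n 0) := by
  rw [MvPolynomial.monomial_eq, Finsupp.prod_fintype _ _ (by simp), Fin.prod_univ_three]
  ring

lemma rho_mono {w : Fin 3 → ℤ} (hw : 1 ≤ w 1 + w 2) {m : ℤ} {h : Sy K} (hh : h ∈ Fil w m)
    (n : Fin 3 →₀ ℕ) : rho (mono n) h - monomial n 1 * h ∈ Fil w (Finsupp.weight w n + m - 1) := by
  have h1 : X 0 ^ n 0 * h ∈ Fil w (n 0 * w 0 + m) := by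
    refine Fil_mul (Fil_hom ?_) hh
    simpa using (isWeightedHomogeneous_X K w 0).pow (n 0)
  have h2 := rho_pow_D hw h1 (n 2)
  have h3 : (X 1 ^ n 1 : Sy K) ∈ Fil w (n 1 * w 1) := by
    refine Fil_hom ?_
    simpa using (isWeightedHomogeneous_X K w 1).pow (n 1)
  have h4 := Fil_mul h3 h2
  rw [mono, map_mul, map_mul, Module.End.mul_apply, Module.End.mul_apply, rho_pow_T, rho_pow_X,
    monomial3, weight3]
  have h5 := Fil_mono (m' := n 0 * w 0 + n 1 * w 1 + n 2 * w 2 + m - 1) (by linarith) h4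
  convert h5 using 1
  simp
  ring

lemma rho_ev {w : Fin 3 → ℤ} (hw : 1 ≤ w 1 + w 2) {m m' : ℤ} {f h : Sy K} (hf : f ∈ Fil w m)
    (hh : h ∈ Fil w m') : rho (ev f) h - f * h ∈ Fil w (m + m' - 1) := by
  rw [mem_Fil] at hf
  have e : rho (ev f) h - f * h =
      ∑ n ∈ f.support, coeff n f • (rho (mono n) h - monomial n 1 * h) := by
    have h1 : f = ∑ n ∈ f.support, coeff n f • monomial n (1 : K) := by
      conv_lhs => rw [f.as_sum]
      simp [smul_monomial]
    conv_lhs => rw [h1]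
    simp only [map_sum, LinearMap.sum_apply, map_smul, LinearMap.smul_apply, ev_monomial, one_smul,
      Finset.sum_mul, ← Finset.sum_sub_distrib, smul_sub, smul_mul_assoc]
  rw [e]
  refine Submodule.sum_mem _ fun n hn => Submodule.smul_mem _ _ ?_
  refine Fil_mono ?_ (rho_mono hw hh n)
  have := hf n (by simpa using hn)
  linarith

/-- `LF w m b g`: `b` has filtration degree `≤ m` and its symbol in degree `m` is `g`. -/
def LF (w : Fin 3 → ℤ) (m : ℤ) (b : BW K) (g : Sy K) : Prop :=
  IsWeightedHomogeneous w g m ∧ symb b - g ∈ Fil w (m - 1)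

variable {w : Fin 3 → ℤ} {m m' : ℤ} {a b : BW K} {g h : Sy K}

lemma LF.mem (h : LF w m b g) : symb b ∈ Fil w m := by
  have := Submodule.add_mem _ (Fil_mono (by omega : m - 1 ≤ m) h.2) (Fil_hom h.1)
  simpa using this

lemma LF.mul (hw : 1 ≤ w 1 + w 2) (ha : LF w m a g) (hb : LF w m' b h) :
    LF w (m + m') (a * b) (g * h) := by
  refine ⟨ha.1.mul hb.1, ?_⟩
  have h1 := rho_ev hw ha.mem hb.mem
  rw [ev_symb, ← symb_mul] at h1
  have h2 := Fil_mul ha.2 hb.mem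
  have h3 := Fil_mul (Fil_hom ha.1) hb.2
  have h4 := Submodule.add_mem _ (Submodule.add_mem _ h1 (Fil_mono (m' := m + m' - 1) (by linarith) h2))
    (Fil_mono (m' := m + m' - 1) (by linarith) h3)
  convert h4 using 1
  ring

lemma LF.add (ha : LF w m a g) (hb : LF w m b h) : LF w m (a + b) (g + h) := by
  refine ⟨ha.1.add hb.1, ?_⟩
  have := Submodule.add_mem _ ha.2 hb.2
  rw [map_add]
  convert this using 1
  ring

lemma LF.zero : LF w m (0 : BW K) 0 :=
  ⟨isWeightedHomogeneous_zero K w m, by simp⟩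

lemma LF.const (c : K) : LF w 0 (algebraMap K (BW K) c) (C c) := by
  refine ⟨isWeightedHomogeneous_C w c, ?_⟩
  rw [symb_def, AlgHom.commutes, Module.algebraMap_end_apply]
  simp [MvPolynomial.smul_eq_C_mul]

lemma LF.one : LF w 0 (1 : BW K) 1 := by
  simpa using LF.const (w := w) (1 : K)

lemma LF.X : LF w (w 1) (bX K) (X 1) := by
  refine ⟨isWeightedHomogeneous_X K w 1, ?_⟩
  rw [symb_def, rho_X]; simp

lemma LF.D : LF w (w 2) (bD K) (MvPolynomial.X 2) := by
  refine ⟨isWeightedHomogeneous_X K w 2, ?_⟩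
  rw [symb_def, rho_D]; simp

lemma LF.T : LF w (w 0) (bT K) (MvPolynomial.X 0) := by
  refine ⟨isWeightedHomogeneous_X K w 0, ?_⟩
  rw [symb_def, rho_T]; simp

lemma LF.smul (c : K) (ha : LF w m a g) : LF w m (c • a) (c • g) := by
  refine ⟨?_, ?_⟩
  · rw [MvPolynomial.smul_eq_C_mul]; exact ha.1.C_mul c
  · rw [map_smul, ← smul_sub]; exact Submodule.smul_mem _ _ ha.2

lemma LF.pow (hw : 1 ≤ w 1 + w 2) (ha : LF w m a g) (k : ℕ) : LF w (k * m) (a ^ k) (g ^ k) := by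
  induction k with
  | zero => simpa using LF.one
  | succ k ih =>
    rw [pow_succ, pow_succ]
    have := ih.mul hw ha
    convert this using 1
    push_cast; ring

lemma LF.up (ha : LF w m a g) (h : m < m') : LF w m' a 0 := by
  refine ⟨isWeightedHomogeneous_zero K w m', ?_⟩
  rw [sub_zero]
  exact Fil_mono (by omega) ha.mem

lemma LF.sum {ι : Type*} (s : Finset ι) (f : ι → BW K) (φ : ι → Sy K)
    (hs : ∀ i ∈ s, LF w m (f i) (φ i)) : LF w m (∑ i ∈ s, f i) (∑ i ∈ s, φ i) := by
  classical
  induction s using Finset.induction_on with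
  | empty => simpa using LF.zero
  | insert i s hi ih =>
    rw [Finset.sum_insert hi, Finset.sum_insert hi]
    exact (hs i (by simp)).add (ih fun j hj => hs j (by simp [hj]))

lemma LF.unique (ha : LF w m a g) (hb : LF w m a h) : g = h := by
  have h1 := Submodule.sub_mem _ hb.2 ha.2
  have h2 : g - h ∈ Fil w (m - 1) := by convert h1 using 1; ring
  rw [← sub_eq_zero]
  by_contra h3
  obtain ⟨n, hn⟩ := MvPolynomial.ne_zero_iff.1 h3
  have h4 := mem_Fil.1 h2 n hn
  have h5 := (ha.1.sub hb.1) hn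
  omega

lemma LF.deg_unique (ha : LF w m a g) (hg : g ≠ 0) (hb : LF w m' a h) (hh : h ≠ 0) : m = m' := by
  rcases lt_trichotomy m m' with h1 | h1 | h1
  · exact absurd (hb.unique (ha.up h1)) hh
  · exact h1
  · exact absurd (ha.unique (hb.up h1)) hg

lemma LF.of_mem (hb : symb b ∈ Fil w m) : LF w m b (weightedHomogeneousComponent w m (symb b)) := by
  refine ⟨weightedHomogeneousComponent_isWeightedHomogeneous _ _ , ?_⟩
  rw [mem_Fil] at *
  intro n hn
  classical
  rw [coeff_sub, coeff_weightedHomogeneousComponent] at hn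
  split_ifs at hn with h1
  · simp at hn
  · have := hb n (by simpa using hn)
    omega

lemma LF.exists (hb : b ≠ 0) : ∃ m g, g ≠ 0 ∧ LF w m b g := by
  have h1 : symb b ≠ 0 := fun h => hb (symb_inj (by rw [h, map_zero]))
  obtain ⟨n, hn, hm⟩ := Finset.exists_max_image (symb b).support (Finsupp.weight w)
    (MvPolynomial.support_nonempty.2 h1)
  refine ⟨Finsupp.weight w n, _, ?_, LF.of_mem (m := Finsupp.weight w n) ?_⟩
  · intro h
    have := congrArg (coeff n) h
    classical
    rw [coeff_weightedHomogeneousComponent] at this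
    simp at this hn
    exact hn this
  · rw [mem_Fil]
    intro k hk
    exact hm k (by simpa using hk)

end filt

/-! ### Expressions -/

section expr
variable {K : Type*} [Field K]
open MvPolynomial

/-- ordered evaluation -/
def oev {S : Type*} [Semiring S] [Algebra K S] (a b : S) : MvPolynomial (Fin 2) K →ₗ[K] S :=
  (MvPolynomial.basisMonomials (Fin 2) K).constr K fun n => a ^ n 0 * b ^ n 1

@[simp] lemma oev_monomial {S : Type*} [Semiring S] [Algebra K S] (a b : S) (n : Fin 2 →₀ ℕ) (r : K) :
    oev a b (monomial n r) = r • (a ^ n 0 * b ^ n 1) := by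
  have : monomial n r = r • MvPolynomial.basisMonomials (Fin 2) K n := by
    simp [MvPolynomial.smul_monomial]
  rw [this, map_smul, oev, Module.Basis.constr_basis]

lemma oev_eq_sum {S : Type*} [Semiring S] [Algebra K S] (a b : S) (c : MvPolynomial (Fin 2) K) :
    oev a b c = ∑ n ∈ c.support, coeff n c • (a ^ n 0 * b ^ n 1) := by
  conv_lhs => rw [c.as_sum]
  rw [map_sum]
  simp only [oev_monomial]

lemma map_oev {S R : Type*} [Semiring S] [Algebra K S] [Semiring R] [Algebra K R] (f : S →ₐ[K] R)
    (a b : S) (c : MvPolynomial (Fin 2) K) : f (oev a b c) = oev (f a) (f b) c := by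
  simp [oev_eq_sum]

lemma monomial2 (n : Fin 2 →₀ ℕ) (a : K) :
    (monomial n a : MvPolynomial (Fin 2) K) = C a * (X 0 ^ n 0 * X 1 ^ n 1) := by
  rw [MvPolynomial.monomial_eq, Finsupp.prod_fintype _ _ (by simp), Fin.prod_univ_two]

/-- exponent vector -/
def ex (i j : ℕ) : Fin 2 →₀ ℕ := Finsupp.single 0 i + Finsupp.single 1 j

@[simp] lemma ex_zero (i j : ℕ) : ex i j 0 = i := by simp [ex]
@[simp] lemma ex_one (i j : ℕ) : ex i j 1 = j := by simp [ex]

lemma ex_eta (n : Fin 2 →₀ ℕ) : ex (n 0) (n 1) = n := by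
  ext i; fin_cases i <;> simp

lemma ex_ext {n : Fin 2 →₀ ℕ} {i j : ℕ} (h0 : n 0 = i) (h1 : n 1 = j) : n = ex i j := by
  rw [← ex_eta n, h0, h1]

/-- `A₁ → A₁[T]` -/
def CA : Weyl K →ₐ[K] BW K := Polynomial.CAlgHom

@[simp] lemma CA_X : CA (wX K) = bX K := rfl
@[simp] lemma CA_D : CA (wD K) = bD K := rfl

def eps0 : BW K →ₐ[K] Weyl K := Polynomial.eval₂AlgHom (AlgHom.id K _) 0 (by simp)

@[simp] lemma eps0_CA (a : Weyl K) : eps0 (CA a) = a := by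
  exact Polynomial.eval₂_C _ _
@[simp] lemma eps0_T : eps0 (bT K) = 0 := by
  exact Polynomial.eval₂_X _ _
@[simp] lemma eps0_X : eps0 (bX K) = wX K := by
  rw [← CA_X, eps0_CA]
@[simp] lemma eps0_D : eps0 (bD K) = wD K := by
  rw [← CA_D, eps0_CA]

lemma CA_inj {a b : Weyl K} (h : CA a = CA b) : a = b := by
  rw [← eps0_CA a, h, eps0_CA]

lemma split0 (b : BW K) : ∃ b', b = CA (eps0 b) + bT K * b' := by
  have h := Polynomial.divX_mul_X_add b
  have h1 : b = CA (b.coeff 0) + bT K * b.divX := by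
    rw [bT_comm]
    conv_lhs => rw [← h]
    rw [add_comm]; rfl
  refine ⟨b.divX, ?_⟩
  have h2 : eps0 b = b.coeff 0 := by
    conv_lhs => rw [h1]
    simp
  rw [h2]; exact h1

lemma eps0_ev (f : Sy K) : eps0 (ev f) =
    oev (wX K) (wD K) 
      (aeval (R := K) (![0, X 0, X 1] : Fin 3 → MvPolynomial (Fin 2) K) f) := by
  induction f using MvPolynomial.induction_on' with
  | monomial n a =>
    rw [ev_monomial, map_smul, mono]
    simp only [map_mul, map_pow, eps0_T, eps0_X, eps0_D, monomial3, aeval_X, aeval_C]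
    rcases Nat.eq_zero_or_pos (n 0) with h0 | h0
    · have := oev_monomial (wX K) (wD K) (ex (n 1) (n 2)) a
      rw [monomial2] at this
      simp only [ex_zero, ex_one] at this
      simp [h0, this]
    · simp [zero_pow h0.ne']
  | add p q h1 h2 => rw [map_add, map_add, h1, h2, map_add, map_add]

lemma exists_expr (a : Weyl K) : ∃ c : MvPolynomial (Fin 2) K, a = oev (wX K) (wD K) c := by
  exact ⟨_, by rw [← eps0_ev (symb (CA a)), ev_symb, eps0_CA]⟩

/-- inclusion of symbols -/
def iota : MvPolynomial (Fin 2) K →ₐ[K] Sy K := rename Fin.succ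

@[simp] lemma iota_X0 : iota (X 0 : MvPolynomial (Fin 2) K) = X 1 := by simp [iota]
@[simp] lemma iota_X1 : iota (X 1 : MvPolynomial (Fin 2) K) = X 2 := by simp [iota]

lemma iota_inj {a b : MvPolynomial (Fin 2) K} (h : iota a = iota b) : a = b :=
  rename_injective _ (Fin.succ_injective 2) h

lemma aeval_iota (p q f : MvPolynomial (Fin 2) K) :
    aeval ![iota p, iota q] f = iota (aeval ![p, q] f) := by
  rw [← AlgHom.comp_apply]
  congr 1
  ext i
  fin_cases i <;> simp

lemma symb_oev (c : MvPolynomial (Fin 2) K) : symb (oev (bX K) (bD K) c) = iota c := by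
  induction c using MvPolynomial.induction_on' with
  | monomial n a =>
    have h : (a • (bX K ^ n 0 * bD K ^ n 1) : BW K) =
        ev (iota (monomial n a)) := by
      rw [iota, rename_monomial, ev_monomial, mono]
      rw [show (1 : Fin 3) = Fin.succ 0 from rfl, show (2 : Fin 3) = Fin.succ 1 from rfl,
        Finsupp.mapDomain_apply (Fin.succ_injective 2), Finsupp.mapDomain_apply (Fin.succ_injective 2),
        Finsupp.mapDomain_of_notMem_range]
      · simp
      · simp
    rw [oev_monomial, h, symb_ev]
  | add p q h1 h2 => rw [map_add, map_add, h1, h2, map_add]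

/-- degree bound -/
def Deg (v u D : ℤ) (c : MvPolynomial (Fin 2) K) : Prop :=
  ∀ n, coeff n c ≠ 0 → n 0 * v + n 1 * u ≤ D

/-- leading form -/
def lead (v u D : ℤ) (c : MvPolynomial (Fin 2) K) : MvPolynomial (Fin 2) K :=
  ∑ n ∈ c.support.filter (fun n => (n 0 : ℤ) * v + n 1 * u = D), monomial n (coeff n c)

lemma coeff_lead (v u D : ℤ) (c : MvPolynomial (Fin 2) K) (n : Fin 2 →₀ ℕ) :
    coeff n (lead v u D c) = if (n 0 : ℤ) * v + n 1 * u = D then coeff n c else 0 := by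
  classical
  rw [lead, coeff_sum]
  simp only [coeff_monomial, Finset.sum_ite_eq', Finset.mem_filter]
  split_ifs with h1 h2 h2
  · rfl
  · exact absurd h1.2 h2
  · by_contra h3
    exact h1 ⟨by simpa using Ne.symm h3, h2⟩
  · rfl

variable {w : Fin 3 → ℤ}

lemma LF.subst (hw : 1 ≤ w 1 + w 2) {v u D : ℤ} {Z0 Z1 : BW K} {z0 z1 : Sy K}
    (h0 : LF w v Z0 z0) (h1 : LF w u Z1 z1) {c : MvPolynomial (Fin 2) K} (hc : Deg v u D c) :
    LF w D (oev Z0 Z1 c) (aeval ![z0, z1] (lead v u D c)) := by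
  have e : aeval ![z0, z1] (lead v u D c) = ∑ n ∈ c.support,
      if (n 0 : ℤ) * v + n 1 * u = D then coeff n c • (z0 ^ n 0 * z1 ^ n 1) else 0 := by
    rw [lead, map_sum, Finset.sum_filter]
    refine Finset.sum_congr rfl fun n _ => ?_
    split_ifs
    · rw [monomial2]; simp [MvPolynomial.smul_eq_C_mul]
    · rfl
  rw [e, oev_eq_sum]
  refine LF.sum _ _ _ fun n hn => ?_
  have h2 := ((h0.pow hw (n 0)).mul hw (h1.pow hw (n 1))).smul (coeff n c)
  split_ifs with h3
  · rw [h3] at h2; exact h2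
  · exact h2.up (lt_of_le_of_ne (hc n (by simpa using hn)) h3)

lemma weight_succ (n : Fin 2 →₀ ℕ) :
    Finsupp.weight w (Finsupp.mapDomain Fin.succ n) = n 0 * w 1 + n 1 * w 2 := by
  rw [weight3, show (1 : Fin 3) = Fin.succ 0 from rfl, show (2 : Fin 3) = Fin.succ 1 from rfl,
        Finsupp.mapDomain_apply (Fin.succ_injective 2), Finsupp.mapDomain_apply (Fin.succ_injective 2),
        Finsupp.mapDomain_of_notMem_range]
  · simp
  · simp

lemma LF.lead_eq (hw : 1 ≤ w 1 + w 2) {D : ℤ} {c : MvPolynomial (Fin 2) K} {g : Sy K}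
    (h : LF w D (CA (oev (wX K) (wD K) c)) g) :
    Deg (w 1) (w 2) D c ∧ iota (lead (w 1) (w 2) D c) = g := by
  have hd : Deg (w 1) (w 2) D c := by
    intro n hn
    have h1 := h.mem
    rw [map_oev CA (wX K) (wD K) c, CA_X, CA_D, symb_oev, mem_Fil] at h1
    have := h1 (Finsupp.mapDomain Fin.succ n) (by
      rw [iota, coeff_rename_mapDomain _ (Fin.succ_injective 2)]; exact hn)
    rwa [weight_succ] at this
  refine ⟨hd, ?_⟩
  have h2 := LF.subst hw LF.X LF.D hd
  rw [map_oev CA (wX K) (wD K) c, CA_X, CA_D] at h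
  rw [← h2.unique h]
  have := aeval_iota (MvPolynomial.X 0) (MvPolynomial.X 1) (lead (w 1) (w 2) D c)
  rw [iota_X0, iota_X1] at this
  rw [this]
  congr 1
  have e : (![MvPolynomial.X 0, MvPolynomial.X 1] : Fin 2 → MvPolynomial (Fin 2) K) = MvPolynomial.X := by
    funext i; fin_cases i <;> rfl
  rw [e, aeval_X_left_apply]

lemma transform (hw : 1 ≤ w 1 + w 2) {D : ℤ} {c c' : MvPolynomial (Fin 2) K}
    (τ : Weyl K →ₐ[K] Weyl K) {p q : MvPolynomial (Fin 2) K}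
    (hx : LF w (w 1) (CA (τ (wX K))) (iota p)) (hy : LF w (w 2) (CA (τ (wD K))) (iota q))
    (hc : Deg (w 1) (w 2) D c)
    (h : τ (oev (wX K) (wD K) c) = oev (wX K) (wD K) c') :
    Deg (w 1) (w 2) D c' ∧
      lead (w 1) (w 2) D c' = aeval ![p, q] (lead (w 1) (w 2) D c) := by
  have h1 := LF.subst hw hx hy hc
  rw [← AlgHom.comp_apply, ← AlgHom.comp_apply, ← map_oev, AlgHom.comp_apply, h, aeval_iota] at h1
  have h2 := h1.lead_eq hw
  exact ⟨h2.1, iota_inj h2.2⟩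

end expr

/-! ### The key identity -/

section key
variable {K : Type*} [Field K]
open MvPolynomial

lemma eps0_eq (b : BW K) : eps0 b = b.coeff 0 := by
  have h := Polynomial.divX_mul_X_add b
  have h1 : b = CA (b.coeff 0) + bT K * b.divX := by
    rw [bT_comm]
    conv_lhs => rw [← h]
    rw [add_comm]; rfl
  conv_lhs => rw [h1]
  simp

lemma Deg.scale {v u D : ℤ} {c : MvPolynomial (Fin 2) K} (h : Deg v u D c) {k : ℤ} (hk : 0 < k) :
    Deg (k * v) (k * u) (k * D) c := by
  intro n hn
  have := mul_le_mul_of_nonneg_left (h n hn) hk.le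
  linarith

lemma lead_scale {v u D : ℤ} {c : MvPolynomial (Fin 2) K} {k : ℤ} (hk : 0 < k) :
    lead (k * v) (k * u) (k * D) c = lead v u D c := by
  ext n
  rw [coeff_lead, coeff_lead]
  have : ((n 0 : ℤ) * (k * v) + n 1 * (k * u) = k * D) ↔ ((n 0 : ℤ) * v + n 1 * u = D) := by
    constructor
    · intro h
      apply mul_left_cancel₀ hk.ne'
      linarith
    · intro h; rw [← h]; ring
  simp only [this]

lemma fse_iota (f : MvPolynomial (Fin 2) K) : finSuccEquiv K 2 (iota f) = Polynomial.C f := by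
  have : ((finSuccEquiv K 2).toAlgHom.comp iota) =
      (Polynomial.CAlgHom : MvPolynomial (Fin 2) K →ₐ[K] Polynomial (MvPolynomial (Fin 2) K)) := by
    apply MvPolynomial.algHom_ext
    intro i
    simp only [AlgHom.comp_apply, iota, rename_X]
    exact finSuccEquiv_X_succ
  exact DFunLike.congr_fun this f

lemma natDegree_pos_aux (a : MvPolynomial (Fin 2) K) {F : Polynomial (MvPolynomial (Fin 2) K)}
    (hF : F ≠ 0) : 0 < (Polynomial.C a + Polynomial.X * F).natDegree := by
  rw [add_comm, Polynomial.natDegree_add_C, Polynomial.natDegree_X_mul hF]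
  omega

lemma key_abs (φ : Weyl K →ₐ[K] BW K) (h0 : ∀ a, eps0 (φ a) = a) (hne : φ ≠ CA)
    (c : MvPolynomial (Fin 2) K) (hc : φ (oev (wX K) (wD K) c) = CA (oev (wX K) (wD K) c))
    (v u D : ℤ) (hv : 0 < v) (hu : 0 < u) (hD : Deg v u D c) :
    ∃ A B : Polynomial (MvPolynomial (Fin 2) K), A.coeff 0 = X 0 ∧ B.coeff 0 = X 1 ∧
      (0 < A.natDegree ∨ 0 < B.natDegree) ∧
      aeval ![A, B] (lead v u D c) = Polynomial.C (lead v u D c) := by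
  classical
  obtain ⟨b1, hb1⟩ := split0 (φ (wX K))
  obtain ⟨b2, hb2⟩ := split0 (φ (wD K))
  rw [h0, CA_X] at hb1
  rw [h0, CA_D] at hb2
  set F := symb b1 with hF
  set G := symb b2 with hG
  let S : Finset (ℤ × ℤ) :=
    F.support.image (fun n => ((n 0 : ℤ) + 1, v * n 1 + u * n 2 - v)) ∪
    G.support.image (fun n => ((n 0 : ℤ) + 1, v * n 1 + u * n 2 - u))
  have hSne : S.Nonempty := by
    by_contra h
    rw [Finset.not_nonempty_iff_eq_empty, Finset.union_eq_empty, Finset.image_eq_empty,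
      Finset.image_eq_empty, support_eq_empty, support_eq_empty] at h
    apply hne
    have e1 : b1 = 0 := symb_inj (by rw [← hF, h.1, map_zero])
    have e2 : b2 = 0 := symb_inj (by rw [← hG, h.2, map_zero])
    apply w_hom_ext
    · rw [hb1, e1]; simp
    · rw [hb2, e2]; simp
  obtain ⟨⟨k, e⟩, hke, hmax⟩ := Finset.exists_max_image S (fun p => (p.2 : ℚ) / p.1) hSne
  have hpos : ∀ p ∈ S, 0 < p.1 := by
    intro p hp
    rw [Finset.mem_union, Finset.mem_image, Finset.mem_image] at hp
    rcases hp with ⟨n, -, rfl⟩ | ⟨n, -, rfl⟩ <;> simp <;> omega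
  have hk : 0 < k := hpos _ hke
  have hmax' : ∀ p ∈ S, k * p.2 ≤ e * p.1 := by
    intro p hp
    have h1 := hmax p hp
    have h2 : (0 : ℚ) < p.1 := by exact_mod_cast hpos p hp
    have h3 : (0 : ℚ) < k := by exact_mod_cast hk
    rw [div_le_div_iff₀ h2 h3] at h1
    have h4 : p.2 * k ≤ e * p.1 := by exact_mod_cast h1
    linarith
  let w : Fin 3 → ℤ := ![-e, k * v, k * u]
  have w0 : w 0 = -e := rfl
  have w1 : w 1 = k * v := rfl
  have w2 : w 2 = k * u := rfl
  have hw : 1 ≤ w 1 + w 2 := by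
    rw [w1, w2]
    have := mul_pos hk hv
    have := mul_pos hk hu
    omega
  have hF1 : F ∈ Fil w (k * v + e) := by
    rw [mem_Fil]
    intro n hn
    have := hmax' _ (Finset.mem_union_left _ (Finset.mem_image_of_mem _ (mem_support_iff.2 hn)))
    rw [weight3, w0, w1, w2]
    simp only at this
    linarith
  have hG1 : G ∈ Fil w (k * u + e) := by
    rw [mem_Fil]
    intro n hn
    have := hmax' _ (Finset.mem_union_right _ (Finset.mem_image_of_mem _ (mem_support_iff.2 hn)))
    rw [weight3, w0, w1, w2]
    simp only at this
    linarith
  set Fb := weightedHomogeneousComponent w (k * v + e) F with hFb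
  set Gb := weightedHomogeneousComponent w (k * u + e) G with hGb
  have hFG : Fb ≠ 0 ∨ Gb ≠ 0 := by
    rw [Finset.mem_union, Finset.mem_image, Finset.mem_image] at hke
    rcases hke with ⟨n, hn, he⟩ | ⟨n, hn, he⟩
    · left
      rw [Prod.mk.injEq] at he
      intro h
      have h1 := congrArg (coeff n) h
      rw [hFb, coeff_weightedHomogeneousComponent, if_pos] at h1
      · exact (mem_support_iff.1 hn) h1
      · rw [weight3, w0, w1, w2]
        rw [← he.1, ← he.2]; ring
    · right
      rw [Prod.mk.injEq] at he
      intro h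
      have h1 := congrArg (coeff n) h
      rw [hGb, coeff_weightedHomogeneousComponent, if_pos] at h1
      · exact (mem_support_iff.1 hn) h1
      · rw [weight3, w0, w1, w2]
        rw [← he.1, ← he.2]; ring
  have hx : LF w (k * v) (φ (wX K)) (X 1 + X 0 * Fb) := by
    rw [hb1]
    refine LF.add LF.X ?_
    have := LF.mul hw (LF.T (w := w)) (LF.of_mem hF1)
    rw [w0] at this
    convert this using 1
    ring
  have hy : LF w (k * u) (φ (wD K)) (X 2 + X 0 * Gb) := by
    rw [hb2]
    refine LF.add LF.D ?_
    have := LF.mul hw (LF.T (w := w)) (LF.of_mem hG1)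
    rw [w0] at this
    convert this using 1
    ring
  have h1 := LF.subst hw hx hy (hD.scale hk)
  have h2 := LF.subst hw LF.X LF.D (hD.scale hk)
  rw [← map_oev φ (wX K) (wD K) c, hc, lead_scale hk] at h1
  rw [← CA_X, ← CA_D, ← map_oev CA (wX K) (wD K) c, w1, w2, lead_scale hk] at h2
  have h3 := h1.unique h2
  have h4 := congrArg (finSuccEquiv K 2) h3
  have e1 : finSuccEquiv K 2 (X 1) = Polynomial.C (X 0) := finSuccEquiv_X_succ (j := (0 : Fin 2))
  have e2 : finSuccEquiv K 2 (X 2) = Polynomial.C (X 1) := finSuccEquiv_X_succ (j := (1 : Fin 2))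
  have e0 : finSuccEquiv K 2 (X 0) = Polynomial.X := finSuccEquiv_X_zero
  have hcomp : ∀ (z0 z1 : Sy K) (f : MvPolynomial (Fin 2) K),
      finSuccEquiv K 2 (aeval ![z0, z1] f) =
        aeval ![finSuccEquiv K 2 z0, finSuccEquiv K 2 z1] f := by
    intro z0 z1 f
    have : (finSuccEquiv K 2).toAlgHom.comp (aeval ![z0, z1]) =
        aeval ![finSuccEquiv K 2 z0, finSuccEquiv K 2 z1] := by
      apply MvPolynomial.algHom_ext
      intro i
      fin_cases i <;> simp
    exact DFunLike.congr_fun this f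
  have e3 : aeval ![(X 1 : Sy K), X 2] (lead v u D c) = iota (lead v u D c) := by
    have := aeval_iota (X 0) (X 1) (lead v u D c)
    rw [iota_X0, iota_X1] at this
    rw [this]
    congr 1
    have e : (![X 0, X 1] : Fin 2 → MvPolynomial (Fin 2) K) = X := by
      funext i; fin_cases i <;> rfl
    rw [e, aeval_X_left_apply]
  rw [e3, fse_iota, hcomp, map_add, map_add, map_mul, map_mul, e0, e1, e2] at h4
  refine ⟨_, _, ?_, ?_, ?_, h4⟩
  · simp
  · simp
  · rcases hFG with h | h
    · left
      exact natDegree_pos_aux _ (by simpa using h)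
    · right
      exact natDegree_pos_aux _ (by simpa using h)

lemma key (σ : Weyl K ≃ₐ[K] Weyl K)
    (c : MvPolynomial (Fin 2) K) (hc : σ (wX K) = oev (wX K) (wD K) c)
    (v u D : ℤ) (hv : 0 < v) (hu : 0 < u) (hD : Deg v u D c) :
    ∃ A B : Polynomial (MvPolynomial (Fin 2) K), A.coeff 0 = X 0 ∧ B.coeff 0 = X 1 ∧
      (0 < A.natDegree ∨ 0 < B.natDegree) ∧
      aeval ![A, B] (lead v u D c) = Polynomial.C (lead v u D c) := by
  let sB : BW K →ₐ[K] BW K := Polynomial.mapAlgHom σ.toAlgHom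
  let sh : Weyl K →ₐ[K] BW K := wLift (bX K) (bD K + bT K) (by
    rw [add_mul, mul_add, bD_mul_bX, bT_comm]; abel)
  let φ : Weyl K →ₐ[K] BW K := sB.comp (sh.comp σ.symm.toAlgHom)
  have hsB : ∀ a, sB (CA a) = CA (σ a) := fun a => Polynomial.map_C _
  have hsT : sB (bT K) = bT K := Polynomial.map_X _
  have hφx : φ (σ (wX K)) = CA (σ (wX K)) := by
    simp only [φ, AlgHom.comp_apply]
    have : σ.symm.toAlgHom (σ (wX K)) = wX K := σ.symm_apply_apply _
    rw [this, wLift_X, ← CA_X, hsB]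
  have hφy : φ (σ (wD K)) = CA (σ (wD K)) + bT K := by
    simp only [φ, AlgHom.comp_apply]
    have : σ.symm.toAlgHom (σ (wD K)) = wD K := σ.symm_apply_apply _
    rw [this, wLift_D, map_add, ← CA_D, hsB, hsT]
  refine key_abs φ ?_ ?_ c ?_ v u D hv hu hD
  · have h1 : ∀ b, eps0 (sB b) = σ (eps0 b) := by
      intro b
      rw [eps0_eq, eps0_eq]
      exact Polynomial.coeff_map _ _
    have h2 : eps0.comp sh = AlgHom.id K _ := by
      apply w_hom_ext <;> simp [sh]
    intro a
    simp only [φ, AlgHom.comp_apply]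
    rw [h1]
    have h3 := DFunLike.congr_fun h2 (σ.symm.toAlgHom a)
    simp only [AlgHom.comp_apply, AlgHom.id_apply] at h3
    rw [h3]
    exact σ.apply_symm_apply a
  · intro h
    rw [h] at hφy
    have h1 := congrArg symb hφy
    rw [map_add] at h1
    have h3 : symb (bT K) = X 0 := by rw [symb_def, rho_T, mul_one]
    rw [h3] at h1
    exact X_ne_zero (R := K) (0 : Fin 3) (left_eq_add.1 h1)
  · rw [← hc, hφx]

end key

/-! ### Commutative lemmas -/

section comm
open MvPolynomial

lemma aeval_homogenize_sum {F S : Type*} [CommRing F] [CommRing S] [Algebra F S] (Q : Polynomial F)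
    (N : ℕ) (a b : S) :
    aeval ![b, a] (Q.homogenize N) =
      ∑ k ∈ Finset.range (N + 1), algebraMap F S (Q.coeff k) * (a ^ (N - k) * b ^ k) := by
  rw [Polynomial.homogenize, map_sum,
    Finset.Nat.sum_antidiagonal_eq_sum_range_succ_mk]
  refine Finset.sum_congr rfl fun k hk => ?_
  rw [aeval_monomial, Finsupp.prod_fintype _ _ (by simp), Fin.prod_univ_two]
  simp
  ring

lemma aeval_homogenize_pow {F S : Type*} [Field F] [CommRing S] [Algebra F S] (c r : F)
    (N : ℕ) (a b : S) :
    aeval ![b, a] ((Polynomial.C c * (Polynomial.X - Polynomial.C r) ^ N).homogenize N) =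
      algebraMap F S c * (b - algebraMap F S r * a) ^ N := by
  rw [Polynomial.homogenize_C_mul, map_mul, aeval_C]
  congr 1
  induction N with
  | zero => simp
  | succ N ih =>
    rw [pow_succ, Polynomial.homogenize_mul _ _ (by simp [Polynomial.natDegree_pow])
      (by simp : (Polynomial.X - Polynomial.C r).natDegree ≤ 1), map_mul, ih]
    simp [pow_succ]

lemma C1a {L : Type*} [Field L] [IsAlgClosed L] (Q : Polynomial L) (N d u v : ℕ)
    (hN : Q.natDegree = N) (hN1 : 1 ≤ N) (hQ0 : Q.coeff 0 ≠ 0) (hd : u * N ≤ d) (hu : 1 ≤ u)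
    (hv : 1 ≤ v) (A B : Polynomial L) (hAB : 0 < A.natDegree ∨ 0 < B.natDegree) (e : L) (he : e ≠ 0)
    (h : ∑ k ∈ Finset.range (N + 1), Polynomial.C (Q.coeff k) * A ^ (d - u * k) * B ^ (v * k) =
      Polynomial.C e) :
    d = u * N ∧ ∃ r : L, Q = Polynomial.C Q.leadingCoeff * (Polynomial.X - Polynomial.C r) ^ N ∧
      (B ^ v - Polynomial.C r * A ^ u).natDegree = 0 := by
  have hQne : Q ≠ 0 := by rintro rfl; simp at hQ0
  have h1 : A ^ (d - u * N) * aeval ![B ^ v, A ^ u] (Q.homogenize N) = Polynomial.C e := by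
    rw [← h, aeval_homogenize_sum, Finset.mul_sum]
    refine Finset.sum_congr rfl fun k hk => ?_
    have hk' : k ≤ N := by simpa [Nat.lt_succ_iff] using hk
    have : d - u * k = (d - u * N) + u * (N - k) := by
      have := Nat.mul_le_mul_left u hk'
      rw [Nat.mul_sub]; omega
    rw [this, Polynomial.algebraMap_eq]
    ring
  have hunit : IsUnit (A ^ (d - u * N) * aeval ![B ^ v, A ^ u] (Q.homogenize N)) := by
    rw [h1]; exact Polynomial.isUnit_C.2 he.isUnit
  have hroot : ∀ r, Q.IsRoot r → (B ^ v - Polynomial.C r * A ^ u).natDegree = 0 := by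
    intro r hr
    apply Polynomial.natDegree_eq_zero_of_isUnit
    refine isUnit_of_dvd_unit ?_ hunit
    apply Dvd.dvd.mul_left
    have := Polynomial.homogenize_dvd (Polynomial.dvd_iff_isRoot.2 hr)
    rw [hN, Polynomial.natDegree_X_sub_C] at this
    have h2 := map_dvd (aeval ![B ^ v, A ^ u]) this
    simpa [Polynomial.algebraMap_eq] using h2
  have hAconst : ∀ r, (B ^ v - Polynomial.C r * A ^ u).natDegree = 0 → A.natDegree = 0 → False := by
    intro r hr hA
    have : B ^ v = (B ^ v - Polynomial.C r * A ^ u) + Polynomial.C r * A ^ u := by ring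
    have h2 : (B ^ v).natDegree ≤ 0 := by
      rw [this]
      refine (Polynomial.natDegree_add_le _ _).trans ?_
      rw [hr]
      simp only [zero_le, max_eq_right]
      refine (Polynomial.natDegree_C_mul_le _ _).trans ?_
      rw [Polynomial.natDegree_pow, hA, mul_zero]
    rw [Polynomial.natDegree_pow] at h2
    have : B.natDegree = 0 := by
      rcases Nat.mul_eq_zero.1 (Nat.le_zero.1 h2) with h3 | h3 <;> omega
    omega
  obtain ⟨r, hr⟩ := IsAlgClosed.exists_root Q (by
    rw [Polynomial.degree_eq_natDegree hQne, hN]; exact_mod_cast (by omega : N ≠ 0))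
  have huniq : ∀ s, Q.IsRoot s → s = r := by
    intro s hs
    by_contra hsr
    apply hAconst r (hroot r hr)
    have h2 : Polynomial.C (s - r) * A ^ u = (B ^ v - Polynomial.C r * A ^ u) -
      (B ^ v - Polynomial.C s * A ^ u) := by rw [Polynomial.C_sub]; ring
    have h3 : (Polynomial.C (s - r) * A ^ u).natDegree ≤ 0 := by
      rw [h2]
      refine (Polynomial.natDegree_sub_le _ _).trans ?_
      rw [hroot r hr, hroot s hs]; simp
    rw [Polynomial.natDegree_C_mul (sub_ne_zero.2 hsr), Polynomial.natDegree_pow] at h3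
    rcases Nat.mul_eq_zero.1 (Nat.le_zero.1 h3) with h3 | h3 <;> omega
  refine ⟨?_, r, ?_, hroot r hr⟩
  · by_contra hne
    apply hAconst r (hroot r hr)
    apply Polynomial.natDegree_eq_zero_of_isUnit
    refine isUnit_of_dvd_unit ?_ hunit
    apply Dvd.dvd.mul_right
    exact dvd_pow_self _ (by omega)
  · have hs := IsAlgClosed.splits Q
    have h2 : Q.roots = Multiset.replicate N r := by
      rw [Multiset.eq_replicate]
      refine ⟨by rw [← hs.natDegree_eq_card_roots, hN], ?_⟩
      intro b hb
      exact huniq b (Polynomial.isRoot_of_mem_roots hb)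
    conv_lhs => rw [hs.eq_prod_roots, h2]
    simp

lemma descend {K L : Type*} [Field K] [PerfectField K] [Field L] [IsAlgClosed L] [Algebra K L]
    (q : Polynomial K) (N : ℕ) (hq : q ≠ 0) (hN1 : 1 ≤ N) (r c : L)
    (h : q.map (algebraMap K L) = Polynomial.C c * (Polynomial.X - Polynomial.C r) ^ N) :
    ∃ r0, algebraMap K L r0 = r := by
  have hr : Polynomial.aeval r q = 0 := by
    rw [← Polynomial.eval_map_algebraMap, h]
    simp; right; omega
  have hIsInt : IsIntegral K r := (show IsAlgebraic K r from ⟨q, hq, hr⟩).isIntegral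
  have hsep : (minpoly K r).Separable := PerfectField.separable_of_irreducible (minpoly.irreducible hIsInt)
  have hs := IsAlgClosed.splits ((minpoly K r).map (algebraMap K L))
  have hcard := hs.natDegree_eq_card_roots
  have hnd : ((minpoly K r).map (algebraMap K L)).roots.Nodup :=
    Polynomial.nodup_roots (hsep.map)
  have hc0 : c ≠ 0 := by
    rintro rfl
    rw [Polynomial.C_0, zero_mul, Polynomial.map_eq_zero] at h
    exact hq h
  have hsub : ((minpoly K r).map (algebraMap K L)).roots ≤ {r} := by
    rw [Multiset.le_iff_subset hnd]
    intro s hs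
    have h1 := Polynomial.isRoot_of_mem_roots hs
    have h2 : (q.map (algebraMap K L)).IsRoot s :=
      h1.dvd (Polynomial.map_dvd _ (minpoly.dvd K r hr))
    rw [h] at h2
    simp [hc0] at h2
    simp [sub_eq_zero.1 h2.1]
  have h3 := Multiset.card_le_card hsub
  rw [← hcard, Polynomial.natDegree_map, Multiset.card_singleton] at h3
  have h4 := minpoly.natDegree_pos hIsInt
  exact minpoly.natDegree_eq_one_iff.1 (by omega)

end comm


section comm2
open MvPolynomial
variable {K : Type*} [Field K]

lemma g_ne_zero (u v : ℕ) (hu : u ≠ 0) (r : K) :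
    (X 1 ^ v - C r * X 0 ^ u : MvPolynomial (Fin 2) K) ≠ 0 := by
  intro h
  have := congrArg (aeval (![0, 1] : Fin 2 → K)) h
  simp [hu] at this

lemma const_of_const {R : Type*} [CommRing R] [IsDomain R] {u v : ℕ} (hu : u ≠ 0) {r g : R}
    (hr : r ≠ 0) {A B : Polynomial R} (h : B ^ v - Polynomial.C r * A ^ u = Polynomial.C g)
    (hB : B.natDegree = 0) : A.natDegree = 0 := by
  have h2 : Polynomial.C r * A ^ u = B ^ v - Polynomial.C g := by rw [← h]; ring
  have h3 : (Polynomial.C r * A ^ u).natDegree ≤ 0 := by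
    rw [h2, Polynomial.natDegree_sub_C, Polynomial.natDegree_pow, hB, mul_zero]
  rw [Polynomial.natDegree_C_mul hr, Polynomial.natDegree_pow] at h3
  rcases Nat.mul_eq_zero.1 (Nat.le_zero.1 h3) with h3 | h3 <;> omega

lemma const_of_const' {R : Type*} [CommRing R] [IsDomain R] {u v : ℕ} (hv : v ≠ 0) {r g : R}
    {A B : Polynomial R} (h : B ^ v - Polynomial.C r * A ^ u = Polynomial.C g)
    (hA : A.natDegree = 0) : B.natDegree = 0 := by
  have h2 : B ^ v = Polynomial.C r * A ^ u + Polynomial.C g := by rw [← h]; ring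
  have h3 : (B ^ v).natDegree ≤ 0 := by
    rw [h2, Polynomial.natDegree_add_C]
    refine (Polynomial.natDegree_C_mul_le _ _).trans ?_
    rw [Polynomial.natDegree_pow, hA, mul_zero]
  rw [Polynomial.natDegree_pow] at h3
  rcases Nat.mul_eq_zero.1 (Nat.le_zero.1 h3) with h3 | h3 <;> omega

lemma catalan_case (u v : ℕ) (hu : 2 ≤ u) (hv : 2 ≤ v) (huv : v < u) (huK : (u : K) ≠ 0)
    (hvK : (v : K) ≠ 0) (r : K) (hr : r ≠ 0) (A B : Polynomial (MvPolynomial (Fin 2) K))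
    (hA : A ≠ 0) (hB : B ≠ 0)
    (h : B ^ v - Polynomial.C (C r) * A ^ u = Polynomial.C (X 1 ^ v - C r * X 0 ^ u)) :
    A.natDegree = 0 ∧ B.natDegree = 0 := by
  classical
  let R := MvPolynomial (Fin 2) K
  let j : R →+* FractionRing R := algebraMap R (FractionRing R)
  have hj : Function.Injective j := IsFractionRing.injective R (FractionRing R)
  have hcast : ∀ n : ℕ, (n : K) ≠ 0 → ((n : ℕ) : FractionRing R) ≠ 0 := by
    intro n hn h0
    apply hn
    have : j (C (n : K)) = j 0 := by rw [map_natCast, map_natCast, h0, map_zero]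
    have h1 := hj this
    rw [C_eq_zero] at h1
    exact h1
  obtain ⟨n, hn6, hnK⟩ : ∃ n : ℕ, 6 ≤ n ∧ (n : K) ≠ 0 := by
    by_cases h6 : ((6 : ℕ) : K) = 0
    · refine ⟨7, by norm_num, fun h7 => ?_⟩
      have : ((7 : ℕ) : K) - ((6 : ℕ) : K) = 1 := by push_cast; norm_num
      rw [h6, h7] at this
      simp at this
    · exact ⟨6, le_rfl, h6⟩
  set A' := A.map j with hA'
  set B' := B.map j with hB'
  have hA0 : A' ≠ 0 := (Polynomial.map_ne_zero_iff hj).2 hA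
  have hB0 : B' ≠ 0 := (Polynomial.map_ne_zero_iff hj).2 hB
  have hg : j (X 1 ^ v - C r * X 0 ^ u) ≠ 0 := by
    rw [Ne, map_eq_zero_iff j hj]
    exact g_ne_zero u v (by omega) r
  have hr' : j (C r) ≠ 0 := by
    rw [Ne, map_eq_zero_iff j hj, C_eq_zero]; exact hr
  have h' := congrArg (Polynomial.map j) h
  rw [Polynomial.map_sub, Polynomial.map_mul, Polynomial.map_pow, Polynomial.map_pow,
    Polynomial.map_C, Polynomial.map_C, ← hA', ← hB'] at h'
  generalize j (X 1 ^ v - C r * X 0 ^ u) = g at *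
  generalize j (C r) = s at *
  have hcop : IsCoprime B' A' := by
    rw [← IsCoprime.pow_iff (m := v) (n := u) (by omega) (by omega)]
    refine ⟨Polynomial.C g⁻¹, - Polynomial.C (g⁻¹ * s), ?_⟩
    have : Polynomial.C g⁻¹ * (B' ^ v - Polynomial.C s * A' ^ u) = 1 := by
      rw [h', ← Polynomial.C_mul, inv_mul_cancel₀ hg, Polynomial.C_1]
    rw [← this, Polynomial.C_mul]
    ring
  have hineq : u * n + n * v + v * u ≤ v * u * n := by
    obtain ⟨m, rfl⟩ := Nat.exists_eq_add_of_le hn6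
    obtain ⟨a, rfl⟩ := Nat.exists_eq_add_of_le hv
    obtain ⟨b, rfl⟩ := Nat.exists_eq_add_of_lt huv
    ring_nf
    nlinarith [Nat.zero_le (a*b), Nat.zero_le (m*a*b), Nat.zero_le (m*a), Nat.zero_le (m*b), Nat.zero_le (a^2), Nat.zero_le (m*a^2)]
  have := Polynomial.flt_catalan (p := v) (q := u) (r := n) (by omega) (by omega) (by omega) hineq
    (hcast v hvK) (hcast u huK) (hcast n hnK) hB0 hA0 one_ne_zero hcop
    (u := 1) (v := -s) (w := -g) one_ne_zero (neg_ne_zero.2 hr') (neg_ne_zero.2 hg) (by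
      rw [one_pow, Polynomial.C_neg, Polynomial.C_neg, ← h', Polynomial.C_1]; ring)
  rw [hA', hB', Polynomial.natDegree_map_eq_of_injective hj,
    Polynomial.natDegree_map_eq_of_injective hj] at this
  exact ⟨this.2.1, this.1⟩

/-- derivative case -/
lemma fse_C (r : K) : finSuccEquiv K 2 (C r) = Polynomial.C (C r) := by
  have := (finSuccEquiv K 2).commutes r
  exact this

lemma natDegree_of_pow_mul {R : Type*} [CommRing R] [IsDomain R] {v : ℕ} (hv : 2 ≤ v)
    {B E : Polynomial R} {g : R} (hg : g ≠ 0) (h : B ^ (v - 1) * E = Polynomial.C g) :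
    B.natDegree = 0 := by
  have hne : B ^ (v - 1) * E ≠ 0 := by rw [h]; simpa using hg
  have := congrArg Polynomial.natDegree h
  rw [Polynomial.natDegree_mul (left_ne_zero_of_mul hne) (right_ne_zero_of_mul hne),
    Polynomial.natDegree_C, Polynomial.natDegree_pow] at this
  have h2 : (v - 1) * B.natDegree = 0 := by omega
  rcases Nat.mul_eq_zero.1 h2 with h3 | h3 <;> omega

lemma deriv_case (u v : ℕ) (hu : 2 ≤ u) (hv : 2 ≤ v) (r : K) (hr : r ≠ 0)
    (A B : Polynomial (MvPolynomial (Fin 2) K))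
    (h : B ^ v - Polynomial.C (C r) * A ^ u = Polynomial.C (X 1 ^ v - C r * X 0 ^ u)) :
    ((u : K) = 0 → (v : K) ≠ 0 → B.natDegree = 0) ∧ ((v : K) = 0 → (u : K) ≠ 0 → A.natDegree = 0) := by
  obtain ⟨A, rfl⟩ := (finSuccEquiv K 2).surjective A
  obtain ⟨B, rfl⟩ := (finSuccEquiv K 2).surjective B
  have h1 : B ^ v - C r * A ^ u = X 2 ^ v - C r * X 1 ^ u := by
    apply (finSuccEquiv K 2).injective
    rw [map_sub, map_mul, map_pow, map_pow, fse_C, h, ← fse_iota]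
    congr 1
    simp only [map_sub, map_pow, map_mul, iota_X0, iota_X1]
    congr 2
    exact iota.commutes r
  have e1 : finSuccEquiv K 2 (X 1) = Polynomial.C (X 0) := finSuccEquiv_X_succ (j := (0 : Fin 2))
  have e2 : finSuccEquiv K 2 (X 2) = Polynomial.C (X 1) := finSuccEquiv_X_succ (j := (1 : Fin 2))
  have hcast : ∀ n : ℕ, ((n : ℕ) : Sy K) = C (n : K) := fun n => (map_natCast C n).symm
  constructor
  · intro hu0 hv0
    have h2 := congrArg (pderiv (2 : Fin 3)) h1
    rw [map_sub, map_sub, pderiv_C_mul, pderiv_C_mul, pderiv_pow, pderiv_pow, pderiv_pow, pderiv_pow,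
      hcast u, hcast v, hu0, pderiv_X_self] at h2
    simp only [C_0, zero_mul, mul_zero, sub_zero, mul_one] at h2
    rw [mul_assoc] at h2
    have h3 := mul_left_cancel₀ (by rwa [Ne, C_eq_zero] : (C (v : K) : Sy K) ≠ 0) h2
    have h4 := congrArg (finSuccEquiv K 2) h3
    rw [map_mul, map_pow, map_pow, e2, ← Polynomial.C_pow] at h4
    exact natDegree_of_pow_mul hv (pow_ne_zero _ (X_ne_zero _)) h4
  · intro hv0 hu0
    have h2 := congrArg (pderiv (1 : Fin 3)) h1
    rw [map_sub, map_sub, pderiv_C_mul, pderiv_C_mul, pderiv_pow, pderiv_pow, pderiv_pow, pderiv_pow,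
      hcast u, hcast v, hv0, pderiv_X_self] at h2
    simp only [C_0, zero_mul, zero_sub, mul_one, neg_inj] at h2
    replace h2 := mul_left_cancel₀ (by rwa [Ne, C_eq_zero] : (C r : Sy K) ≠ 0) h2
    rw [mul_assoc] at h2
    have h3 := mul_left_cancel₀ (by rwa [Ne, C_eq_zero] : (C (u : K) : Sy K) ≠ 0) h2
    have h4 := congrArg (finSuccEquiv K 2) h3
    rw [map_mul, map_pow, map_pow, e1, ← Polynomial.C_pow] at h4
    exact natDegree_of_pow_mul hu (pow_ne_zero _ (X_ne_zero _)) h4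

lemma C1 (p : ℕ) (hp : p.Prime) [CharP K p] [PerfectField K] (v u : ℕ) (hv : 1 ≤ v) (hvu : v ≤ u)
    (hcop : Nat.Coprime v u) (q : Polynomial K) (N d : ℕ) (hN : q.natDegree = N) (hN1 : 1 ≤ N)
    (hq0 : q.coeff 0 ≠ 0) (hd : u * N ≤ d) (f : MvPolynomial (Fin 2) K) (hf0 : f ≠ 0)
    (hf : f = ∑ k ∈ Finset.range (N + 1), C (q.coeff k) * X 0 ^ (d - u * k) * X 1 ^ (v * k))
    (A B : Polynomial (MvPolynomial (Fin 2) K)) (hA : A.coeff 0 = X 0) (hB : B.coeff 0 = X 1)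
    (hAB : 0 < A.natDegree ∨ 0 < B.natDegree) (h : aeval ![A, B] f = Polynomial.C f) :
    v = 1 ∧ d = u * N ∧ ∃ a r : K, q = Polynomial.C a * (Polynomial.X - Polynomial.C r) ^ N := by
  let R := MvPolynomial (Fin 2) K
  let L := AlgebraicClosure (FractionRing R)
  let j : R →+* L := (algebraMap (FractionRing R) L).comp (algebraMap R (FractionRing R))
  have hj : Function.Injective j :=
    (algebraMap (FractionRing R) L).injective.comp (IsFractionRing.injective R (FractionRing R))
  let i : K →+* L := j.comp C
  letI : Algebra K L := i.toAlgebra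
  have hi : algebraMap K L = i := rfl
  have hu : 1 ≤ u := hv.trans hvu
  have hqne : q ≠ 0 := by rintro rfl; simp at hq0
  obtain ⟨hdN, r, hQ, hconst⟩ := C1a (q.map i) N d u v (by rw [Polynomial.natDegree_map, hN]) hN1
    (by rw [Polynomial.coeff_map]; simpa using hq0) hd hu hv (A.map j) (B.map j)
    (by rwa [Polynomial.natDegree_map_eq_of_injective hj, Polynomial.natDegree_map_eq_of_injective hj])
    (j f) (by rwa [Ne, map_eq_zero_iff j hj]) (by
      rw [← Polynomial.map_C, ← h]
      conv_rhs => rw [hf]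
      simp only [map_sum, map_mul, map_pow, aeval_C, aeval_X]
      rw [Polynomial.map_sum]
      refine Finset.sum_congr rfl fun k _ => ?_
      simp only [Polynomial.map_mul, Polynomial.map_pow, Polynomial.coeff_map]
      congr 2
      rw [show (algebraMap K (Polynomial R)) (q.coeff k) = Polynomial.C (C (q.coeff k)) from rfl,
        Polynomial.map_C]
      rfl)
  obtain ⟨r0, hr0⟩ := descend (L := L) q N hqne hN1 r _ hQ
  subst hr0
  have hq : q = Polynomial.C q.leadingCoeff * (Polynomial.X - Polynomial.C r0) ^ N := by
    apply Polynomial.map_injective i i.injective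
    rw [hQ]
    simp [hi]
  have hr0 : r0 ≠ 0 := by
    rintro rfl
    rw [hq] at hq0
    apply hq0
    simp [Polynomial.coeff_zero_eq_eval_zero]; right; omega
  refine ⟨?_, hdN, _, r0, hq⟩
  by_contra hv1
  have hv2 : 2 ≤ v := by omega
  have hlt : v < u := by
    rcases hvu.lt_or_eq with h1 | h1
    · exact h1
    · subst h1; rw [Nat.coprime_self] at hcop; omega
  have hmain : B ^ v - Polynomial.C (C r0) * A ^ u = Polynomial.C (X 1 ^ v - C r0 * X 0 ^ u) := by
    have h1 : (B ^ v - Polynomial.C (C r0) * A ^ u).natDegree = 0 := by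
      rw [← Polynomial.natDegree_map_eq_of_injective hj]
      rw [Polynomial.map_sub, Polynomial.map_mul, Polynomial.map_pow, Polynomial.map_pow,
        Polynomial.map_C]
      exact hconst
    rw [Polynomial.eq_C_of_natDegree_eq_zero h1]
    congr 1
    simp only [Polynomial.coeff_zero_eq_eval_zero] at hA hB ⊢
    simp [hA, hB]
  have hCr : (C r0 : MvPolynomial (Fin 2) K) ≠ 0 := by rwa [Ne, C_eq_zero]
  have fin1 : B.natDegree = 0 → False := fun hB0 => by
    have := const_of_const (by omega) hCr hmain hB0
    omega
  have fin2 : A.natDegree = 0 → False := fun hA0 => fin1 (const_of_const' (by omega) hmain hA0)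
  have hder := deriv_case u v (by omega) hv2 r0 hr0 A B hmain
  by_cases hu0 : (u : K) = 0
  · refine fin1 (hder.1 hu0 fun hv0 => ?_)
    rw [CharP.cast_eq_zero_iff K p] at hu0 hv0
    exact hp.one_lt.ne' (Nat.dvd_one.1 (hcop ▸ Nat.dvd_gcd hv0 hu0))
  by_cases hv0 : (v : K) = 0
  · exact fin2 (hder.2 hv0 hu0)
  refine fin1 (catalan_case u v (by omega) hv2 hlt hu0 hv0 r0 hr0 A B ?_ ?_ hmain).2
  · rintro rfl; exact X_ne_zero _ hA.symm
  · rintro rfl; exact X_ne_zero _ hB.symm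

end comm2


section step
open MvPolynomial
variable {K : Type*} [Field K]

/-- shear -/
def shearHom (g : Polynomial K) : Weyl K →ₐ[K] Weyl K :=
  wLift (wX K) (wD K + Polynomial.aeval (wX K) g) (by
    have : Polynomial.aeval (wX K) g * wX K = wX K * Polynomial.aeval (wX K) g := by
      have h := congrArg (Polynomial.aeval (wX K)) (Polynomial.X_mul (p := g))
      rw [map_mul, map_mul, Polynomial.aeval_X] at h
      exact h.symm
    rw [add_mul, mul_add, wD_mul_wX, this]; abel)

@[simp] lemma shearHom_X (g : Polynomial K) : shearHom g (wX K) = wX K := by simp [shearHom]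
@[simp] lemma shearHom_D (g : Polynomial K) :
    shearHom g (wD K) = wD K + Polynomial.aeval (wX K) g := by simp [shearHom]
@[simp] lemma shearHom_aeval (g h : Polynomial K) :
    shearHom g (Polynomial.aeval (wX K) h) = Polynomial.aeval (wX K) h := by
  rw [← Polynomial.aeval_algHom_apply, shearHom_X]

lemma shear_add (g h : Polynomial K) : (shearHom g).comp (shearHom h) = shearHom (g + h) := by
  apply w_hom_ext
  · simp
  · simp [add_assoc]

lemma shear_zero : shearHom (0 : Polynomial K) = AlgHom.id K _ := by
  apply w_hom_ext <;> simp

def shear (g : Polynomial K) : Weyl K ≃ₐ[K] Weyl K :=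
  AlgEquiv.ofAlgHom (shearHom g) (shearHom (-g))
    (by rw [shear_add, add_neg_cancel, shear_zero]) (by rw [shear_add, neg_add_cancel, shear_zero])

lemma shear_coe (g : Polynomial K) : (shear g).toAlgHom = shearHom g := rfl
@[simp] lemma shear_X (g : Polynomial K) : shear g (wX K) = wX K := shearHom_X g
@[simp] lemma shear_D (g : Polynomial K) :
    shear g (wD K) = wD K + Polynomial.aeval (wX K) g := shearHom_D g

lemma swap_aux1 {S : Type*} [Ring S] {a b : S} (h : b * a = a * b + 1) : -a * b = b * -a + 1 := by
  rw [neg_mul, mul_neg, h]; abel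
lemma swap_aux2 {S : Type*} [Ring S] {a b : S} (h : b * a = a * b + 1) : a * -b = -b * a + 1 := by
  rw [neg_mul, mul_neg, h]; abel

lemma neg_one_smul_aux {S : Type*} [Ring S] [Algebra K S] (b : S) : (-1 : K) • b = -b :=
  neg_one_smul K b

/-- swap -/
def swapHom : Weyl K →ₐ[K] Weyl K := wLift (wD K) (-wX K) (swap_aux1 wD_mul_wX)
def swapInv : Weyl K →ₐ[K] Weyl K := wLift (-wD K) (wX K) (swap_aux2 wD_mul_wX)

def swap (K : Type*) [Field K] : Weyl K ≃ₐ[K] Weyl K :=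
  AlgEquiv.ofAlgHom swapHom swapInv
    (by apply w_hom_ext <;> simp [swapHom, swapInv])
    (by apply w_hom_ext <;> simp [swapHom, swapInv])

@[simp] lemma swap_X : swap K (wX K) = wD K := wLift_X _ _ _
@[simp] lemma swap_D : swap K (wD K) = -wX K := wLift_D _ _ _

lemma coeff_swap (f : MvPolynomial (Fin 2) K) (i j : ℕ) :
    coeff (ex i j) (aeval ![(X 1 : MvPolynomial (Fin 2) K), -X 0] f) =
      (-1) ^ i * coeff (ex j i) f := by
  classical
  induction f using MvPolynomial.induction_on' with
  | monomial n a =>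
    have h1 : aeval ![(X 1 : MvPolynomial (Fin 2) K), -X 0] (monomial n a) =
        monomial (ex (n 1) (n 0)) ((-1) ^ n 1 * a) := by
      rw [monomial2, monomial2]
      simp only [map_mul, map_pow, aeval_X, aeval_C, ex_zero, ex_one]
      simp [neg_pow (X 0 : MvPolynomial (Fin 2) K)]
      ring
    rw [h1, coeff_monomial, coeff_monomial]
    by_cases h : n = ex j i
    · subst h; simp
    · rw [if_neg h, if_neg, mul_zero]
      intro h2
      apply h
      have e0 := DFunLike.congr_fun h2 0
      have e1 := DFunLike.congr_fun h2 1
      simp only [ex_zero, ex_one] at e0 e1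
      exact ex_ext e1 e0
  | add p q h1 h2 => rw [map_add, coeff_add, coeff_add, h1, h2]; ring

lemma swap_step {c c' : MvPolynomial (Fin 2) K} {d : ℤ} (hc : Deg 1 1 d c)
    (h : swap K (oev (wX K) (wD K) c) = oev (wX K) (wD K) c') :
    Deg 1 1 d c' ∧ ∀ i j : ℕ, (i : ℤ) + j = d → (coeff (ex i j) c' ≠ 0 ↔ coeff (ex j i) c ≠ 0) := by
  have hw : 1 ≤ (![0, 1, 1] : Fin 3 → ℤ) 1 + (![0, 1, 1] : Fin 3 → ℤ) 2 := by simp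
  have := transform (w := ![0, 1, 1]) hw (c := c) (c' := c') (D := d) (swap K).toAlgHom (p := X 1) (q := -X 0)
    (by
      rw [show (swap K).toAlgHom (wX K) = wD K from swap_X, CA_D, iota_X1]
      exact LF.D)
    (by
      rw [show (swap K).toAlgHom (wD K) = -wX K from swap_D, map_neg, CA_X, map_neg, iota_X0]
      have := (LF.X (K := K) (w := ![0, 1, 1])).smul (-1)
      have e : (-1 : K) • bX K = -bX K := neg_one_smul_aux (S := BW K) (bX K)
      have e' : (-1 : K) • (X 1 : Sy K) = -X 1 := neg_one_smul K _
      rw [e, e'] at this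
      exact this)
    hc h
  refine ⟨this.1, fun i j hij => ?_⟩
  have h1 := congrArg (coeff (ex i j)) this.2
  rw [coeff_swap, coeff_lead, coeff_lead] at h1
  simp only [ex_zero, ex_one] at h1
  rw [if_pos (by simpa using hij), if_pos (by simp; omega)] at h1
  rw [h1]
  simp

lemma no_pure (σ : Weyl K ≃ₐ[K] Weyl K) (c : MvPolynomial (Fin 2) K)
    (hc : σ (wX K) = oev (wX K) (wD K) c) (d : ℕ) (hd : 2 ≤ d) (hD : Deg 1 1 d c)
    (hcd : coeff (ex d 0) c ≠ 0) : ∃ n, coeff n c ≠ 0 ∧ 0 < n 1 := by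
  by_contra! hcon
  replace hcon : ∀ n, coeff n c ≠ 0 → n 1 = 0 := fun n hn => Nat.le_zero.1 (hcon n hn)
  set z := σ.symm (wX K) with hz
  have hxz : bX K = oev (CA z) (CA z) c := by
    have h1 : wX K = oev z (σ.symm (wD K)) c := by
      have := map_oev σ.symm.toAlgHom (wX K) (wD K) c
      rw [← hc] at this
      rw [← show σ.symm.toAlgHom (σ (wX K)) = wX K from σ.symm_apply_apply _, this]
      rfl
    have h2 : wX K = oev z z c := by
      rw [oev_eq_sum]
      rw [oev_eq_sum] at h1
      rw [h1]
      refine Finset.sum_congr rfl fun n hn => ?_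
      rw [hcon n (mem_support_iff.1 hn)]
      simp
    rw [← CA_X]
    conv_lhs => rw [h2]
    exact map_oev CA z z c
  have hz0 : (CA z : BW K) ≠ 0 := by
    intro h
    have h1 : z = 0 := CA_inj (by rw [h, map_zero])
    have h2 : wX K = 0 := by
      rw [← σ.apply_symm_apply (wX K), ← hz, h1, map_zero]
    have h3 : symb (bX K) = X 1 := by rw [symb_def, rho_X, mul_one]
    rw [← CA_X, h2, map_zero, map_zero] at h3
    exact X_ne_zero _ h3.symm
  have hw : 1 ≤ (![0, 1, 1] : Fin 3 → ℤ) 1 + (![0, 1, 1] : Fin 3 → ℤ) 2 := by simp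
  obtain ⟨m, g, hg, hLF⟩ := LF.exists (w := ![0, 1, 1]) hz0
  have hX := LF.X (K := K) (w := ![0, 1, 1])
  have hbd : ∀ n, coeff n c ≠ 0 → n 0 ≤ d := by
    intro n hn
    have := hD n hn
    rw [hcon n hn] at this
    simpa using this
  rcases le_or_gt m 0 with hm | hm
  · have hDeg : Deg m m 0 c := by
      intro n hn
      rw [hcon n hn]
      have : (0 : ℤ) ≤ n 0 := by positivity
      simp only [CharP.cast_eq_zero, zero_mul, add_zero]
      nlinarith
    have h1 := LF.subst hw hLF hLF hDeg
    rw [← hxz] at h1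
    have h2 := hX.unique (h1.up (m' := (![0, 1, 1] : Fin 3 → ℤ) 1) (by simp))
    exact X_ne_zero _ h2
  · have hDeg : Deg m m (d * m) c := by
      intro n hn
      rw [hcon n hn]
      have : (n 0 : ℤ) ≤ d := by exact_mod_cast hbd n hn
      simp only [CharP.cast_eq_zero, zero_mul, add_zero]
      exact mul_le_mul_of_nonneg_right this hm.le
    have h1 := LF.subst hw hLF hLF hDeg
    rw [← hxz] at h1
    have hl : lead m m (d * m) c = monomial (ex d 0) (coeff (ex d 0) c) := by
      classical
      ext n
      rw [coeff_lead, coeff_monomial]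
      by_cases hn : coeff n c = 0
      · rw [hn, ite_self]
        split_ifs with h
        · rw [h, hn]
        · rfl
      · have h1 := hcon n hn
        by_cases h2 : n 0 = d
        · have : n = ex d 0 := ex_ext h2 h1
          subst this
          simp
        · rw [if_neg, if_neg]
          · intro h; apply h2; rw [← h]; simp
          · rw [h1]
            simp only [CharP.cast_eq_zero, zero_mul, add_zero]
            intro h
            apply h2
            exact_mod_cast mul_right_cancel₀ hm.ne' h
    rw [hl, monomial2] at h1
    have h2 := hX.deg_unique (X_ne_zero _) h1 (by
      simp only [map_mul, map_pow, aeval_X, aeval_C, ex_zero, ex_one]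
      simpa using ⟨hcd, fun h => absurd h hg⟩)
    have h3 : (d : ℤ) * m = 1 := by simpa using h2.symm
    have h4 : (2 : ℤ) ≤ d := by exact_mod_cast hd
    nlinarith

end step


section reduce
open MvPolynomial
variable {K : Type*} [Field K]

lemma lead_sum (c : MvPolynomial (Fin 2) K) (v u d N : ℕ) (hv : 1 ≤ v) (hu : 1 ≤ u)
    (hcop : Nat.Coprime v u) (hN : u * N ≤ d)
    (hbig : ∀ k, N < k → u * k ≤ d → coeff (ex (d - u * k) (v * k)) c = 0) :
    lead v u (v * d) c = ∑ k ∈ Finset.range (N + 1),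
      C (coeff (ex (d - u * k) (v * k)) c) * X 0 ^ (d - u * k) * X 1 ^ (v * k) := by
  classical
  ext n
  rw [coeff_lead, coeff_sum]
  have hterm : ∀ k, coeff n (C (coeff (ex (d - u * k) (v * k)) c) * X 0 ^ (d - u * k) * X 1 ^ (v * k)) =
      if ex (d - u * k) (v * k) = n then coeff (ex (d - u * k) (v * k)) c else 0 := by
    intro k
    rw [← coeff_monomial, monomial2]
    simp only [ex_zero, ex_one, mul_assoc]
  simp only [hterm]
  split_ifs with h
  · have h' : n 0 * v + n 1 * u = v * d := by exact_mod_cast h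
    have hdvd : v ∣ n 1 := by
      apply hcop.dvd_of_dvd_mul_right
      exact (Nat.dvd_add_right (Dvd.intro_left _ rfl)).1 (h' ▸ Dvd.intro _ rfl)
    obtain ⟨k, hk⟩ := hdvd
    have h2 : n 0 + u * k = d := by
      apply Nat.eq_of_mul_eq_mul_left (by omega : 0 < v)
      rw [← h', hk]; ring
    have hn : n = ex (d - u * k) (v * k) := ex_ext (by omega) hk
    by_cases hkN : k ≤ N
    · rw [Finset.sum_eq_single k]
      · rw [← hn, if_pos rfl]
      · intro b _ hb
        rw [if_neg]
        intro he
        have := DFunLike.congr_fun he 1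
        rw [ex_one, hk] at this
        exact hb (Nat.eq_of_mul_eq_mul_left (by omega) this)
      · intro h; simp at h; omega
    · have h0 := hbig k (by omega) (by omega)
      rw [← hn] at h0
      rw [h0]
      symm
      apply Finset.sum_eq_zero
      intro b _
      split_ifs with he
      · rw [he, h0]
      · rfl
  · symm
    apply Finset.sum_eq_zero
    intro k hk
    rw [if_neg]
    intro he
    apply h
    have hkN : k ≤ N := by simp at hk; omega
    have h1 := Nat.mul_le_mul_left u hkN
    rw [← he, ex_zero, ex_one]
    have h2 : d = (d - u * k) + u * k := by omega
    have h3 : (d : ℤ) = ((d - u * k : ℕ) : ℤ) + u * k := by exact_mod_cast h2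
    push_cast
    linear_combination (-(v:ℤ)) * h3

lemma step (p : ℕ) (hp : p.Prime) [CharP K p] [PerfectField K] (σ : Weyl K ≃ₐ[K] Weyl K)
    (c : MvPolynomial (Fin 2) K)
    (hc : σ (wX K) = oev (wX K) (wD K) c) (d : ℕ) (hd : 2 ≤ d) (hD : Deg 1 1 d c)
    (hcd : coeff (ex d 0) c ≠ 0) :
    ∃ u : ℕ, 1 ≤ u ∧ (∃ n : Fin 2 →₀ ℕ, 0 < n 1 ∧ coeff n c ≠ 0 ∧ n 0 + u * n 1 = d) ∧
      ∃ g : Polynomial K, ∃ c' : MvPolynomial (Fin 2) K, shear g (σ (wX K)) = oev (wX K) (wD K) c' ∧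
        Deg 1 u d c' ∧ ∀ n : Fin 2 →₀ ℕ, n 0 + u * n 1 = d → coeff n c' ≠ 0 → n 0 = 0 := by
  classical
  obtain ⟨n₁, hn₁, hn₁'⟩ := no_pure σ c hc d hd hD hcd
  obtain ⟨m, hm, hmin⟩ := Finset.exists_min_image (c.support.filter fun n => 0 < n 1)
    (fun n => ((d : ℚ) - n 0) / n 1) ⟨n₁, by simp [hn₁, hn₁']⟩
  rw [Finset.mem_filter, mem_support_iff] at hm
  have hDn : ∀ n, coeff n c ≠ 0 → n 0 + n 1 ≤ d := by
    intro n hn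
    have := hD n hn
    simp only [mul_one] at this
    exact_mod_cast this
  have hm1 := hDn m hm.1
  obtain ⟨U, hU⟩ : ∃ U, U = d - m 0 := ⟨_, rfl⟩
  obtain ⟨V, hV⟩ : ∃ V, V = m 1 := ⟨_, rfl⟩
  have hV1 : 0 < V := by rw [hV]; exact hm.2
  have hg : 0 < Nat.gcd V U := Nat.gcd_pos_of_pos_left _ hV1
  obtain ⟨g, hgd⟩ : ∃ g, g = Nat.gcd V U := ⟨_, rfl⟩
  rw [← hgd] at hg
  obtain ⟨v, hv⟩ : ∃ v, V = g * v := by rw [hgd]; exact Nat.gcd_dvd_left V U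
  obtain ⟨u, hu⟩ : ∃ u, U = g * u := by rw [hgd]; exact Nat.gcd_dvd_right V U
  have hcop : Nat.Coprime v u := by
    have h1 : g * Nat.gcd v u = g * 1 := by
      rw [← Nat.gcd_mul_left, ← hv, ← hu, ← hgd, mul_one]
    exact Nat.eq_of_mul_eq_mul_left hg h1
  have hv1 : 1 ≤ v := by
    rcases Nat.eq_zero_or_pos v with h | h
    · rw [h] at hv; omega
    · exact h
  have hvu : v ≤ u := by
    apply Nat.le_of_mul_le_mul_left _ hg
    rw [← hv, ← hu]; omega
  have hDvu : Deg v u (v * d) c := by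
    intro n hn
    rcases Nat.eq_zero_or_pos (n 1) with h0 | h0
    · rw [h0]
      have := hDn n hn
      have h1 : (n 0 : ℤ) ≤ d := by exact_mod_cast (by omega : n 0 ≤ d)
      simp only [CharP.cast_eq_zero, zero_mul, add_zero]
      rw [mul_comm]
      exact mul_le_mul_of_nonneg_left h1 (by positivity)
    · have h1 := hmin n (by simp [hn, h0])
      have h2 : (0 : ℚ) < m 1 := by exact_mod_cast hm.2
      have h3 : (0 : ℚ) < n 1 := by exact_mod_cast h0
      rw [div_le_div_iff₀ h2 h3] at h1
      have h4 : ((d : ℤ) - m 0) * n 1 ≤ ((d : ℤ) - n 0) * m 1 := by exact_mod_cast h1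
      have h5 : ((d : ℤ) - m 0) = g * u := by
        have : d - m 0 = g * u := by rw [← hU, hu]
        have h6 : d = m 0 + g * u := by omega
        have h7 : (d : ℤ) = m 0 + g * u := by exact_mod_cast h6
        linarith
      have h6 : (m 1 : ℤ) = g * v := by
        have : m 1 = g * v := by rw [← hV, hv]
        exact_mod_cast this
      rw [h5, h6] at h4
      have h7 : (0 : ℤ) < g := by exact_mod_cast hg
      have h8 : (g : ℤ) * (u * n 1) ≤ g * ((d - n 0) * v) := by linarith
      have h9 := le_of_mul_le_mul_left h8 h7
      linarith
  have hu1 : 1 ≤ u := hv1.trans hvu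
  let q : Polynomial K := ∑ k ∈ Finset.range (d / u + 1),
    Polynomial.monomial k (coeff (ex (d - u * k) (v * k)) c)
  have hqc : ∀ k, q.coeff k = if u * k ≤ d then coeff (ex (d - u * k) (v * k)) c else 0 := by
    intro k
    simp only [q, Polynomial.finsetSum_coeff, Polynomial.coeff_monomial, Finset.sum_ite_eq',
      Finset.mem_range, Nat.lt_succ_iff]
    have hk : (k ≤ d / u) ↔ (u * k ≤ d) := by rw [Nat.le_div_iff_mul_le (by omega), mul_comm]
    simp only [hk]
  have hq0 : q.coeff 0 ≠ 0 := by
    rw [hqc]; simpa using hcd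
  have hqne : q ≠ 0 := by intro h; rw [h] at hq0; simp at hq0
  have hqg : q.coeff g ≠ 0 := by
    rw [hqc, mul_comm u, ← hu, if_pos (by omega), mul_comm v, ← hv]
    have : ex (d - U) V = m := by rw [ex_ext (n := m) (i := d - U) (j := V) (by omega) hV.symm]
    rw [this]; exact hm.1
  obtain ⟨N, hN⟩ : ∃ N, N = q.natDegree := ⟨_, rfl⟩
  have hN1 : 1 ≤ N := by
    have := Polynomial.le_natDegree_of_ne_zero hqg
    omega
  have hNd : u * N ≤ d := by
    by_contra h
    have h1 := hqc N
    rw [if_neg h, hN, Polynomial.coeff_natDegree, Polynomial.leadingCoeff_eq_zero] at h1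
    exact hqne h1
  have hlead := lead_sum c v u d N hv1 hu1 hcop hNd (by
    intro k hk hk'
    have h1 := hqc k
    rw [if_pos hk', Polynomial.coeff_eq_zero_of_natDegree_lt (by omega)] at h1
    exact h1.symm)
  have hsum : ∀ k ∈ Finset.range (N + 1), coeff (ex (d - u * k) (v * k)) c = q.coeff k := by
    intro k hk
    rw [hqc, if_pos]
    refine (Nat.mul_le_mul_left u ?_).trans hNd
    simp at hk; omega
  have hlead' : lead v u (v * d) c = ∑ k ∈ Finset.range (N + 1),
      C (q.coeff k) * X 0 ^ (d - u * k) * X 1 ^ (v * k) := by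
    rw [hlead]
    refine Finset.sum_congr rfl fun k hk => ?_
    rw [hsum k hk]
  have hne : lead v u (v * d) c ≠ 0 := by
    intro h
    have h1 := congrArg (coeff (ex d 0)) h
    rw [coeff_lead, if_pos (by simp [mul_comm])] at h1
    exact hcd h1
  obtain ⟨A, B, hA, hB, hAB, hid⟩ := key σ c hc v u (v * d) (by exact_mod_cast hv1)
    (by exact_mod_cast hu1) hDvu
  obtain ⟨rfl, hdN, a, r, hq⟩ := C1 p hp v u hv1 hvu hcop q N d hN.symm hN1 hq0 hNd _ hne hlead' A B hA hB
    hAB hid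
  have hlf : lead 1 u d c = C a * (X 1 - C r * X 0 ^ u) ^ N := by
    have h1 := aeval_homogenize_pow (S := MvPolynomial (Fin 2) K) a r N (X 0 ^ u) (X 1)
    rw [← hq, aeval_homogenize_sum] at h1
    have h2 : lead ((1 : ℕ) : ℤ) u ((1 : ℕ) * d) c = lead 1 u d c := by simp
    rw [← h2, hlead']
    rw [MvPolynomial.algebraMap_eq] at h1
    rw [← h1]
    refine Finset.sum_congr rfl fun k hk => ?_
    have hk' : k ≤ N := by simp at hk; omega
    rw [← pow_mul, Nat.mul_sub, ← hdN, one_mul, mul_assoc]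
  have hD1 : Deg 1 u d c := by simpa using hDvu
  refine ⟨u, hu1, ⟨m, hm.2, hm.1, ?_⟩, Polynomial.C r * Polynomial.X ^ u, ?_⟩
  · rw [← hV, hv, mul_one, mul_comm, ← hu]; omega
  · obtain ⟨c', hc'⟩ := exists_expr (shear (Polynomial.C r * Polynomial.X ^ u) (σ (wX K)))
    refine ⟨c', hc', ?_⟩
    have hw : 1 ≤ (![0, 1, (u : ℤ)] : Fin 3 → ℤ) 1 + (![0, 1, (u : ℤ)] : Fin 3 → ℤ) 2 := by simp
    have := transform (w := ![0, 1, (u : ℤ)]) hw (c := c) (c' := c') (D := d)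
      (shearHom (Polynomial.C r * Polynomial.X ^ u)) (p := X 0) (q := X 1 + r • X 0 ^ u)
      (by
        rw [shearHom_X, CA_X, iota_X0]
        exact LF.X)
      (by
        rw [shearHom_D]
        have e : Polynomial.aeval (wX K) (Polynomial.C r * Polynomial.X ^ u) = r • wX K ^ u := by
          rw [map_mul, Polynomial.aeval_C, map_pow, Polynomial.aeval_X, Algebra.smul_def]
        rw [e, map_add, map_smul, map_pow, CA_D, CA_X, map_add, map_smul, map_pow, iota_X0, iota_X1]
        refine LF.add LF.D ?_
        have := ((LF.X (K := K) (w := ![0, 1, (u : ℤ)])).pow hw u).smul r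
        simpa using this)
      hD1 (by rw [← hc]; exact hc')
    refine ⟨this.1, fun n hn hcn => ?_⟩
    have h1 : lead 1 u d c' = C a * X 1 ^ N := by
      have h2 := this.2
      simp only [Matrix.cons_val_one, Matrix.cons_val_zero, Matrix.cons_val] at h2
      rw [h2, hlf]
      simp only [map_mul, map_pow, map_sub, aeval_X, aeval_C, Matrix.cons_val_one, Matrix.cons_val_zero,
        MvPolynomial.algebraMap_eq, MvPolynomial.smul_eq_C_mul, add_sub_cancel_right]
    have h3 := congrArg (coeff n) h1
    rw [coeff_lead, if_pos (by simp; rw [mul_comm]; exact_mod_cast hn)] at h3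
    rw [h3] at hcn
    by_contra hn0
    apply hcn
    have : (C a * X 1 ^ N : MvPolynomial (Fin 2) K) = monomial (ex 0 N) a := by
      rw [monomial2]; simp
    rw [this, coeff_monomial, if_neg]
    intro h; apply hn0; rw [← h]; simp

/-- reducibility -/
def Red (G : Subgroup (Weyl K ≃ₐ[K] Weyl K)) (a : Weyl K) (d : ℕ) : Prop :=
  ∃ τ ∈ G, ∃ c' : MvPolynomial (Fin 2) K, τ a = oev (wX K) (wD K) c' ∧ Deg 1 1 d c'

lemma Red.trans {G : Subgroup (Weyl K ≃ₐ[K] Weyl K)} {τ : Weyl K ≃ₐ[K] Weyl K} (hτ : τ ∈ G)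
    {a : Weyl K} {d : ℕ} (h : Red G (τ a) d) : Red G a d := by
  obtain ⟨ρ, hρ, c', h1, h2⟩ := h
  exact ⟨ρ * τ, G.mul_mem hρ hτ, c', h1, h2⟩

variable {G : Subgroup (Weyl K ≃ₐ[K] Weyl K)}

lemma red_u2 {c' : MvPolynomial (Fin 2) K} {d u : ℕ} (hd : 2 ≤ d) (hu : 2 ≤ u) (h : Deg 1 u d c')
    (hn : ∀ n, n 0 + u * n 1 = d → coeff n c' ≠ 0 → n 0 = 0) : Deg 1 1 (d - 1 : ℕ) c' := by
  intro n hcn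
  have h1 := h n hcn
  have h2 : n 0 + n 1 * u ≤ d := by
    simp only [mul_one] at h1
    exact_mod_cast h1
  have h3 : n 1 * 2 ≤ n 1 * u := Nat.mul_le_mul_left _ hu
  simp only [mul_one]
  have : n 0 + n 1 ≤ d - 1 := by
    by_contra h4
    have h5 : n 1 = 0 := by omega
    have h6 : n 0 = d := by rw [h5] at h2 h4; omega
    have := hn n (by rw [h5]; simpa using h6) hcn
    omega
  exact_mod_cast this

lemma red_one (p : ℕ) (hp : p.Prime) [CharP K p] [PerfectField K] (hshear : ∀ g, shear g ∈ G)
    (σ : Weyl K ≃ₐ[K] Weyl K) (c : MvPolynomial (Fin 2) K)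
    (hc : σ (wX K) = oev (wX K) (wD K) c) (d : ℕ) (hd : 2 ≤ d) (hD : Deg 1 1 d c)
    (hcd : coeff (ex d 0) c ≠ 0) (htop : ∀ n, n 0 + n 1 = d → coeff n c ≠ 0 → n 1 = 0) :
    Red G (σ (wX K)) (d - 1) := by
  obtain ⟨u, hu, ⟨n, hn1, hn2, hn3⟩, g, c', h1, h2, h3⟩ := step p hp σ c hc d hd hD hcd
  have hu2 : 2 ≤ u := by
    by_contra h
    have hu1 : u = 1 := by omega
    rw [hu1, one_mul] at hn3
    have := htop n hn3 hn2
    omega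
  exact ⟨shear g, hshear g, c', h1, red_u2 hd hu2 h2 h3⟩

lemma red_two (p : ℕ) (hp : p.Prime) [CharP K p] [PerfectField K] (hshear : ∀ g, shear g ∈ G)
    (hswap : swap K ∈ G)
    (σ : Weyl K ≃ₐ[K] Weyl K) (c : MvPolynomial (Fin 2) K)
    (hc : σ (wX K) = oev (wX K) (wD K) c) (d : ℕ) (hd : 2 ≤ d) (hD : Deg 1 1 d c)
    (hcd : coeff (ex d 0) c ≠ 0) :
    Red G (σ (wX K)) (d - 1) := by
  obtain ⟨u, hu, -, g, c', h1, h2, h3⟩ := step p hp σ c hc d hd hD hcd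
  by_cases hu2 : 2 ≤ u
  · exact ⟨shear g, hshear g, c', h1, red_u2 hd hu2 h2 h3⟩
  have hu1 : u = 1 := by omega
  subst hu1
  simp only [Nat.cast_one, one_mul] at h2 h3
  by_cases h0 : coeff (ex 0 d) c' = 0
  · refine ⟨shear g, hshear g, c', h1, fun n hn => ?_⟩
    have h4 := h2 n hn
    simp only [mul_one] at h4 ⊢
    have h4' : n 0 + n 1 ≤ d := by exact_mod_cast h4
    have : n 0 + n 1 ≤ d - 1 := by
      by_contra h5
      have h6 := h3 n (by omega) hn
      apply hn
      rw [ex_ext (n := n) (i := 0) (j := d) h6 (by omega), h0]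
    exact_mod_cast this
  · apply Red.trans (hshear g)
    apply Red.trans hswap
    obtain ⟨c'', hc''⟩ := exists_expr (swap K (shear g (σ (wX K))))
    have h4 := swap_step (c' := c'') h2 (by rw [← h1]; exact hc'')
    refine red_one p hp hshear (swap K * shear g * σ) c'' hc'' d hd h4.1 ?_ ?_
    · exact (h4.2 d 0 (by simp)).2 h0
    · intro n hn hcn
      rw [← ex_eta n] at hcn
      have := (h4.2 (n 0) (n 1) (by exact_mod_cast hn)).1 hcn
      simpa using h3 _ (by simp; omega) this

lemma red (p : ℕ) (hp : p.Prime) [CharP K p] [PerfectField K] (hshear : ∀ g, shear g ∈ G)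
    (hswap : swap K ∈ G)
    (σ : Weyl K ≃ₐ[K] Weyl K) (c : MvPolynomial (Fin 2) K)
    (hc : σ (wX K) = oev (wX K) (wD K) c) (d : ℕ) (hd : 2 ≤ d) (hD : Deg 1 1 d c) :
    Red G (σ (wX K)) (d - 1) := by
  by_cases h1 : coeff (ex d 0) c ≠ 0
  · exact red_two p hp hshear hswap σ c hc d hd hD h1
  by_cases h2 : coeff (ex 0 d) c ≠ 0
  · apply Red.trans hswap
    obtain ⟨c', hc'⟩ := exists_expr (swap K (σ (wX K)))
    have h4 := swap_step (c' := c') hD (by rw [← hc]; exact hc')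
    refine red_two p hp hshear hswap (swap K * σ) c' hc' d hd h4.1 ?_
    exact (h4.2 d 0 (by simp)).2 h2
  push Not at h1 h2
  by_cases hl : lead 1 1 d c = 0
  · refine ⟨1, G.one_mem, c, hc, fun n hn => ?_⟩
    have h3 := congrArg (coeff n) hl
    rw [coeff_lead] at h3
    split_ifs at h3 with h4
    · exact absurd h3 hn
    · have := lt_of_le_of_ne (hD n hn) h4
      omega
  · exfalso
    obtain ⟨A, B, hA, hB, hAB, hid⟩ := key σ c hc 1 1 d (by norm_num) (by norm_num) hD
    have hdv : ∀ n ∈ c.support.filter (fun n => (n 0 : ℤ) * 1 + n 1 * 1 = d), n 0 ≠ 0 ∧ n 1 ≠ 0 := by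
      intro n hn
      rw [Finset.mem_filter, mem_support_iff] at hn
      have h3 : n 0 + n 1 = d := by
        have := hn.2
        simp only [mul_one] at this
        exact_mod_cast this
      constructor
      · intro h0
        apply hn.1
        rw [ex_ext (n := n) (i := 0) (j := d) h0 (by omega), h2]
      · intro h0
        apply hn.1
        rw [ex_ext (n := n) (i := d) (j := 0) (by omega) h0, h1]
    have hAd : A ∣ Polynomial.C (lead 1 1 d c) := by
      rw [← hid]
      conv_rhs => rw [lead, map_sum]
      refine Finset.dvd_sum fun n hn => ?_
      rw [monomial2]
      simp only [map_mul, map_pow, aeval_X, Matrix.cons_val_zero]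
      exact ((dvd_pow_self A (hdv n hn).1).mul_right _).mul_left _
    have hBd : B ∣ Polynomial.C (lead 1 1 d c) := by
      rw [← hid]
      conv_rhs => rw [lead, map_sum]
      refine Finset.dvd_sum fun n hn => ?_
      rw [monomial2]
      simp only [map_mul, map_pow, aeval_X, Matrix.cons_val_one, Matrix.cons_val_zero]
      exact ((dvd_pow_self B (hdv n hn).2).mul_left _).mul_left _
    have hne : (Polynomial.C (lead 1 1 (d : ℤ) c)) ≠ 0 := by simpa using hl
    have e1 := Polynomial.natDegree_le_of_dvd hAd hne
    have e2 := Polynomial.natDegree_le_of_dvd hBd hne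
    rw [Polynomial.natDegree_C] at e1 e2
    omega

end reduce


section final
open MvPolynomial
variable {K : Type*} [Field K]

lemma wX_ne_const (t : K) : wX K ≠ algebraMap K (Weyl K) t := by
  intro h
  have h1 : symb (bX K) = X 1 := by rw [symb_def, rho_X, mul_one]
  have h2 : symb (algebraMap K (BW K) t) = C t := by
    rw [symb_def, AlgHom.commutes, Module.algebraMap_end_apply, MvPolynomial.smul_eq_C_mul, mul_one]
  have h3 : bX K = algebraMap K (BW K) t := by rw [← CA_X, h, AlgHom.commutes]
  rw [h3, h2] at h1
  have h4 := congrArg (coeff (Finsupp.single (1 : Fin 3) 1)) h1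
  rw [coeff_X', coeff_C, if_neg, if_pos rfl] at h4
  · exact zero_ne_one h4
  · intro h5
    have := DFunLike.congr_fun h5 1
    simp at this

lemma sigma_ne_const (σ : Weyl K ≃ₐ[K] Weyl K) (t : K) : σ (wX K) ≠ algebraMap K (Weyl K) t := by
  intro h
  apply wX_ne_const (K := K) t
  apply σ.injective
  rw [h, AlgEquiv.commutes]

lemma wdeg_le_one {a : Weyl K} {r s t : K}
    (h : a = r • wX K + s • wD K + algebraMap K (Weyl K) t) : wdeg K a ≤ 1 := by
  apply Nat.sInf_le
  rw [Set.mem_ofPred_eq, h, Algebra.algebraMap_eq_smul_one]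
  refine Submodule.add_mem _ (Submodule.add_mem _ ?_ ?_) ?_ <;>
    refine Submodule.smul_mem _ _ (Submodule.subset_span ?_)
  · exact ⟨1, 0, by simp, by simp⟩
  · exact ⟨0, 1, by simp, by simp⟩
  · exact ⟨0, 0, by simp, by simp⟩

lemma affine_mem (σ : Weyl K ≃ₐ[K] Weyl K) {r s t r' s' t' : K}
    (hx : σ (wX K) = r • wX K + s • wD K + algebraMap K (Weyl K) t)
    (hy : σ (wD K) = r' • wX K + s' • wD K + algebraMap K (Weyl K) t') :
    max (wdeg K (σ (wX K))) (wdeg K (σ (wD K))) = 1 := by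
  have h1 := wdeg_le_one hx
  have h2 := wdeg_le_one hy
  have h3 : wdeg K (σ (wX K)) ≠ 0 := by
    intro h0
    have hne : {n : ℕ | σ (wX K) ∈ Submodule.span K
        {w : Weyl K | ∃ i j : ℕ, i + j ≤ n ∧ w = wX K ^ i * wD K ^ j}}.Nonempty := by
      by_contra hcon
      rw [Set.not_nonempty_iff_eq_empty] at hcon
      refine Set.eq_empty_iff_forall_notMem.1 hcon 1 ?_
      rw [Set.mem_ofPred_eq, hx, Algebra.algebraMap_eq_smul_one]
      refine Submodule.add_mem _ (Submodule.add_mem _ ?_ ?_) ?_ <;>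
        refine Submodule.smul_mem _ _ (Submodule.subset_span ?_)
      · exact ⟨1, 0, by simp, by simp⟩
      · exact ⟨0, 1, by simp, by simp⟩
      · exact ⟨0, 0, by simp, by simp⟩
    have h4 := Nat.sInf_mem hne
    rw [show sInf _ = 0 from h0, Set.mem_ofPred_eq] at h4
    have h5 : {w : Weyl K | ∃ i j : ℕ, i + j ≤ 0 ∧ w = wX K ^ i * wD K ^ j} ⊆ {1} := by
      rintro w ⟨i, j, hij, rfl⟩
      have hi : i = 0 := by omega
      have hj : j = 0 := by omega
      simp [hi, hj]
    obtain ⟨a, ha⟩ := Submodule.mem_span_singleton.1 (Submodule.span_mono h5 h4)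
    apply sigma_ne_const σ a
    rw [← ha, Algebra.algebraMap_eq_smul_one]
  omega

lemma aff_aux {S : Type*} [Ring S] [Algebra K S] {a b : S} (h : b * a = a * b + 1) {α δ : K}
    (hαδ : α * δ = 1) (β γ : K) :
    (δ • b) * (α • a + β • b + algebraMap K S γ) = (α • a + β • b + algebraMap K S γ) * (δ • b) + 1 := by
  rw [Algebra.algebraMap_eq_smul_one]
  simp only [mul_add, add_mul, smul_mul_assoc, mul_smul_comm, smul_smul, h, smul_add, mul_one, one_mul]
  rw [mul_comm δ α, hαδ, one_smul, mul_comm β δ, mul_comm γ δ, one_smul]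
  abel

/-- affine maps -/
def affHom (α β γ δ : K) (h : α * δ = 1) : Weyl K →ₐ[K] Weyl K :=
  wLift (α • wX K + β • wD K + algebraMap K (Weyl K) γ) (δ • wD K) (aff_aux wD_mul_wX h β γ)

lemma aff_aux2 {S : Type*} [AddCommGroup S] [Module K S] (a b e : S) {α δ : K}
    (h : α * δ = 1) (β γ : K) :
    α • (δ • a + (-β) • b + (-(δ * γ)) • e) + β • (α • b) + γ • e = a := by
  match_scalars
  · linear_combination h
  · ring
  · linear_combination (-γ) * h

lemma affHom_comp (α β γ δ : K) (h : α * δ = 1) (h' : δ * α = 1) :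
    (affHom δ (-β) (-(δ * γ)) α h').comp (affHom α β γ δ h) = AlgHom.id K _ := by
  apply w_hom_ext
  · simp only [affHom, AlgHom.comp_apply, wLift_X, wLift_D, map_add, map_smul, AlgHom.commutes,
      AlgHom.id_apply]
    simp only [Algebra.algebraMap_eq_smul_one]
    exact aff_aux2 (S := Weyl K) (wX K) (wD K) 1 h β γ
  · simp only [affHom, AlgHom.comp_apply, wLift_D, map_smul, AlgHom.id_apply, smul_smul]
    rw [h', one_smul]

def aff (α β γ δ : K) (h : α * δ = 1) : Weyl K ≃ₐ[K] Weyl K :=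
  AlgEquiv.ofAlgHom (affHom α β γ δ h) (affHom δ (-β) (-(δ * γ)) α (by rw [mul_comm, h]))
    (by
      have := affHom_comp δ (-β) (-(δ * γ)) α (by rw [mul_comm, h]) h
      have e1 : - -β = β := neg_neg β
      have e2 : -(α * -(δ * γ)) = γ := by linear_combination γ * h
      simp only [e1, e2] at this
      exact this)
    (affHom_comp α β γ δ h _)

lemma aff_X (α β γ δ : K) (h : α * δ = 1) :
    aff α β γ δ h (wX K) = α • wX K + β • wD K + algebraMap K (Weyl K) γ := wLift_X _ _ _
lemma aff_D (α β γ δ : K) (h : α * δ = 1) : aff α β γ δ h (wD K) = δ • wD K := wLift_D _ _ _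

/-- the set of generators -/
def Gen (K : Type*) [Field K] : Set (Weyl K ≃ₐ[K] Weyl K) :=
  {σ : Weyl K ≃ₐ[K] Weyl K | max (wdeg K (σ (wX K))) (wdeg K (σ (wD K))) = 1} ∪
    {σ | ∃ lam : K, lam ≠ 0 ∧ ∃ i : ℕ, 2 ≤ i ∧ σ (wX K) = wX K ∧
      σ (wD K) = wD K + algebraMap K (Weyl K) lam * wX K ^ i}

lemma aff_memG (α β γ δ : K) (h : α * δ = 1) : aff α β γ δ h ∈ Subgroup.closure (Gen K) := by
  apply Subgroup.subset_closure
  left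
  refine affine_mem _ (r := α) (s := β) (t := γ) (r' := 0) (s' := δ) (t' := 0) (aff_X _ _ _ _ _) ?_
  rw [aff_D]; simp

lemma swap_memG : swap K ∈ Subgroup.closure (Gen K) := by
  apply Subgroup.subset_closure
  left
  refine affine_mem _ (r := 0) (s := 1) (t := 0) (r' := -1) (s' := 0) (t' := 0) ?_ ?_
  · rw [swap_X]; simp
  · rw [swap_D, neg_one_smul_aux (S := Weyl K)]; simp

lemma shear_mul (g h : Polynomial K) : shear (g + h) = shear g * shear h := by
  apply AlgEquiv.ext
  intro a
  exact (DFunLike.congr_fun (shear_add g h) a).symm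

lemma shear_memG (g : Polynomial K) : shear g ∈ Subgroup.closure (Gen K) := by
  induction g using Polynomial.induction_on' with
  | add g h h1 h2 => rw [shear_mul]; exact Subgroup.mul_mem _ h1 h2
  | monomial i a =>
    have e : shear (Polynomial.monomial i a) (wD K) =
        wD K + algebraMap K (Weyl K) a * wX K ^ i := by
      rw [shear_D, Polynomial.aeval_monomial]
    apply Subgroup.subset_closure
    by_cases ha : a = 0
    · left
      refine affine_mem _ (r := 1) (s := 0) (t := 0) (r' := 0) (s' := 1) (t' := 0) ?_ ?_
      · rw [shear_X]; simp
      · rw [e, ha]; simp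
    rcases Nat.lt_or_ge i 2 with hi | hi
    · left
      interval_cases i
      · refine affine_mem _ (r := 1) (s := 0) (t := 0) (r' := 0) (s' := 1) (t' := a) ?_ ?_
        · rw [shear_X]; simp
        · rw [e]; simp
      · refine affine_mem _ (r := 1) (s := 0) (t := 0) (r' := a) (s' := 1) (t' := 0) ?_ ?_
        · rw [shear_X]; simp
        · rw [e, ← Algebra.smul_def, add_comm]; simp
    · right
      exact ⟨a, ha, i, hi, shear_X _, e⟩

end final


section main
open MvPolynomial
variable {K : Type*} [Field K]

lemma symb_bD : symb (bD K) = X 2 := by rw [symb_def, rho_D]; simp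

lemma wD_ne_zero : wD K ≠ 0 := by
  intro h
  have h1 := symb_bD (K := K)
  rw [← CA_D, h, map_zero, map_zero] at h1
  exact X_ne_zero _ h1.symm

lemma y_degree (σ : Weyl K ≃ₐ[K] Weyl K) (hx : σ (wX K) = wX K) (c : MvPolynomial (Fin 2) K)
    (hc : σ (wD K) = oev (wX K) (wD K) c) : Deg 0 1 1 c := by
  classical
  obtain ⟨e, he⟩ := exists_expr (σ.symm (wD K))
  have hD : bD K = oev (bX K) (CA (σ (wD K))) e := by
    have h1 : wD K = oev (wX K) (σ (wD K)) e := by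
      have h2 : σ (σ.symm (wD K)) = σ (oev (wX K) (wD K) e) := by rw [he]
      rw [σ.apply_symm_apply] at h2
      have h3 := map_oev σ.toAlgHom (wX K) (wD K) e
      have h4 : σ (oev (wX K) (wD K) e) = oev (σ (wX K)) (σ (wD K)) e := h3
      rw [hx] at h4
      exact h2.trans h4
    have h5 := map_oev (CA (K := K)) (wX K) (σ (wD K)) e
    rw [← h1, CA_D, CA_X] at h5
    exact h5
  have hw : 1 ≤ (![0, 0, 1] : Fin 3 → ℤ) 1 + (![0, 0, 1] : Fin 3 → ℤ) 2 := by simp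
  have hne : (CA (σ (wD K)) : BW K) ≠ 0 := by
    intro h
    have h1 : σ (wD K) = 0 := CA_inj (by rw [h, map_zero])
    exact wD_ne_zero (K := K) (σ.injective (by rw [h1, map_zero]))
  have he0 : e ≠ 0 := by
    intro h
    rw [h, map_zero] at hD
    apply wD_ne_zero (K := K)
    exact CA_inj (by rw [CA_D, hD, map_zero])
  obtain ⟨m, g, hg, hLF⟩ := LF.exists (w := ![0, 0, 1]) hne
  have hX : LF ![0, 0, 1] 0 (bX K) (X 1) := LF.X (K := K) (w := ![0, 0, 1])
  have hDD : LF ![0, 0, 1] 1 (bD K) (X 2) := LF.D (K := K) (w := ![0, 0, 1])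
  have hcDeg : Deg 0 1 m c := by
    rw [hc] at hLF
    exact (hLF.lead_eq hw).1
  rcases le_or_gt m 0 with hm | hm
  · exfalso
    have hDeg : Deg 0 m 0 e := by
      intro n hn
      have : (n 1 : ℤ) * m ≤ 0 := mul_nonpos_of_nonneg_of_nonpos (by positivity) hm
      simpa using this
    have h1 := hX.subst hw hLF hDeg
    rw [← hD] at h1
    have h2 := hDD.unique (h1.up zero_lt_one)
    exact X_ne_zero _ h2
  · obtain ⟨n₀, hn₀, hmax⟩ := Finset.exists_max_image e.support (fun n => n 1)
      (MvPolynomial.support_nonempty.2 he0)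
    rw [mem_support_iff] at hn₀
    obtain ⟨N, hN⟩ : ∃ N, N = n₀ 1 := ⟨_, rfl⟩
    have hDeg : Deg 0 m (N * m) e := by
      intro n hn
      have h1 : n 1 ≤ N := by rw [hN]; exact hmax n (mem_support_iff.2 hn)
      have h2 : (n 1 : ℤ) ≤ N := by exact_mod_cast h1
      have := mul_le_mul_of_nonneg_right h2 hm.le
      simpa using this
    have h1 := hX.subst hw hLF hDeg
    rw [← hD] at h1
    obtain ⟨s, hs⟩ : ∃ s, s = e.support.filter (fun n => (n 0 : ℤ) * 0 + n 1 * m = N * m) := ⟨_, rfl⟩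
    have hs1 : ∀ n ∈ s, n 1 = N := by
      intro n hn
      rw [hs, Finset.mem_filter] at hn
      have := hn.2
      rw [mul_zero, zero_add] at this
      exact_mod_cast mul_right_cancel₀ hm.ne' this
    obtain ⟨h, hh⟩ : ∃ h : MvPolynomial (Fin 2) K, h = ∑ n ∈ s, C (coeff n e) * X 0 ^ n 0 := ⟨_, rfl⟩
    have hl : lead 0 m (N * m) e = h * X 1 ^ N := by
      rw [lead, ← hs, hh, Finset.sum_mul]
      refine Finset.sum_congr rfl fun n hn => ?_
      rw [monomial2, hs1 n hn, mul_assoc]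
    have hh0 : h ≠ 0 := by
      intro h0
      have h2 := congrArg (coeff n₀) hl
      rw [coeff_lead, if_pos (by rw [hN]; simp), h0, zero_mul] at h2
      exact hn₀ h2
    have hah : aeval ![X 1, g] h = iota h := by
      rw [hh, map_sum, map_sum]
      refine Finset.sum_congr rfl fun n _ => ?_
      simp only [map_mul, map_pow, aeval_X, Matrix.cons_val_zero, iota_X0, aeval_C]
      rw [← MvPolynomial.algebraMap_eq, AlgHom.commutes]
    have hnz : aeval ![X 1, g] (lead 0 m (N * m) e) ≠ 0 := by
      rw [hl, map_mul, hah, map_pow, aeval_X]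
      refine mul_ne_zero ?_ (pow_ne_zero _ hg)
      intro h0
      exact hh0 (iota_inj (by rw [h0, map_zero]))
    have h2 := hDD.deg_unique (X_ne_zero _) h1 hnz
    have h3 : m = 1 := by
      have : m ∣ 1 := ⟨N, by rw [h2]; ring⟩
      exact Int.eq_one_of_dvd_one hm.le this
    rw [h3] at hcDeg
    exact hcDeg

lemma comm_aux {S : Type*} [Ring S] {a b P Q s : S} (h : b * a = a * b + 1)
    (hP : P * a = a * P) (hQ : Q * a = a * Q) (hs : s = P + Q * b) (h2 : s * a = a * s + 1) :
    s = b + P := by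
  have h3 : Q = 1 := by
    rw [hs, add_mul, mul_add, hP, mul_assoc, h, mul_add, ← mul_assoc, hQ, mul_one, ← add_assoc,
      mul_assoc] at h2
    exact add_left_cancel h2
  rw [hs, h3, one_mul, add_comm]

lemma fix_x (σ : Weyl K ≃ₐ[K] Weyl K) (hx : σ (wX K) = wX K) : ∃ g, σ = shear g := by
  classical
  obtain ⟨c, hc⟩ := exists_expr (σ (wD K))
  have hD := y_degree σ hx c hc
  have hD' : ∀ n ∈ c.support, n 1 ≤ 1 := by
    intro n hn
    have := hD n (mem_support_iff.1 hn)
    simp only [mul_zero, zero_add, mul_one] at this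
    exact_mod_cast this
  obtain ⟨a, ha⟩ : ∃ a : Polynomial K, a = ∑ n ∈ c.support,
    if n 1 = 0 then Polynomial.monomial (n 0) (coeff n c) else 0 := ⟨_, rfl⟩
  obtain ⟨b, hb⟩ : ∃ b : Polynomial K, b = ∑ n ∈ c.support,
    if n 1 = 0 then 0 else Polynomial.monomial (n 0) (coeff n c) := ⟨_, rfl⟩
  have hcomm : ∀ g : Polynomial K, Polynomial.aeval (wX K) g * wX K = wX K * Polynomial.aeval (wX K) g := by
    intro g
    have h := congrArg (Polynomial.aeval (wX K)) (Polynomial.X_mul (p := g))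
    rw [map_mul, map_mul, Polynomial.aeval_X] at h
    exact h.symm
  have hs : σ (wD K) = Polynomial.aeval (wX K) a + Polynomial.aeval (wX K) b * wD K := by
    rw [hc, oev_eq_sum, ha, hb, map_sum, map_sum, Finset.sum_mul, ← Finset.sum_add_distrib]
    refine Finset.sum_congr rfl fun n hn => ?_
    have h1 := hD' n hn
    rcases Nat.eq_zero_or_pos (n 1) with h0 | h0
    · simp only [h0, if_true, Polynomial.aeval_monomial, map_zero, zero_mul, add_zero, pow_zero, mul_one,
        Algebra.smul_def]
    · have h2 : n 1 = 1 := by omega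
      simp only [h2, one_ne_zero, if_false, Polynomial.aeval_monomial, map_zero, zero_add, pow_one,
        Algebra.smul_def, mul_assoc]
  have hrel : σ (wD K) * wX K = wX K * σ (wD K) + 1 := by
    have := congrArg σ (wD_mul_wX (K := K))
    rw [map_mul, map_add, map_mul, map_one, hx] at this
    exact this
  refine ⟨a, ?_⟩
  have hfin := comm_aux (S := Weyl K) wD_mul_wX (hcomm a) (hcomm b) hs hrel
  have h1 : σ.toAlgHom = (shear a).toAlgHom := by
    apply w_hom_ext
    · exact hx.trans (shear_X a).symm
    · exact hfin.trans (shear_D a).symm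
  apply AlgEquiv.ext
  intro z
  exact DFunLike.congr_fun h1 z

lemma deg_one_form (c : MvPolynomial (Fin 2) K) (h : Deg 1 1 1 c) :
    oev (wX K) (wD K) c = coeff (ex 1 0) c • wX K + coeff (ex 0 1) c • wD K +
      algebraMap K (Weyl K) (coeff (ex 0 0) c) := by
  classical
  have hc : c = monomial (ex 1 0) (coeff (ex 1 0) c) + monomial (ex 0 1) (coeff (ex 0 1) c) +
      monomial (ex 0 0) (coeff (ex 0 0) c) := by
    have hinj : ∀ {i j k l : ℕ}, ex i j = ex k l → i = k ∧ j = l := by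
      intro i j k l h
      have h0 := DFunLike.congr_fun h 0
      have h1 := DFunLike.congr_fun h 1
      simp only [ex_zero, ex_one] at h0 h1
      exact ⟨h0, h1⟩
    apply MvPolynomial.ext
    intro n
    simp only [coeff_add, coeff_monomial]
    by_cases h1 : ex 1 0 = n
    · subst h1
      rw [if_pos rfl, if_neg (fun h => by simpa using hinj h), if_neg (fun h => by simpa using hinj h)]; simp
    by_cases h2 : ex 0 1 = n
    · subst h2
      rw [if_neg h1, if_pos rfl, if_neg (fun h => by simpa using hinj h)]; simp
    by_cases h3 : ex 0 0 = n
    · subst h3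
      rw [if_neg h1, if_neg h2, if_pos rfl]; simp
    rw [if_neg h1, if_neg h2, if_neg h3]
    by_contra hn
    have h4 := h n (by simpa using hn)
    simp only [mul_one] at h4
    have h5 : n 0 + n 1 ≤ 1 := by exact_mod_cast h4
    have h6 : (n 0 = 1 ∧ n 1 = 0) ∨ (n 0 = 0 ∧ n 1 = 1) ∨ (n 0 = 0 ∧ n 1 = 0) := by omega
    rcases h6 with h6 | h6 | h6
    · exact h1 (ex_ext h6.1 h6.2).symm
    · exact h2 (ex_ext h6.1 h6.2).symm
    · exact h3 (ex_ext h6.1 h6.2).symm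
  conv_lhs => rw [hc]
  rw [map_add, map_add, oev_monomial, oev_monomial, oev_monomial, Algebra.algebraMap_eq_smul_one]
  simp

lemma base_alpha (σ : Weyl K ≃ₐ[K] Weyl K) {α β γ : K} (hα : α ≠ 0)
    (h : σ (wX K) = α • wX K + β • wD K + algebraMap K (Weyl K) γ) :
    σ ∈ Subgroup.closure (Gen K) := by
  have hαδ : α * α⁻¹ = 1 := mul_inv_cancel₀ hα
  obtain ⟨ρ, hρ⟩ : ∃ ρ, ρ = aff α β γ α⁻¹ hαδ := ⟨_, rfl⟩
  have h1 : σ (wX K) = ρ (wX K) := by rw [hρ, aff_X, h]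
  have h2 : (ρ⁻¹ * σ) (wX K) = wX K := by
    rw [AlgEquiv.mul_apply, h1, ← AlgEquiv.mul_apply, inv_mul_cancel, AlgEquiv.one_apply]
  obtain ⟨g, hg⟩ := fix_x _ h2
  have h3 : σ = ρ * shear g := by rw [← hg, mul_inv_cancel_left]
  rw [h3, hρ]
  exact Subgroup.mul_mem _ (aff_memG _ _ _ _ _) (shear_memG g)

lemma base (σ : Weyl K ≃ₐ[K] Weyl K) (c : MvPolynomial (Fin 2) K)
    (hc : σ (wX K) = oev (wX K) (wD K) c) (hD : Deg 1 1 1 c) : σ ∈ Subgroup.closure (Gen K) := by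
  rw [deg_one_form c hD] at hc
  by_cases hα : coeff (ex 1 0) c = 0
  · by_cases hβ : coeff (ex 0 1) c = 0
    · exfalso
      rw [hα, hβ, zero_smul, zero_smul, zero_add, zero_add] at hc
      exact sigma_ne_const σ _ hc
    · have h1 : (swap K * σ) (wX K) = (-coeff (ex 0 1) c) • wX K + (0 : K) • wD K +
          algebraMap K (Weyl K) (coeff (ex 0 0) c) := by
        rw [AlgEquiv.mul_apply, hc, hα, zero_smul, zero_smul, zero_add, add_zero, map_add, map_smul, swap_D,
          AlgEquiv.commutes, ← neg_one_smul_aux (K := K) (S := Weyl K), smul_smul, mul_neg_one]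
      have h2 := base_alpha _ (neg_ne_zero.2 hβ) h1
      exact (Subgroup.mul_mem_cancel_left _ swap_memG).1 h2
  · exact base_alpha σ hα hc

lemma all_mem (p : ℕ) (hp : p.Prime) [CharP K p] [PerfectField K] (d : ℕ) :
    ∀ (σ : Weyl K ≃ₐ[K] Weyl K) (c : MvPolynomial (Fin 2) K)
    (_ : σ (wX K) = oev (wX K) (wD K) c) (_ : Deg 1 1 d c), σ ∈ Subgroup.closure (Gen K) := by
  induction d with
  | zero =>
    intro σ c hc hD
    exact base σ c hc fun n hn => (hD n hn).trans (by simp)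
  | succ d ih =>
    intro σ c hc hD
    rcases Nat.eq_zero_or_pos d with h0 | h0
    · exact base σ c hc fun n hn => (hD n hn).trans (by simp [h0])
    · obtain ⟨τ, hτ, c', h1, h2⟩ := red p hp shear_memG swap_memG σ c hc (d + 1) (by omega) hD
      exact (Subgroup.mul_mem_cancel_left _ hτ).1 (ih (τ * σ) c' h1 h2)

end main

theorem statement16 (p : ℕ) (hp : p.Prime) (K : Type*) [Field K] [CharP K p]
    (hperf : Function.Surjective fun a : K => a ^ p) :
    Subgroup.closure
      ({σ : Weyl K ≃ₐ[K] Weyl K | max (wdeg K (σ (wX K))) (wdeg K (σ (wD K))) = 1} ∪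
       {σ : Weyl K ≃ₐ[K] Weyl K | ∃ lam : K, lam ≠ 0 ∧ ∃ i : ℕ, 2 ≤ i ∧
          σ (wX K) = wX K ∧
          σ (wD K) = wD K + algebraMap K (Weyl K) lam * wX K ^ i}) = ⊤ := by
  have : ExpChar K p := ExpChar.prime hp
  have : PerfectRing K p := PerfectRing.ofSurjective K p hperf
  have : PerfectField K := PerfectRing.toPerfectField K p
  rw [eq_top_iff]
  intro σ _
  obtain ⟨c, hc⟩ := exists_expr (σ (wX K))
  refine all_mem p hp (c.support.sup fun n => n 0 + n 1) σ c hc fun n hn => ?_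
  have h := Finset.le_sup (f := fun n : Fin 2 →₀ ℕ => n 0 + n 1) (MvPolynomial.mem_support_iff.2 hn)
  simp only [mul_one]
  exact_mod_cast h
end
end
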